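/- arXiv:2111.11694 — 2 statements merged into one kernel-verified Lean document; each statement's English description precedes it below -/
import Mathlib

section
/- For every integer d ≥ 1 there exists a constant C_d > 0 depending only on d such that the following holds. Fix integers n₁,…,n_d ≥ 2, reals σ > 0 and V > 0, a vector θ* ∈ C(V), and any map θ̂ : ℝ^{I₀} → ℝ^{I₀} such that for every y ∈ ℝ^{I₀}, θ̂(y) ∈ C(V) and ‖y − θ̂(y)‖₂ ≤ ‖y − θ‖₂ for all θ ∈ C(V) (i.e., θ̂(y) is the Euclidean projection of y onto the closed convex set C(V); such θ̂ exists, is unique, and is 1-Lipschitz). Then ∫ (1/n)·‖θ̂(θ* + ξ) − θ*‖₂² dμ_σ(ξ) ≤ C_d·(σ²V^{1/2}/n)^{4/5}·(log(2 + V·n^{1/2}/σ))^{3(2d−1)/5} + C_d·(σ²/n)·(log(2 + V·n^{1/2}/σ))^{3(2d−1)/4} + C_d·(σ²/n)·(log n)². -/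
open Finset MeasureTheory

/-- The discrete mixed difference `(D^(β)θ)_i` (with `ℕ`-valued multi-indices). -/
noncomputable def mixedDiff (d : ℕ) (β : Fin d → ℕ) (θ : (Fin d → ℕ) → ℝ)
    (i : Fin d → ℕ) : ℝ :=
  ∑ δ ∈ Fintype.piFinset (fun k => Finset.range (β k + 1)),
    (-1 : ℝ) ^ (∑ k, δ k) * (∏ k, ((β k).choose (δ k) : ℝ)) * θ (fun k => i k - δ k)

/-- The index set `I₀^(β)`. -/
def idxBeta (d : ℕ) (n β : Fin d → ℕ) : Finset (Fin d → ℕ) :=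
  Fintype.piFinset fun k =>
    if β k = Finset.univ.sup β then Finset.Ico (Finset.univ.sup β) (n k)
    else {β k}

/-- The complexity measure `V₂(θ)`. -/
noncomputable def V2 (d : ℕ) (n : Fin d → ℕ) (θ : (Fin d → ℕ) → ℝ) : ℝ :=
  ∑ β ∈ (Fintype.piFinset fun _ : Fin d => Finset.range 3).filter
      (fun β => Finset.univ.sup β = 2),
    (∏ k, (n k : ℝ) ^ (if β k = 2 then 1 else β k)) *
      ∑ i ∈ idxBeta d n β, |mixedDiff d β θ i|

/-- Extension of a vector indexed by `I₀ = Π_k {0,…,n_k-1}` to all of `ℕ^d` (by `0`). -/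
noncomputable def latExtend (d : ℕ) (n : Fin d → ℕ)
    (θ : (∀ k : Fin d, Fin (n k)) → ℝ) : (Fin d → ℕ) → ℝ :=
  fun j => if h : ∀ k, j k < n k then θ (fun k => ⟨j k, h k⟩) else 0

/-- The constraint set `C(V) = {θ : V₂(θ) ≤ V}`. -/
def Cset (d : ℕ) (n : Fin d → ℕ) (V : ℝ) : Set ((∀ k : Fin d, Fin (n k)) → ℝ) :=
  { θ | V2 d n (latExtend d n θ) ≤ V }

/-- The product Gaussian measure on `ℝ^{I₀}` with i.i.d. `N(0, σ²)` coordinates. -/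
noncomputable def gaussPi (d : ℕ) (n : Fin d → ℕ) (σ : ℝ) :
    Measure ((∀ k : Fin d, Fin (n k)) → ℝ) :=
  Measure.pi fun _ => ProbabilityTheory.gaussianReal 0 ⟨σ ^ 2, sq_nonneg σ⟩

/-!
`V2 θ` is the `ℓ¹` norm of the coefficients of `θ` in the basis of tensor products of hinge
functions `i ↦ (i - j)₊ / n` and constants, except for the products of affine functions, which are
not penalised. In one dimension, the multiwavelets with two vanishing moments that are not
orthogonal to a hinge function are those whose dyadic block contains the kink, so that the
coefficients of the hinge function at level `m` have `ℓ¹` norm `O(√n · 8^(-m/2))`; those of an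
affine function vanish at all levels `m ≥ 1`. In the tensor product frame the level `m = ∑ mₖ`
therefore has `O(m^(d-1) · 2^m)` elements and, for `m ≥ 1`, coefficients of `ℓ¹` norm
`O(V2 θ · √n · m^(d-1) · 8^(-m/2))`, where now `n = ∏ nₖ`.

Since `θ*` competes with the projection, `Δ = θ̂ - θ*` satisfies `‖Δ‖² ≤ 2⟨ξ, Δ⟩`. Expand the inner
product in the frame. Young's inequality bounds the levels `m ≤ L` by `‖Δ‖² / 4` plus the noise in
these levels, of expected size `σ² · L^(d-1) · 2^L`. The levels `m > L` contribute at most the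
maximum of the noise coefficients, of order `σ · √m`, times the `ℓ¹` norm of the coefficients of
`Δ`, where `V2 Δ ≤ 2 * V`. The choice `2^L ≈ (V · √n / σ)^(2/5)` balances the two.
-/

section SubGaussian

open ProbabilityTheory Real
open scoped NNReal

variable {Ω : Type*} [MeasurableSpace Ω] {μ : Measure Ω} {c : ℝ≥0}

lemma sq_le_two_mul_exp_add_exp_neg (x : ℝ) : x ^ 2 ≤ 2 * (exp x + exp (-x) - 2) := by
  have hpos := quadratic_le_exp_of_nonneg (abs_nonneg x)
  have hneg := add_one_le_exp (-|x|)
  have hcosh : exp |x| + exp (-|x|) = exp x + exp (-x) := by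
    rcases abs_cases x with ⟨h, -⟩ | ⟨h, -⟩ <;> rw [h, ← sub_eq_zero] <;> ring_nf
  rw [sq_abs] at hpos
  linarith

lemma integral_exp_add_exp_neg_le {X : Ω → ℝ} (hX : HasSubgaussianMGF X c μ) (t : ℝ) :
    ∫ ω, (exp (t * X ω) + exp (-t * X ω)) ∂μ ≤ 2 * exp (c * t ^ 2 / 2) := by
  rw [integral_add (hX.integrable_exp_mul t) (hX.integrable_exp_mul (-t))]
  have hpos := hX.mgf_le t
  have hneg := hX.mgf_le (-t)
  rw [neg_sq] at hneg
  simp only [mgf] at hpos hneg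
  linarith

lemma integral_sq_le_of_hasSubgaussianMGF [IsProbabilityMeasure μ] {X : Ω → ℝ}
    (hX : HasSubgaussianMGF X c μ) :
    ∫ ω, X ω ^ 2 ∂μ ≤ 3 * c := by
  have hscaled (t : ℝ) : t ^ 2 * ∫ ω, X ω ^ 2 ∂μ ≤ 4 * (exp (c * t ^ 2 / 2) - 1) := by
    have hint : Integrable (fun ω => exp (t * X ω) + exp (-t * X ω)) μ :=
      (hX.integrable_exp_mul t).add (hX.integrable_exp_mul (-t))
    calc
      t ^ 2 * ∫ ω, X ω ^ 2 ∂μ = ∫ ω, t ^ 2 * X ω ^ 2 ∂μ := (integral_const_mul _ _).symm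
      _ ≤ ∫ ω, 2 * (exp (t * X ω) + exp (-t * X ω) - 2) ∂μ :=
          integral_mono ((hX.memLp 2).integrable_sq.const_mul _)
            ((hint.sub (integrable_const 2)).const_mul 2) fun ω => by
              simpa only [mul_pow, neg_mul] using sq_le_two_mul_exp_add_exp_neg (t * X ω)
      _ ≤ 4 * (exp (c * t ^ 2 / 2) - 1) := by
          rw [integral_const_mul, integral_sub hint (integrable_const 2)]
          have := integral_exp_add_exp_neg_le hX t
          simp only [integral_const, probReal_univ, one_smul]
          linarith
  rcases eq_or_ne c 0 with rfl | hc
  · simpa using hscaled 1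
  · have hc : (0 : ℝ) < c := by positivity
    have hexp : exp (1 / 2) ≤ 7 / 4 := by
      have hsq : exp (1 / 2) ^ 2 = exp 1 := by rw [← exp_nat_mul]; norm_num
      have := exp_one_lt_d9
      nlinarith [exp_pos (1 / 2)]
    have hopt := hscaled (√c)⁻¹
    rw [inv_pow, sq_sqrt hc.le, mul_inv_cancel₀ hc.ne', inv_mul_le_iff₀ hc] at hopt
    nlinarith

variable {ι : Type*} {X : ι → Ω → ℝ}

lemma iSup_abs_le_sum [Fintype ι] (x : ι → ℝ) : ⨆ p, |x p| ≤ ∑ p, |x p| :=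
  Real.iSup_le (fun p => single_le_sum (fun q _ => abs_nonneg (x q)) (mem_univ p))
    (sum_nonneg fun p _ => abs_nonneg (x p))

lemma integrable_iSup_abs [Finite ι] (hX : ∀ p, Integrable (X p) μ) :
    Integrable (fun ω => ⨆ p, |X p ω|) μ := by
  have := Fintype.ofFinite ι
  have hsum : Integrable (fun ω => ∑ p, |X p ω|) μ := integrable_finsetSum _ fun p _ => (hX p).abs
  refine hsum.mono' (AEMeasurable.iSup fun p => (hX p).abs.aemeasurable).aestronglyMeasurable
    (.of_forall fun ω => ?_)
  rw [norm_of_nonneg (Real.iSup_nonneg fun p => abs_nonneg _)]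
  exact iSup_abs_le_sum _

variable [Fintype ι]

lemma mul_integral_iSup_abs_le [Nonempty ι] [IsProbabilityMeasure μ]
    (hX : ∀ p, HasSubgaussianMGF (X p) c μ) {t : ℝ} (ht : 0 ≤ t) :
    t * ∫ ω, ⨆ p, |X p ω| ∂μ ≤ log (2 * Fintype.card ι) + c * t ^ 2 / 2 := by
  set K : ℝ := 2 * Fintype.card ι * exp (c * t ^ 2 / 2) with hK
  have hKpos : 0 < K := by positivity
  set E : ι → Ω → ℝ := fun p ω => exp (t * X p ω) + exp (-t * X p ω) with hE
  have hE_int (p : ι) : Integrable (E p) μ :=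
    ((hX p).integrable_exp_mul t).add ((hX p).integrable_exp_mul (-t))
  have hE_sum : Integrable (fun ω => (∑ p, E p ω) / K) μ :=
    (integrable_finsetSum _ fun p _ => hE_int p).div_const K
  have hpointwise (ω : Ω) : t * ⨆ p, |X p ω| ≤ log K - 1 + (∑ p, E p ω) / K := by
    rw [mul_iSup_of_nonneg ht]
    refine ciSup_le fun p => ?_
    have hexp : exp (t * |X p ω|) ≤ ∑ p, E p ω := by
      refine le_trans ?_ (single_le_sum (fun q _ => by positivity) (mem_univ p))
      rcases abs_choice (X p ω) with h | h <;> rw [h] <;> simp only [hE, mul_neg, neg_mul] <;>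
        linarith [exp_pos (t * X p ω), exp_pos (-(t * X p ω))]
    have htangent := add_one_le_exp (t * |X p ω| - log K)
    rw [exp_sub, exp_log hKpos] at htangent
    linarith [div_le_div_of_nonneg_right hexp hKpos.le]
  have hmean : ∫ ω, (∑ p, E p ω) / K ∂μ ≤ 1 := by
    rw [integral_div, integral_finsetSum _ fun p _ => hE_int p, div_le_one hKpos]
    refine (sum_le_card_nsmul _ _ _ fun p _ => integral_exp_add_exp_neg_le (hX p) t).trans_eq ?_
    rw [nsmul_eq_mul, card_univ, hK]
    ring
  calc t * ∫ ω, ⨆ p, |X p ω| ∂μ = ∫ ω, t * ⨆ p, |X p ω| ∂μ := (integral_const_mul _ _).symm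
    _ ≤ ∫ ω, (log K - 1 + (∑ p, E p ω) / K) ∂μ :=
        integral_mono ((integrable_iSup_abs fun p => (hX p).integrable).const_mul t)
          ((integrable_const _).add hE_sum) hpointwise
    _ ≤ log K := by
        rw [integral_add (integrable_const _) hE_sum]
        simp only [integral_const, probReal_univ, one_smul]
        linarith
    _ = log (2 * Fintype.card ι) + c * t ^ 2 / 2 := by
        rw [hK, log_mul (by positivity) (exp_ne_zero _), log_exp]

lemma integral_iSup_abs_le [IsProbabilityMeasure μ] (hX : ∀ p, HasSubgaussianMGF (X p) c μ) :
    ∫ ω, ⨆ p, |X p ω| ∂μ ≤ √(2 * c * log (2 * Fintype.card ι)) := by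
  rcases isEmpty_or_nonempty ι with h | h
  · simp
  set M := ∫ ω, ⨆ p, |X p ω| ∂μ
  have hM : 0 ≤ M := integral_nonneg fun ω => Real.iSup_nonneg fun p => abs_nonneg _
  have hlog : 0 ≤ log (2 * Fintype.card ι) := by
    have : (1 : ℝ) ≤ Fintype.card ι := mod_cast Fintype.card_pos
    exact log_nonneg (by linarith)
  refine le_sqrt_of_sq_le ?_
  have hquad (t : ℝ) : 0 ≤ (c / 2 : ℝ) * (t * t) + -M * t + log (2 * Fintype.card ι) := by
    rcases le_total 0 t with ht | ht
    · linarith [mul_integral_iSup_abs_le hX ht]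
    · nlinarith [mul_nonneg hM (neg_nonneg.2 ht), mul_nonneg c.2 (mul_self_nonneg t)]
  have := discrim_le_zero hquad
  rw [discrim] at this
  linarith

lemma hasSubgaussianMGF_gaussianReal (v : ℝ≥0) : HasSubgaussianMGF id v (gaussianReal 0 v) where
  integrable_exp_mul t := integrable_exp_mul_gaussianReal t
  mgf_le t := by simp [mgf_id_gaussianReal]

/-- A random vector all of whose projections to directions of norm at most one are sub-Gaussian
with variance proxy `v`. -/
def IsSubgaussianVector (v : ℝ≥0) (μ : Measure (ι → ℝ)) : Prop :=
  ∀ g : ι → ℝ, ∑ i, g i ^ 2 ≤ 1 → HasSubgaussianMGF (fun ξ => ∑ i, g i * ξ i) v μ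

lemma isSubgaussianVector_pi_gaussianReal (v : ℝ≥0) :
    IsSubgaussianVector v (Measure.pi fun _ : ι => gaussianReal 0 v) := by
  intro g hg
  have hcoord (i : ι) : HasSubgaussianMGF (fun ξ : ι → ℝ => g i * ξ i) ((g i ^ 2).toNNReal * v)
      (Measure.pi fun _ => gaussianReal 0 v) := by
    rw [toNNReal_of_nonneg (sq_nonneg (g i))]
    refine HasSubgaussianMGF.const_mul ?_ (g i)
    rw [← HasSubgaussianMGF.id_map_iff (measurable_pi_apply i).aemeasurable,
      show (fun ξ : ι → ℝ => ξ i) = Function.eval i from rfl,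
      (measurePreserving_eval (fun _ : ι => gaussianReal 0 v) i).map_eq]
    exact hasSubgaussianMGF_gaussianReal v
  have hindep : iIndepFun (fun i (ξ : ι → ℝ) => g i * ξ i) (Measure.pi fun _ => gaussianReal 0 v) :=
    iIndepFun_pi (X := fun i x => g i * x) fun i => by fun_prop
  have hsum := HasSubgaussianMGF.sum_of_iIndepFun (s := univ) hindep fun i _ => hcoord i
  have hproxy : ∑ i, (g i ^ 2).toNNReal * v ≤ v := by
    rw [← sum_mul, ← toNNReal_sum_of_nonneg fun i _ => sq_nonneg (g i)]
    exact mul_le_of_le_one_left' (toNNReal_le_one.2 hg)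
  exact ⟨hsum.integrable_exp_mul, fun t => (hsum.mgf_le t).trans (by gcongr)⟩

end SubGaussian

/-- A finite Parseval frame `(vec p)` of `ℝ^I`, graded by a resolution `level`. The Parseval
property is encoded as the resolution of the identity `∑ p, vec p ⊗ vec p = id`. -/
structure LeveledFrame (ι I : Type*) [Fintype ι] [DecidableEq I] where
  /-- The elements of the frame. -/
  vec : ι → I → ℝ
  /-- The resolution level of an element. -/
  level : ι → ℕ
  parseval : ∀ i i', ∑ p, vec p i * vec p i' = if i = i' then 1 else 0

namespace LeveledFrame

section Basic

variable {ι I : Type*} [Fintype ι] [DecidableEq I] (F : LeveledFrame ι I)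

/-- The number of elements of the frame at level `m`. -/
def count (m : ℕ) : ℕ := #{p | F.level p = m}

/-- The finest level of the frame. -/
def depth : ℕ := univ.sup F.level

lemma sum_count (L : ℕ) : ∑ m ∈ range (L + 1), F.count m = #{p | F.level p ≤ L} := by
  rw [card_eq_sum_card_fiberwise (f := F.level) (t := range (L + 1))
    fun p hp => by simpa [Nat.lt_succ_iff] using hp]
  refine sum_congr rfl fun m hm => congrArg card ?_
  rw [filter_filter]
  have := mem_range.1 hm
  exact filter_congr fun p _ => by omega

variable [Fintype I]

/-- The frame coefficient `⟨vec p, x⟩` of a vector `x`. -/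
def coeff (x : I → ℝ) (p : ι) : ℝ := ∑ i, F.vec p i * x i

/-- The `ℓ¹` norm of the frame coefficients of `x` at level `m`. -/
def levelNorm (x : I → ℝ) (m : ℕ) : ℝ := ∑ p with F.level p = m, |F.coeff x p|

lemma sum_coeff_mul_coeff (x y : I → ℝ) :
    ∑ p, F.coeff x p * F.coeff y p = ∑ i, x i * y i := by
  calc ∑ p, F.coeff x p * F.coeff y p
      = ∑ p, ∑ i, ∑ i', x i * y i' * (F.vec p i * F.vec p i') := by
        refine sum_congr rfl fun p _ => ?_
        rw [coeff, coeff, sum_mul_sum]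
        exact sum_congr rfl fun i _ => sum_congr rfl fun i' _ => by ring
    _ = ∑ i, ∑ i', x i * y i' * ∑ p, F.vec p i * F.vec p i' := by
        rw [sum_comm]
        refine sum_congr rfl fun i _ => ?_
        rw [sum_comm]
        exact sum_congr rfl fun i' _ => (mul_sum _ _ _).symm
    _ = ∑ i, x i * y i := by simp [F.parseval]

lemma sum_vec_sq_le_one (p : ι) : ∑ i, F.vec p i ^ 2 ≤ 1 := by
  set s := ∑ i, F.vec p i ^ 2 with hs
  have hself : F.coeff (F.vec p) p = s := sum_congr rfl fun i _ => (sq _).symm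
  have hbessel : s ^ 2 ≤ s :=
    calc s ^ 2 = F.coeff (F.vec p) p * F.coeff (F.vec p) p := by rw [hself, sq]
      _ ≤ ∑ q, F.coeff (F.vec p) q * F.coeff (F.vec p) q :=
        single_le_sum (f := fun q => F.coeff (F.vec p) q * F.coeff (F.vec p) q)
          (fun q _ => mul_self_nonneg _) (mem_univ p)
      _ = s := by simp only [F.sum_coeff_mul_coeff, hs, sq]
  nlinarith

lemma coeff_sum {κ : Type*} (s : Finset κ) (c : κ → ℝ) (f : κ → I → ℝ) (p : ι) :
    F.coeff (fun i => ∑ j ∈ s, c j * f j i) p = ∑ j ∈ s, c j * F.coeff (f j) p := by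
  simp only [coeff, mul_sum]
  rw [sum_comm]
  exact sum_congr rfl fun j _ => sum_congr rfl fun i _ => by ring

lemma levelNorm_nonneg (x : I → ℝ) (m : ℕ) : 0 ≤ F.levelNorm x m :=
  sum_nonneg fun _ _ => abs_nonneg _

lemma levelNorm_sum_le {κ : Type*} (s : Finset κ) (c : κ → ℝ) (f : κ → I → ℝ) (m : ℕ) :
    F.levelNorm (fun i => ∑ j ∈ s, c j * f j i) m ≤ ∑ j ∈ s, |c j| * F.levelNorm (f j) m := by
  simp only [levelNorm, coeff_sum, mul_sum]
  rw [sum_comm]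
  refine sum_le_sum fun p _ => (abs_sum_le_sum_abs _ _).trans_eq ?_
  simp only [abs_mul]

lemma sum_abs_coeff_mul_abs_coeff_le (x y : I → ℝ) (L : ℕ) :
    ∑ p with ¬ F.level p ≤ L, |F.coeff x p| * |F.coeff y p| ≤
      ∑ m ∈ Ioc L F.depth, (⨆ p : {p // F.level p = m}, |F.coeff x p|) * F.levelNorm y m := by
  have hmaps : ∀ p ∈ ({p | ¬ F.level p ≤ L} : Finset ι), F.level p ∈ Ioc L F.depth := by
    intro p hp
    exact mem_Ioc.2 ⟨not_le.1 (mem_filter.1 hp).2, le_sup (mem_univ p)⟩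
  rw [← sum_fiberwise_of_maps_to hmaps]
  refine sum_le_sum fun m hm => ?_
  have hfiber : ({p ∈ ({p | ¬ F.level p ≤ L} : Finset ι) | F.level p = m} : Finset ι) =
      ({p | F.level p = m} : Finset ι) := by
    rw [filter_filter]
    have := (mem_Ioc.1 hm).1
    exact filter_congr fun p _ => by omega
  rw [hfiber, levelNorm, mul_sum]
  refine sum_le_sum fun p hp => mul_le_mul_of_nonneg_right ?_ (abs_nonneg _)
  exact le_ciSup (f := fun p : {p // F.level p = m} => |F.coeff x p|)
    (Set.finite_range _).bddAbove ⟨p, (mem_filter.1 hp).2⟩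

/-- Young's inequality absorbs the levels up to `L` into the left-hand side; the finer levels are
bounded by the duality of the `ℓ¹` and the supremum norm. -/
lemma sum_sq_le_of_sum_sq_le_two_mul {x y : I → ℝ} (h : ∑ i, y i ^ 2 ≤ 2 * ∑ i, x i * y i)
    (L : ℕ) :
    ∑ i, y i ^ 2 ≤ 4 * ∑ p with F.level p ≤ L, F.coeff x p ^ 2 +
      4 * ∑ m ∈ Ioc L F.depth,
        (⨆ p : {p // F.level p = m}, |F.coeff x p|) * F.levelNorm y m := by
  have hy : ∑ p, F.coeff y p ^ 2 = ∑ i, y i ^ 2 := by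
    simpa only [sq] using F.sum_coeff_mul_coeff y y
  have hxy := F.sum_coeff_mul_coeff x y
  rw [← sum_filter_add_sum_filter_not univ (fun p => F.level p ≤ L)] at hxy
  have hcoarse : ∑ p with F.level p ≤ L, F.coeff x p * F.coeff y p ≤
      ∑ p with F.level p ≤ L, F.coeff x p ^ 2 + (∑ i, y i ^ 2) / 4 := by
    rw [← hy]
    calc ∑ p with F.level p ≤ L, F.coeff x p * F.coeff y p
        ≤ ∑ p with F.level p ≤ L, (F.coeff x p ^ 2 + F.coeff y p ^ 2 / 4) :=
          sum_le_sum fun p _ => by linarith [sq_nonneg (F.coeff x p - F.coeff y p / 2)]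
      _ ≤ _ := by
          rw [sum_add_distrib, ← sum_div]
          gcongr
          exact subset_univ _
  have hfine : ∑ p with ¬ F.level p ≤ L, F.coeff x p * F.coeff y p ≤
      ∑ p with ¬ F.level p ≤ L, |F.coeff x p| * |F.coeff y p| :=
    sum_le_sum fun p _ => (le_abs_self _).trans_eq (abs_mul _ _)
  linarith [F.sum_abs_coeff_mul_abs_coeff_le x y L]

end Basic

section Risk

open ProbabilityTheory Real
open scoped NNReal

variable {ι I : Type*} [Fintype ι] [Fintype I] [DecidableEq I] (F : LeveledFrame ι I)
  {v : ℝ≥0} {μ : Measure (I → ℝ)}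

lemma hasSubgaussianMGF_coeff (hμ : IsSubgaussianVector v μ) (p : ι) :
    HasSubgaussianMGF (fun ξ => F.coeff ξ p) v μ :=
  hμ _ (F.sum_vec_sq_le_one p)

variable [IsProbabilityMeasure μ]

lemma integral_sum_sq_coeff_le (hμ : IsSubgaussianVector v μ) (L : ℕ) :
    ∫ ξ, ∑ p with F.level p ≤ L, F.coeff ξ p ^ 2 ∂μ ≤
      3 * v * ∑ m ∈ range (L + 1), (F.count m : ℝ) := by
  rw [integral_finsetSum _ fun p _ => ((F.hasSubgaussianMGF_coeff hμ p).memLp 2).integrable_sq,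
    ← Nat.cast_sum, F.sum_count, mul_comm, ← nsmul_eq_mul]
  exact sum_le_card_nsmul _ _ _ fun p _ =>
    integral_sq_le_of_hasSubgaussianMGF (F.hasSubgaussianMGF_coeff hμ p)

lemma integral_iSup_abs_coeff_le (hμ : IsSubgaussianVector v μ) (m : ℕ) :
    ∫ ξ, ⨆ p : {p // F.level p = m}, |F.coeff ξ p| ∂μ ≤ √(2 * v * log (2 * F.count m)) := by
  have := integral_iSup_abs_le (X := fun (p : {p // F.level p = m}) ξ => F.coeff ξ p)
    fun p => F.hasSubgaussianMGF_coeff hμ p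
  rwa [Fintype.card_subtype] at this

lemma lintegral_sum_sq_le (hμ : IsSubgaussianVector v μ) {Y : (I → ℝ) → I → ℝ}
    (hY : ∀ ξ, ∑ i, Y ξ i ^ 2 ≤ 2 * ∑ i, ξ i * Y ξ i) {L : ℕ} {B : ℕ → ℝ}
    (hB : ∀ ξ, ∀ m, L < m → F.levelNorm (Y ξ) m ≤ B m) :
    ∫⁻ ξ, ENNReal.ofReal (∑ i, Y ξ i ^ 2) ∂μ ≤
      ENNReal.ofReal (12 * v * ∑ m ∈ range (L + 1), (F.count m : ℝ) +
        4 * ∑ m ∈ Ioc L F.depth, √(2 * v * log (2 * F.count m)) * B m) := by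
  set S : ℕ → (I → ℝ) → ℝ := fun m ξ => ⨆ p : {p // F.level p = m}, |F.coeff ξ p|
  set coarse : (I → ℝ) → ℝ := fun ξ => ∑ p with F.level p ≤ L, F.coeff ξ p ^ 2
  set fine : (I → ℝ) → ℝ := fun ξ => ∑ m ∈ Ioc L F.depth, S m ξ * B m
  have hS_nonneg (m ξ) : 0 ≤ S m ξ := Real.iSup_nonneg fun p => abs_nonneg _
  have hB_nonneg {m : ℕ} (hm : m ∈ Ioc L F.depth) : 0 ≤ B m :=
    (F.levelNorm_nonneg _ m).trans (hB 0 m (mem_Ioc.1 hm).1)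
  have hS_int (m) : Integrable (S m) μ :=
    integrable_iSup_abs fun p => (F.hasSubgaussianMGF_coeff hμ p).integrable
  have hcoarse_int : Integrable coarse μ :=
    integrable_finsetSum _ fun p _ => ((F.hasSubgaussianMGF_coeff hμ p).memLp 2).integrable_sq
  have hfine_int : Integrable fine μ :=
    integrable_finsetSum _ fun m _ => (hS_int m).mul_const _
  have hbound (ξ) : ∑ i, Y ξ i ^ 2 ≤ 4 * coarse ξ + 4 * fine ξ := by
    refine (F.sum_sq_le_of_sum_sq_le_two_mul (hY ξ) L).trans ?_
    have : ∑ m ∈ Ioc L F.depth, S m ξ * F.levelNorm (Y ξ) m ≤ fine ξ :=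
      sum_le_sum fun m hm => mul_le_mul_of_nonneg_left (hB ξ m (mem_Ioc.1 hm).1) (hS_nonneg m ξ)
    linarith
  have hfine : ∫ ξ, fine ξ ∂μ ≤ ∑ m ∈ Ioc L F.depth, √(2 * v * log (2 * F.count m)) * B m := by
    rw [integral_finsetSum _ fun m _ => (hS_int m).mul_const _]
    refine sum_le_sum fun m hm => ?_
    rw [integral_mul_const]
    exact mul_le_mul_of_nonneg_right (F.integral_iSup_abs_coeff_le hμ m) (hB_nonneg hm)
  refine (lintegral_mono fun ξ => ENNReal.ofReal_le_ofReal (hbound ξ)).trans ?_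
  have hint : Integrable (fun ξ => 4 * coarse ξ + 4 * fine ξ) μ :=
    (hcoarse_int.const_mul 4).add (hfine_int.const_mul 4)
  rw [← ofReal_integral_eq_lintegral_ofReal hint (.of_forall fun ξ => ?_)]
  · refine ENNReal.ofReal_le_ofReal ?_
    rw [integral_add (hcoarse_int.const_mul 4) (hfine_int.const_mul 4), integral_const_mul,
      integral_const_mul]
    linarith [F.integral_sum_sq_coeff_le hμ L]
  · exact (sum_nonneg fun i _ => sq_nonneg _).trans (hbound ξ)

end Risk

end LeveledFrame

lemma multichoose_succ_le_pow (d m : ℕ) : Nat.multichoose (d + 1) m ≤ (m + 1) ^ d := by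
  induction d generalizing m with
  | zero => simp [Nat.multichoose_one]
  | succ d ihd =>
    induction m with
    | zero => simp
    | succ m ihm =>
      rw [Nat.multichoose_succ_succ]
      calc Nat.multichoose (d + 1) (m + 1) + Nat.multichoose (d + 1 + 1) m
          ≤ (m + 1 + 1) ^ d + (m + 1) ^ (d + 1) := add_le_add (ihd (m + 1)) ihm
        _ ≤ (m + 1 + 1) ^ d + (m + 1 + 1) ^ d * (m + 1) := by
            rw [pow_succ]; gcongr; omega
        _ = (m + 1 + 1) ^ (d + 1) := by ring

section LevelSums

variable {κ : Type*} [Fintype κ] [DecidableEq κ]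

lemma card_piAntidiag_univ_le (m : ℕ) :
    #(piAntidiag (univ : Finset κ) m) ≤ (m + 1) ^ (Fintype.card κ - 1) := by
  rw [← map_sym_eq_piAntidiag, card_map, sym_univ, card_univ, Sym.card_sym_eq_multichoose]
  rcases Nat.eq_zero_or_pos (Fintype.card κ) with h | h
  · rw [h]
    rcases m with - | m <;> simp
  · obtain ⟨d, hd⟩ := Nat.exists_eq_add_of_lt h
    simpa [hd] using multichoose_succ_le_pow d m

variable {ι : κ → Type*} [∀ k, Fintype (ι k)] (level : ∀ k, ι k → ℕ) (g : ∀ k, ι k → ℝ)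

lemma sum_prod_of_sum_level_eq (m : ℕ) :
    ∑ p : (∀ k, ι k) with ∑ k, level k (p k) = m, ∏ k, g k (p k) =
      ∑ a ∈ piAntidiag univ m, ∏ k, ∑ q with level k q = a k, g k q := by
  have hmaps : ∀ p ∈ ({p | ∑ k, level k (p k) = m} : Finset (∀ k, ι k)),
      (fun k => level k (p k)) ∈ piAntidiag univ m := fun p hp => by simpa using hp
  rw [← sum_fiberwise_of_maps_to hmaps]
  refine sum_congr rfl fun a ha => ?_
  rw [prod_univ_sum]
  refine sum_congr ?_ fun _ _ => rfl
  ext p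
  have hsum : ∑ k, a k = m := by simpa using ha
  simp only [mem_filter, mem_univ, true_and, Fintype.mem_piFinset, funext_iff]
  exact ⟨fun h k => h.2 k, fun h => ⟨by simpa [h] using hsum, h⟩⟩

lemma sum_prod_of_sum_level_eq_le (hg : ∀ k q, 0 ≤ g k q) {c : κ → ℝ} {r : ℝ}
    (hlevel : ∀ k a, ∑ q with level k q = a, g k q ≤ c k * r ^ a) (hr : 0 ≤ r) (hc : ∀ k, 0 ≤ c k)
    (m : ℕ) :
    ∑ p : (∀ k, ι k) with ∑ k, level k (p k) = m, ∏ k, g k (p k) ≤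
      (∏ k, c k) * (m + 1) ^ (Fintype.card κ - 1) * r ^ m := by
  rw [sum_prod_of_sum_level_eq]
  have hterm : ∀ a ∈ piAntidiag (univ : Finset κ) m,
      ∏ k, ∑ q with level k q = a k, g k q ≤ (∏ k, c k) * r ^ m := by
    intro a ha
    have hsum : ∑ k, a k = m := by simpa using ha
    calc ∏ k, ∑ q with level k q = a k, g k q ≤ ∏ k, c k * r ^ a k :=
          prod_le_prod (fun k _ => sum_nonneg fun q _ => hg k q) fun k _ => hlevel k (a k)
      _ = (∏ k, c k) * r ^ m := by rw [prod_mul_distrib, prod_pow_eq_pow_sum, hsum]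
  refine (sum_le_card_nsmul _ _ _ hterm).trans ?_
  have hcard : (#(piAntidiag (univ : Finset κ) m) : ℝ) ≤ (m + 1) ^ (Fintype.card κ - 1) :=
    mod_cast card_piAntidiag_univ_le m
  have : 0 ≤ ∏ k, c k := prod_nonneg fun k _ => hc k
  calc #(piAntidiag (univ : Finset κ) m) • ((∏ k, c k) * r ^ m)
      ≤ (m + 1) ^ (Fintype.card κ - 1) * ((∏ k, c k) * r ^ m) := by rw [nsmul_eq_mul]; gcongr
    _ = _ := by ring

end LevelSums

namespace LeveledFrame

section Pi

variable {κ : Type*} [Fintype κ] [DecidableEq κ] {ι I : κ → Type*} [∀ k, Fintype (ι k)]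
  [∀ k, DecidableEq (I k)]

/-- The tensor product of leveled frames; levels add up. -/
def pi (F : ∀ k, LeveledFrame (ι k) (I k)) : LeveledFrame (∀ k, ι k) (∀ k, I k) where
  vec p i := ∏ k, (F k).vec (p k) (i k)
  level p := ∑ k, (F k).level (p k)
  parseval i i' := by
    simp only [← prod_mul_distrib]
    rw [← Fintype.piFinset_univ, ← prod_univ_sum (fun k => univ)
      fun k q => (F k).vec q (i k) * (F k).vec q (i' k)]
    simp only [parseval, funext_iff, prod_ite_zero, mem_univ, true_imp_iff, prod_const_one]

variable (F : ∀ k, LeveledFrame (ι k) (I k))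

lemma count_pi_le {c r : ℝ} (hc : 0 ≤ c) (hr : 0 ≤ r)
    (hF : ∀ k a, ((F k).count a : ℝ) ≤ c * r ^ a) (m : ℕ) :
    ((pi F).count m : ℝ) ≤ c ^ Fintype.card κ * (m + 1) ^ (Fintype.card κ - 1) * r ^ m := by
  have := sum_prod_of_sum_level_eq_le (fun k => (F k).level) (fun _ _ => 1) (fun _ _ => zero_le_one)
    (c := fun _ => c) (fun k a => by simpa [count] using hF k a) hr (fun _ => hc) m
  simp only [prod_const_one, sum_const, nsmul_eq_mul, mul_one, prod_const, card_univ] at this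
  exact this

variable [∀ k, Fintype (I k)]

lemma coeff_pi_prod (f : ∀ k, I k → ℝ) (p : ∀ k, ι k) :
    (pi F).coeff (fun i => ∏ k, f k (i k)) p = ∏ k, (F k).coeff (f k) (p k) := by
  simp only [coeff, pi, ← prod_mul_distrib]
  rw [prod_univ_sum, Fintype.piFinset_univ]

lemma levelNorm_pi_prod_le (f : ∀ k, I k → ℝ) {c : κ → ℝ} {r : ℝ} (hc : ∀ k, 0 ≤ c k)
    (hr : 0 ≤ r) (hF : ∀ k a, (F k).levelNorm (f k) a ≤ c k * r ^ a) (m : ℕ) :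
    (pi F).levelNorm (fun i => ∏ k, f k (i k)) m ≤
      (∏ k, c k) * (m + 1) ^ (Fintype.card κ - 1) * r ^ m := by
  simp only [levelNorm, coeff_pi_prod, abs_prod]
  exact sum_prod_of_sum_level_eq_le (fun k => (F k).level) (fun k q => |(F k).coeff (f k) q|)
    (fun _ _ => abs_nonneg _) hF hr hc m

lemma levelNorm_pi_prod_eq_zero (f : ∀ k, I k → ℝ)
    (hF : ∀ k q, (F k).level q ≠ 0 → (F k).coeff (f k) q = 0) {m : ℕ} (hm : m ≠ 0) :
    (pi F).levelNorm (fun i => ∏ k, f k (i k)) m = 0 := by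
  refine sum_eq_zero fun p hp => ?_
  obtain ⟨k, -, hk⟩ : ∃ k ∈ univ, (F k).level (p k) ≠ 0 := by
    refine exists_ne_zero_of_sum_ne_zero ?_
    rwa [show ∑ k, (F k).level (p k) = m from (mem_filter.1 hp).2]
  rw [coeff_pi_prod, prod_eq_zero (mem_univ k) (hF k _ hk), abs_zero]

end Pi

section OfSubspaces

open Module

variable {S I : Type*} [Fintype S] [Fintype I] [DecidableEq I]

/-- The leveled frame made of orthonormal bases of the members of a finite family of subspaces
whose orthogonal projections sum up to the identity. -/
noncomputable def ofSubspaces (U : S → Submodule ℝ (EuclideanSpace ℝ I))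
    (hU : ∀ x, ∑ s, (U s).starProjection x = x) (lev : S → ℕ) :
    LeveledFrame (Σ s, Fin (finrank ℝ (U s))) I where
  vec p i := (stdOrthonormalBasis ℝ (U p.1) p.2 : EuclideanSpace ℝ I) i
  level p := lev p.1
  parseval i i' := by
    have hexpand := congrArg (fun x : EuclideanSpace ℝ I => x i) (hU (EuclideanSpace.single i' 1))
    simp only [OrthonormalBasis.starProjection_eq_sum_rankOne (stdOrthonormalBasis ℝ (U _))]
      at hexpand
    rw [← univ_sigma_univ, sum_sigma]
    simpa [Finset.sum_apply, EuclideanSpace.inner_single_right, mul_comm] using hexpand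

variable {U : S → Submodule ℝ (EuclideanSpace ℝ I)} (hU : ∀ x, ∑ s, (U s).starProjection x = x)
  (lev : S → ℕ)

lemma sum_filter_level_ofSubspaces (g : (Σ s, Fin (finrank ℝ (U s))) → ℝ) (m : ℕ) :
    ∑ p with (ofSubspaces U hU lev).level p = m, g p = ∑ s with lev s = m, ∑ r, g ⟨s, r⟩ := by
  rw [sum_filter, sum_filter, ← univ_sigma_univ, sum_sigma]
  refine sum_congr rfl fun s _ => ?_
  by_cases h : lev s = m <;> simp [ofSubspaces, h]

lemma count_ofSubspaces (m : ℕ) :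
    ((ofSubspaces U hU lev).count m : ℝ) = ∑ s with lev s = m, (finrank ℝ (U s) : ℝ) := by
  have := sum_filter_level_ofSubspaces hU lev (fun _ => 1) m
  simpa [count] using this

lemma levelNorm_ofSubspaces_le (x : I → ℝ) {m : ℕ} {B : S → ℝ}
    (hB : ∀ s, lev s = m → ∀ v ∈ U s, ‖v‖ = 1 → |∑ i, v i * x i| ≤ B s) :
    (ofSubspaces U hU lev).levelNorm x m ≤ ∑ s with lev s = m, finrank ℝ (U s) * B s := by
  rw [levelNorm, sum_filter_level_ofSubspaces]
  refine sum_le_sum fun s hs => ?_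
  refine (sum_le_card_nsmul univ _ (B s) fun r _ => ?_).trans_eq (by simp)
  exact hB s (mem_filter.1 hs).2 _ (stdOrthonormalBasis ℝ (U s) r).2
    ((stdOrthonormalBasis ℝ (U s)).orthonormal.1 r)

end OfSubspaces

end LeveledFrame

section StarProjection

open Submodule

variable {𝕜 E : Type*} [RCLike 𝕜] [NormedAddCommGroup E] [InnerProductSpace 𝕜 E]
  {U W : Submodule 𝕜 E} [U.HasOrthogonalProjection] [W.HasOrthogonalProjection]

lemma starProjection_sup_of_isOrtho [(U ⊔ W).HasOrthogonalProjection] (h : U ⟂ W) (x : E) :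
    (U ⊔ W).starProjection x = U.starProjection x + W.starProjection x := by
  refine eq_starProjection_of_mem_orthogonal
    (add_mem_sup (starProjection_apply_mem U x) (starProjection_apply_mem W x)) ?_
  rw [← inf_orthogonal]
  constructor
  · rw [← sub_sub]
    exact sub_mem (sub_starProjection_mem_orthogonal x) (h.symm.le (starProjection_apply_mem W x))
  · rw [add_comm, ← sub_sub]
    exact sub_mem (sub_starProjection_mem_orthogonal x) (h.le (starProjection_apply_mem U x))

lemma starProjection_inf_orthogonal_of_le [(U ⊓ Wᗮ).HasOrthogonalProjection] (h : W ≤ U) (x : E) :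
    (U ⊓ Wᗮ).starProjection x = U.starProjection x - W.starProjection x := by
  refine eq_starProjection_of_mem_orthogonal
    ⟨sub_mem (starProjection_apply_mem U x) (h (starProjection_apply_mem W x)), ?_⟩ ?_
  · rw [show U.starProjection x - W.starProjection x =
        (x - W.starProjection x) - (x - U.starProjection x) by abel]
    exact sub_mem (sub_starProjection_mem_orthogonal x)
      (orthogonal_le h (sub_starProjection_mem_orthogonal x))
  · rw [show x - (U.starProjection x - W.starProjection x) =
        (x - U.starProjection x) + W.starProjection x by abel]
    exact add_mem (orthogonal_le inf_le_left (sub_starProjection_mem_orthogonal x))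
      (orthogonal_le inf_le_right (le_orthogonal_orthogonal W (starProjection_apply_mem W x)))

end StarProjection

section Blocks

open Module Submodule

/-- The index of the dyadic block of scale `l` that contains the point `i` of `{0, …, n - 1}`: the
blocks are the preimages of the dyadic intervals under `i ↦ i / n`. -/
def block (n l i : ℕ) : ℕ := i * 2 ^ l / n

lemma block_mono (n l : ℕ) : Monotone (block n l) := fun _ _ h =>
  Nat.div_le_div_right (Nat.mul_le_mul_right _ h)

lemma block_succ_div_two (n l i : ℕ) : block n (l + 1) i / 2 = block n l i := by
  rw [block, block, Nat.div_div_eq_div_mul, pow_succ, ← mul_assoc,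
    Nat.mul_div_mul_right _ _ two_pos]

lemma block_lt {n i : ℕ} (l : ℕ) (hi : i < n) : block n l i < 2 ^ l := by
  rw [block, Nat.div_lt_iff_lt_mul (by omega), mul_comm]
  exact Nat.mul_lt_mul_of_pos_left hi (by positivity)

lemma sub_mul_two_pow_lt_of_block_eq {n l i k : ℕ} (hn : 0 < n) (h : block n l i = block n l k) :
    (i - k) * 2 ^ l < n := by
  have hi : i * 2 ^ l < (block n l i + 1) * n := Nat.lt_mul_of_div_lt (Nat.lt_succ_self _) hn
  have hk : block n l k * n ≤ k * 2 ^ l := Nat.div_mul_le_self _ _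
  rw [Nat.sub_mul]
  rw [h, add_mul] at hi
  omega

lemma block_injective {n l : ℕ} (hn : 0 < n) (hl : n ≤ 2 ^ l) : Function.Injective (block n l) := by
  have hle {i k : ℕ} (h : block n l i = block n l k) : i ≤ k := by
    by_contra! hlt
    have := sub_mul_two_pow_lt_of_block_eq hn h
    nlinarith [Nat.sub_pos_of_lt hlt]
  exact fun i k h => le_antisymm (hle h) (hle h.symm)

/-- The vectors supported on the `b`-th dyadic block of scale `l` that are affine there. -/
noncomputable def blockAffine (n l b : ℕ) : Submodule ℝ (EuclideanSpace ℝ (Fin n)) :=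
  span ℝ {WithLp.toLp 2 fun i : Fin n => if block n l i = b then 1 else 0,
    WithLp.toLp 2 fun i : Fin n => if block n l i = b then (i : ℝ) else 0}

variable {n l b : ℕ} {v : EuclideanSpace ℝ (Fin n)}

lemma mem_blockAffine :
    v ∈ blockAffine n l b ↔
      ∃ a c : ℝ, ∀ i : Fin n, v i = if block n l i = b then a + c * i else 0 := by
  simp only [blockAffine, mem_span_pair, PiLp.ext_iff, PiLp.add_apply, PiLp.smul_apply, smul_eq_mul]
  refine exists₂_congr fun a c => forall_congr' fun i => ?_
  split_ifs <;> simp [eq_comm]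

lemma finrank_blockAffine_le : finrank ℝ (blockAffine n l b) ≤ 2 := by
  classical
  refine (finrank_span_le_card _).trans ?_
  rw [Set.toFinset_insert, Set.toFinset_singleton]
  exact card_le_two

lemma isOrtho_blockAffine {b' : ℕ} (h : b ≠ b') : blockAffine n l b ⟂ blockAffine n l b' := by
  refine isOrtho_iff_inner_eq.2 fun v hv w hw => ?_
  obtain ⟨a, c, hv⟩ := mem_blockAffine.1 hv
  obtain ⟨a', c', hw⟩ := mem_blockAffine.1 hw
  rw [PiLp.inner_apply]
  refine sum_eq_zero fun i _ => ?_
  by_cases hi : block n l i = b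
  · simp [hw, hi, h]
  · simp [hv, hi]

lemma blockAffine_le_sup :
    blockAffine n l b ≤ blockAffine n (l + 1) (2 * b) ⊔ blockAffine n (l + 1) (2 * b + 1) := by
  intro v hv
  obtain ⟨a, c, hv⟩ := mem_blockAffine.1 hv
  refine mem_sup.2 ⟨WithLp.toLp 2 fun i => if block n (l + 1) i = 2 * b then a + c * i else 0,
    mem_blockAffine.2 ⟨a, c, fun i => rfl⟩,
    WithLp.toLp 2 fun i => if block n (l + 1) i = 2 * b + 1 then a + c * i else 0,
    mem_blockAffine.2 ⟨a, c, fun i => rfl⟩, ?_⟩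
  ext i
  simp only [PiLp.add_apply, hv, ← block_succ_div_two n l i]
  split_ifs <;> first | omega | simp

lemma sum_starProjection_blockAffine_of_le_two_pow (hl : n ≤ 2 ^ l)
    (x : EuclideanSpace ℝ (Fin n)) :
    ∑ b ∈ range (2 ^ l), (blockAffine n l b).starProjection x = x := by
  rw [← Fin.sum_univ_eq_sum_range fun b => (blockAffine n l b).starProjection x]
  refine OrthogonalFamily.sum_projection_of_mem_iSup (OrthogonalFamily.of_pairwise fun b b' h =>
    isOrtho_blockAffine (Fin.val_ne_of_ne h)) x ?_
  rw [← (EuclideanSpace.basisFun (Fin n) ℝ).sum_repr x]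
  refine sum_mem fun i _ => smul_mem _ _ ?_
  refine mem_iSup_of_mem ⟨block n l i, block_lt l i.2⟩ (mem_blockAffine.2 ⟨1, 0, fun k => ?_⟩)
  simp [(block_injective i.pos hl).eq_iff, Fin.val_inj]

end Blocks

section Multiwavelet

open Module Submodule

/-- The piecewise affine multiwavelets: the vectors that are affine on both halves of the `b`-th
dyadic block of scale `l`, vanish outside of the block, and have two vanishing moments. -/
noncomputable def multiwavelet (n l b : ℕ) : Submodule ℝ (EuclideanSpace ℝ (Fin n)) :=
  (blockAffine n (l + 1) (2 * b) ⊔ blockAffine n (l + 1) (2 * b + 1)) ⊓ (blockAffine n l b)ᗮ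

variable {n l b : ℕ} {v : EuclideanSpace ℝ (Fin n)}

lemma finrank_multiwavelet_le : finrank ℝ (multiwavelet n l b) ≤ 4 := by
  refine (finrank_mono inf_le_left).trans ((finrank_add_le_finrank_add_finrank _ _).trans ?_)
  exact Nat.add_le_add finrank_blockAffine_le finrank_blockAffine_le

lemma starProjection_multiwavelet (x : EuclideanSpace ℝ (Fin n)) :
    (multiwavelet n l b).starProjection x =
      (blockAffine n (l + 1) (2 * b)).starProjection x +
        (blockAffine n (l + 1) (2 * b + 1)).starProjection x -
        (blockAffine n l b).starProjection x := by
  rw [multiwavelet, starProjection_inf_orthogonal_of_le blockAffine_le_sup,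
    starProjection_sup_of_isOrtho (isOrtho_blockAffine (by omega))]

lemma apply_eq_zero_of_mem_multiwavelet (hv : v ∈ multiwavelet n l b) {i : Fin n}
    (hi : block n l i ≠ b) : v i = 0 := by
  obtain ⟨u, hu, w, hw, rfl⟩ := mem_sup.1 hv.1
  obtain ⟨a, c, hu⟩ := mem_blockAffine.1 hu
  obtain ⟨a', c', hw⟩ := mem_blockAffine.1 hw
  rw [← block_succ_div_two] at hi
  rw [PiLp.add_apply, hu, hw, if_neg (by omega), if_neg (by omega), add_zero]

lemma sum_mul_eq_zero_of_mem_multiwavelet (hv : v ∈ multiwavelet n l b) {f : ℕ → ℝ} (a c : ℝ)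
    (hf : ∀ i : Fin n, block n l i = b → f i = a + c * i) : ∑ i, v i * f i = 0 := by
  set w : EuclideanSpace ℝ (Fin n) :=
    WithLp.toLp 2 fun i => if block n l i = b then a + c * i else 0
  have hw : w ∈ blockAffine n l b := mem_blockAffine.2 ⟨a, c, fun i => rfl⟩
  rw [← hv.2 w hw, PiLp.inner_apply]
  refine sum_congr rfl fun i _ => ?_
  by_cases hi : block n l i = b
  · simp [w, hi, hf i hi]
  · simp [apply_eq_zero_of_mem_multiwavelet hv hi]

/-- The scaling functions (`m = 0`) and the multiwavelets of scale `m - 1` (`m ≠ 0`). At level `m`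
there are `2 ^ (m - 1)` of these spaces, where `0 - 1 = 0`. -/
noncomputable def multiwaveletPiece (n : ℕ) : ℕ → ℕ → Submodule ℝ (EuclideanSpace ℝ (Fin n))
  | 0, b => blockAffine n 0 b
  | l + 1, b => multiwavelet n l b

lemma sum_range_two_mul {M : Type*} [AddCommMonoid M] (f : ℕ → M) (m : ℕ) :
    ∑ b ∈ range (2 * m), f b = ∑ b ∈ range m, (f (2 * b) + f (2 * b + 1)) := by
  induction m with
  | zero => simp
  | succ m ih =>
    rw [mul_add_one, sum_range_succ, sum_range_succ, ih, sum_range_succ, add_assoc]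

lemma sum_starProjection_multiwaveletPiece (L : ℕ) (x : EuclideanSpace ℝ (Fin n)) :
    ∑ m ∈ range (L + 1), ∑ b ∈ range (2 ^ (m - 1)), (multiwaveletPiece n m b).starProjection x =
      ∑ b ∈ range (2 ^ L), (blockAffine n L b).starProjection x := by
  induction L with
  | zero => simp [multiwaveletPiece]
  | succ L ih =>
    rw [sum_range_succ, ih, pow_succ', sum_range_two_mul, Nat.add_sub_cancel, ← sum_add_distrib]
    refine sum_congr rfl fun b _ => ?_
    rw [multiwaveletPiece, starProjection_multiwavelet, add_sub_cancel]

lemma sum_univ_sigma_fin {M : Type*} [AddCommMonoid M] (N : ℕ) (k : ℕ → ℕ) (f : ℕ → ℕ → M) :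
    ∑ s : Σ m : Fin N, Fin (k m), f s.1 s.2 = ∑ m ∈ range N, ∑ b ∈ range (k m), f m b := by
  rw [← univ_sigma_univ, sum_sigma, ← Fin.sum_univ_eq_sum_range fun m => ∑ b ∈ range (k m), f m b]
  exact sum_congr rfl fun m _ => Fin.sum_univ_eq_sum_range (f m) (k m)

lemma sum_starProjection_multiwaveletPiece_eq_self (x : EuclideanSpace ℝ (Fin n)) :
    ∑ s : Σ m : Fin (n + 1), Fin (2 ^ ((m : ℕ) - 1)),
      (multiwaveletPiece n s.1 s.2).starProjection x = x := by
  rw [sum_univ_sigma_fin (n + 1) (fun m => 2 ^ (m - 1)) fun m b =>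
      (multiwaveletPiece n m b).starProjection x, sum_starProjection_multiwaveletPiece,
    sum_starProjection_blockAffine_of_le_two_pow Nat.lt_two_pow_self.le]

/-- The indices `⟨⟨level, block⟩, r⟩` of the multiwavelets on `{0, …, n - 1}`. -/
abbrev MultiwaveletIndex (n : ℕ) : Type :=
  Σ s : Σ m : Fin (n + 1), Fin (2 ^ ((m : ℕ) - 1)), Fin (finrank ℝ (multiwaveletPiece n s.1 s.2))

/-- The Parseval frame (in fact an orthonormal basis) of `ℝ^n` formed by the multiwavelets. -/
noncomputable def multiwaveletFrame (n : ℕ) : LeveledFrame (MultiwaveletIndex n) (Fin n) :=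
  LeveledFrame.ofSubspaces
    (fun s : Σ m : Fin (n + 1), Fin (2 ^ ((m : ℕ) - 1)) => multiwaveletPiece n s.1 s.2)
    sum_starProjection_multiwaveletPiece_eq_self fun s => s.1

lemma sum_filter_sigma_fin_le (N : ℕ) (k : ℕ → ℕ) {g : ℕ → ℕ → ℝ} (hg : ∀ m b, 0 ≤ g m b)
    (m : ℕ) :
    ∑ s : Σ m : Fin N, Fin (k m) with (s.1 : ℕ) = m, g s.1 s.2 ≤ ∑ b ∈ range (k m), g m b := by
  rw [sum_filter, sum_univ_sigma_fin N k fun a b => if a = m then g a b else 0]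
  simp only [sum_ite_irrel, sum_const_zero, sum_ite_eq']
  split_ifs
  · exact le_rfl
  · exact sum_nonneg fun b _ => hg m b

lemma count_multiwaveletFrame_le (n m : ℕ) : ((multiwaveletFrame n).count m : ℝ) ≤ 2 * 2 ^ m := by
  rw [multiwaveletFrame, LeveledFrame.count_ofSubspaces]
  refine (sum_filter_sigma_fin_le (n + 1) (fun m => 2 ^ (m - 1))
    (g := fun m b => (finrank ℝ (multiwaveletPiece n m b) : ℝ)) (fun _ _ => Nat.cast_nonneg _)
    m).trans ?_
  rcases m with - | l
  · have : (finrank ℝ (multiwaveletPiece n 0 0) : ℝ) ≤ 2 := mod_cast finrank_blockAffine_le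
    simpa using this
  · refine (sum_le_card_nsmul _ _ 4 fun b _ => ?_).trans_eq ?_
    · exact_mod_cast (finrank_multiwavelet_le : finrank ℝ (multiwavelet n l b) ≤ 4)
    · rw [nsmul_eq_mul, card_range]
      push_cast [Nat.add_sub_cancel]
      ring

end Multiwavelet

section Hinge

open Module Submodule

/-- The dictionary of normalised hinge functions on `{0, …, n - 1}`: the constant `1` for `j = 0`
and `i ↦ (i - (j - 1))₊ / n` for `j ≠ 0`. -/
noncomputable def hinge (n j i : ℕ) : ℝ := if j = 0 then 1 else ((i - (j - 1) : ℕ) : ℝ) / n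

variable {n l b j : ℕ} {v : EuclideanSpace ℝ (Fin n)}

lemma hinge_sq_le_one {i : ℕ} (hi : i < n) : hinge n j i ^ 2 ≤ 1 := by
  rw [hinge]
  split_ifs with hj
  · simp
  · refine pow_le_one₀ (by positivity) (div_le_one_of_le₀ ?_ (Nat.cast_nonneg n))
    exact_mod_cast (by omega : i - (j - 1) ≤ n)

lemma sum_sq_eq_one_of_norm_eq_one (hv : ‖v‖ = 1) : ∑ i, v i ^ 2 = 1 := by
  simpa [hv] using (EuclideanSpace.real_norm_sq_eq v).symm

lemma abs_sum_mul_hinge_le_sqrt (hv : ‖v‖ = 1) (j : ℕ) : |∑ i, v i * hinge n j i| ≤ √n := by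
  refine Real.abs_le_sqrt ?_
  calc (∑ i, v i * hinge n j i) ^ 2 ≤ (∑ i, v i ^ 2) * ∑ i : Fin n, hinge n j i ^ 2 :=
        sum_mul_sq_le_sq_mul_sq _ _ _
    _ ≤ 1 * ∑ i : Fin n, 1 := by
        rw [sum_sq_eq_one_of_norm_eq_one hv]
        gcongr with i
        exact hinge_sq_le_one i.2
    _ = n := by simp

lemma sum_mul_hinge_eq_zero_of_le_one (hv : v ∈ multiwavelet n l b) (hj : j ≤ 1) :
    ∑ i, v i * hinge n j i = 0 := by
  interval_cases j
  · exact sum_mul_eq_zero_of_mem_multiwavelet hv 1 0 fun i _ => by simp [hinge]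
  · exact sum_mul_eq_zero_of_mem_multiwavelet hv 0 (1 / n) fun i _ => by simp [hinge]; ring

/-- On a block that does not contain the kink `j - 1`, the hinge function is affine. -/
lemma sum_mul_hinge_eq_zero_of_ne_block (hv : v ∈ multiwavelet n l b) (hj : j ≠ 0)
    (hb : b ≠ block n l (j - 1)) : ∑ i, v i * hinge n j i = 0 := by
  rcases hb.lt_or_gt with hlt | hgt
  · refine sum_mul_eq_zero_of_mem_multiwavelet hv 0 0 fun i hi => ?_
    have : (i : ℕ) < j - 1 := (block_mono n l).reflect_lt (hi ▸ hlt)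
    simp [hinge, hj, Nat.sub_eq_zero_of_le this.le]
  · refine sum_mul_eq_zero_of_mem_multiwavelet hv ((1 - j) / n) (1 / n) fun i hi => ?_
    have : j - 1 < (i : ℕ) := (block_mono n l).reflect_lt (hi ▸ hgt)
    rw [hinge, if_neg hj, Nat.cast_sub this.le, Nat.cast_sub (by omega)]
    push_cast
    ring

lemma sum_block_hinge_sq_le (hj : j ≠ 0) (hb : b = block n l (j - 1)) :
    ∑ i : Fin n with block n l (i : Fin n) = b, hinge n j i ^ 2 ≤ n * (1 / 8) ^ l := by
  rcases Nat.eq_zero_or_pos n with rfl | hn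
  · simp
  set s := n / 2 ^ l
  have hdist {i : ℕ} (hi : block n l i = b) : i - (j - 1) ≤ s :=
    (Nat.le_div_iff_mul_le (by positivity)).2
      (sub_mul_two_pow_lt_of_block_eq hn (hi.trans hb)).le
  have hs_le : (s : ℝ) ≤ n / 2 ^ l := by simpa using Nat.cast_div_le (α := ℝ) (m := n) (n := 2 ^ l)
  set B : Finset (Fin n) := {i | block n l (i : Fin n) = b}
  have hcard : #{i ∈ B | hinge n j (i : Fin n) ^ 2 ≠ 0} ≤ s := by
    have hmaps : ∀ i ∈ ({i ∈ B | hinge n j (i : Fin n) ^ 2 ≠ 0} : Finset (Fin n)),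
        (i : ℕ) ∈ Ioc (j - 1) (j - 1 + s) := by
      intro i hi
      have hpos : (i : ℕ) - (j - 1) ≠ 0 := fun h => (mem_filter.1 hi).2 (by simp [hinge, hj, h])
      have := hdist (mem_filter.1 (mem_filter.1 hi).1).2
      exact mem_Ioc.2 (by omega)
    simpa using card_le_card_of_injOn _ hmaps fun _ _ _ _ h => Fin.ext h
  calc ∑ i ∈ B, hinge n j i ^ 2 = ∑ i ∈ B with hinge n j (i : Fin n) ^ 2 ≠ 0, hinge n j i ^ 2 :=
        (sum_filter_ne_zero _).symm
    _ ≤ #{i ∈ B | hinge n j (i : Fin n) ^ 2 ≠ 0} • (s / n : ℝ) ^ 2 := by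
        refine sum_le_card_nsmul _ _ _ fun i hi => ?_
        rw [hinge, if_neg hj]
        gcongr
        exact hdist (mem_filter.1 (mem_filter.1 hi).1).2
    _ ≤ (n / 2 ^ l) * (n / 2 ^ l / n) ^ 2 := by
        rw [nsmul_eq_mul]
        gcongr
        exact (Nat.cast_le.2 hcard).trans hs_le
    _ = n * (1 / 8) ^ l := by
        rw [one_div, inv_pow, show (8 : ℝ) = 2 ^ 3 by norm_num, ← pow_mul, mul_comm 3, pow_mul]
        field_simp

lemma abs_sum_mul_hinge_le (hv : v ∈ multiwavelet n l b) (hv' : ‖v‖ = 1) (hj : j ≠ 0)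
    (hb : b = block n l (j - 1)) : |∑ i, v i * hinge n j i| ≤ √n * (√8)⁻¹ ^ l := by
  set B : Finset (Fin n) := {i | block n l (i : Fin n) = b}
  have hsupp : ∑ i, v i * hinge n j i = ∑ i ∈ B, v i * hinge n j i := by
    refine (sum_filter_of_ne fun i _ hi => ?_).symm
    by_contra h
    exact hi (by rw [apply_eq_zero_of_mem_multiwavelet hv h, zero_mul])
  have hB : ∑ i ∈ B, v i ^ 2 ≤ 1 :=
    (sum_le_univ_sum_of_nonneg fun i => sq_nonneg _).trans_eq (sum_sq_eq_one_of_norm_eq_one hv')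
  refine abs_le_of_sq_le_sq ?_ (by positivity)
  calc (∑ i, v i * hinge n j i) ^ 2 ≤ (∑ i ∈ B, v i ^ 2) * ∑ i ∈ B, hinge n j i ^ 2 := by
        rw [hsupp]
        exact sum_mul_sq_le_sq_mul_sq _ _ _
    _ ≤ 1 * (n * (1 / 8) ^ l) := by
        gcongr
        exact sum_block_hinge_sq_le hj hb
    _ = (√n * (√8)⁻¹ ^ l) ^ 2 := by
        rw [mul_pow, ← pow_mul, mul_comm l, pow_mul, inv_pow, Real.sq_sqrt (Nat.cast_nonneg n),
          Real.sq_sqrt (by norm_num), one_mul, one_div]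

lemma abs_sum_mul_hinge_le_ite (hv : v ∈ multiwavelet n l b) (hv' : ‖v‖ = 1) (j : ℕ) :
    |∑ i, v i * hinge n j i| ≤ if b = block n l (j - 1) then √n * (√8)⁻¹ ^ l else 0 := by
  rcases eq_or_ne j 0 with rfl | hj
  · rw [sum_mul_hinge_eq_zero_of_le_one hv zero_le_one, abs_zero]
    positivity
  split_ifs with hb
  · exact abs_sum_mul_hinge_le hv hv' hj hb
  · rw [sum_mul_hinge_eq_zero_of_ne_block hv hj hb, abs_zero]

lemma coeff_multiwaveletFrame_hinge_eq_zero (hj : j ≤ 1) (p : MultiwaveletIndex n)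
    (hp : (multiwaveletFrame n).level p ≠ 0) :
    (multiwaveletFrame n).coeff (fun i => hinge n j i) p = 0 := by
  obtain ⟨⟨⟨m, hm⟩, b⟩, r⟩ := p
  obtain ⟨l, rfl⟩ := Nat.exists_eq_succ_of_ne_zero hp
  exact sum_mul_hinge_eq_zero_of_le_one
    (stdOrthonormalBasis ℝ (multiwavelet n l b) r).2 hj

lemma levelNorm_multiwaveletFrame_hinge_le (n j m : ℕ) :
    (multiwaveletFrame n).levelNorm (fun i => hinge n j i) m ≤ 12 * √n * (√8)⁻¹ ^ m := by
  rcases m with - | l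
  · have hcount := count_multiwaveletFrame_le n 0
    rw [multiwaveletFrame, LeveledFrame.count_ofSubspaces] at hcount
    refine (LeveledFrame.levelNorm_ofSubspaces_le _ _ _ (B := fun _ => √n)
      fun s _ v _ hv => abs_sum_mul_hinge_le_sqrt hv j).trans ?_
    rw [← sum_mul]
    nlinarith [Real.sqrt_nonneg n]
  calc (multiwaveletFrame n).levelNorm (fun i => hinge n j i) (l + 1)
      ≤ ∑ s : Σ m : Fin (n + 1), Fin (2 ^ ((m : ℕ) - 1)) with (s.1 : ℕ) = l + 1,
          finrank ℝ (multiwaveletPiece n s.1 s.2) *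
            if (s.2 : ℕ) = block n l (j - 1) then √n * (√8)⁻¹ ^ l else 0 := by
        refine LeveledFrame.levelNorm_ofSubspaces_le _ _ _ fun s hs v hv hv' => ?_
        have hv : v ∈ multiwavelet n l s.2 := by simpa only [hs, multiwaveletPiece] using hv
        exact abs_sum_mul_hinge_le_ite hv hv' j
    _ ≤ ∑ b ∈ range (2 ^ l), finrank ℝ (multiwavelet n l b) *
          if b = block n l (j - 1) then √n * (√8)⁻¹ ^ l else 0 :=
        sum_filter_sigma_fin_le (n + 1) (fun m => 2 ^ (m - 1)) (g := fun m b =>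
          finrank ℝ (multiwaveletPiece n m b) *
            if b = block n l (j - 1) then √n * (√8)⁻¹ ^ l else 0)
          (fun _ _ => by positivity) (l + 1)
    _ ≤ ∑ b ∈ range (2 ^ l), if b = block n l (j - 1) then 4 * (√n * (√8)⁻¹ ^ l) else 0 := by
        refine sum_le_sum fun b _ => ?_
        rw [mul_ite, mul_zero]
        split_ifs
        · gcongr
          exact mod_cast finrank_multiwavelet_le
        · exact le_rfl
    _ ≤ 4 * (√n * (√8)⁻¹ ^ l) := by
        rw [sum_ite_eq']
        split_ifs
        · exact le_rfl
        · positivity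
    _ ≤ 12 * √n * (√8)⁻¹ ^ (l + 1) := by
        have hsqrt : √8 ≤ 3 := Real.sqrt_le_iff.2 (by norm_num)
        have : 1 ≤ 3 * (√8)⁻¹ := by rwa [← div_eq_mul_inv, one_le_div (by positivity)]
        calc 4 * (√n * (√8)⁻¹ ^ l) ≤ 4 * (√n * (√8)⁻¹ ^ l) * (3 * (√8)⁻¹) :=
              le_mul_of_one_le_right (by positivity) this
          _ = 12 * √n * (√8)⁻¹ ^ (l + 1) := by ring

end Hinge

section HingeExpansion

/-- The backward difference of `f` at `j` of the largest order in `{0, 1, 2}` for which it only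
involves arguments `≥ 0`: up to normalisation, the coefficient of `f` at the `j`-th hinge
function. -/
noncomputable def edgeDiff (f : ℕ → ℝ) (j : ℕ) : ℝ :=
  ∑ δ ∈ range (min j 2 + 1), (-1 : ℝ) ^ δ * ((min j 2).choose δ : ℝ) * f (j - δ)

lemma edgeDiff_zero (f : ℕ → ℝ) : edgeDiff f 0 = f 0 := by
  simp [edgeDiff]

lemma edgeDiff_one (f : ℕ → ℝ) : edgeDiff f 1 = f 1 - f 0 := by
  simp [edgeDiff, sum_range_succ, sub_eq_add_neg]

lemma edgeDiff_add_two (f : ℕ → ℝ) (j : ℕ) :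
    edgeDiff f (j + 2) = f (j + 2) - 2 * f (j + 1) + f j := by
  simp [edgeDiff, sum_range_succ, sub_eq_add_neg]

lemma sum_range_edgeDiff_succ (f : ℕ → ℝ) (i : ℕ) :
    ∑ j ∈ range (i + 1), edgeDiff f (j + 1) = f (i + 1) - f i := by
  induction i with
  | zero => simp [edgeDiff_one]
  | succ i ih =>
    rw [sum_range_succ, ih, edgeDiff_add_two]
    ring

lemma sum_edgeDiff_succ_mul_sub (f : ℕ → ℝ) {i N : ℕ} (hi : i ≤ N) :
    ∑ j ∈ range N, edgeDiff f (j + 1) * ((i - j : ℕ) : ℝ) = f i - f 0 := by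
  induction i with
  | zero => simp
  | succ i ih =>
    have hstep : ∀ j, ((i + 1 - j : ℕ) : ℝ) = ((i - j : ℕ) : ℝ) + if j < i + 1 then 1 else 0 := by
      intro j
      split_ifs with h
      · exact_mod_cast Nat.sub_add_comm (Nat.lt_succ_iff.1 h)
      · rw [Nat.sub_eq_zero_of_le (by lia), Nat.sub_eq_zero_of_le (by lia)]
        simp
    have hfilter : {j ∈ range N | j < i + 1} = range (i + 1) := by
      ext j
      simp only [mem_filter, mem_range]
      lia
    simp_rw [hstep, mul_add, mul_ite, mul_one, mul_zero]
    rw [sum_add_distrib, ih (by lia), ← sum_filter, hfilter, sum_range_edgeDiff_succ]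
    ring

lemma sum_edgeDiff_mul_hinge (f : ℕ → ℝ) {n i : ℕ} (hi : i < n) :
    ∑ j : Fin n, (n : ℝ) ^ min (j : ℕ) 1 * edgeDiff f j * hinge n j i = f i := by
  obtain ⟨N, rfl⟩ := Nat.exists_eq_add_one_of_ne_zero (Nat.ne_zero_of_lt hi)
  have hterm (j : ℕ) : ((N + 1 : ℕ) : ℝ) ^ min (j + 1) 1 * edgeDiff f (j + 1) *
      hinge (N + 1) (j + 1) i = edgeDiff f (j + 1) * ((i - j : ℕ) : ℝ) := by
    simp only [hinge, Nat.add_eq_zero_iff, one_ne_zero, and_false, if_false, Nat.add_sub_cancel,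
      Nat.le_add_left, min_eq_right, pow_one]
    field_simp
  rw [Fin.sum_univ_eq_sum_range fun j => ((N + 1 : ℕ) : ℝ) ^ min j 1 * edgeDiff f j *
    hinge (N + 1) j i, sum_range_succ', sum_congr rfl fun j _ => hterm j,
    sum_edgeDiff_succ_mul_sub f (Nat.lt_succ_iff.1 hi)]
  simp [hinge, edgeDiff_zero]

variable {d : ℕ} {n : Fin d → ℕ}

lemma mixedDiff_prod (β : Fin d → ℕ) (f : Fin d → ℕ → ℝ) (i : Fin d → ℕ) :
    mixedDiff d β (fun x => ∏ k, f k (x k)) i =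
      ∏ k, ∑ δ ∈ range (β k + 1), (-1 : ℝ) ^ δ * ((β k).choose δ : ℝ) * f k (i k - δ) := by
  simp_rw [mixedDiff, prod_univ_sum, prod_mul_distrib, prod_pow_eq_pow_sum]

lemma mixedDiff_sum {ι : Type*} (s : Finset ι) (c : ι → ℝ) (g : ι → (Fin d → ℕ) → ℝ)
    (β i : Fin d → ℕ) :
    mixedDiff d β (fun x => ∑ a ∈ s, c a * g a x) i = ∑ a ∈ s, c a * mixedDiff d β (g a) i := by
  simp_rw [mixedDiff, mul_sum]
  rw [sum_comm]
  exact sum_congr rfl fun a _ => sum_congr rfl fun δ _ => by ring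

lemma latExtend_eq_sum (θ : (∀ k, Fin (n k)) → ℝ) :
    latExtend d n θ = fun x => ∑ m, θ m * ∏ k, (Pi.single (m k : ℕ) 1 : ℕ → ℝ) (x k) := by
  ext x
  have hprod (m : ∀ k, Fin (n k)) : ∏ k, (Pi.single (m k : ℕ) 1 : ℕ → ℝ) (x k) =
      if x = fun k => (m k : ℕ) then 1 else 0 := by
    simp_rw [Pi.single_apply, prod_ite_zero, prod_const_one, funext_iff, mem_univ, true_imp_iff]
  simp_rw [hprod, mul_ite, mul_one, mul_zero]
  by_cases hx : ∀ k, x k < n k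
  · have hiff (m : ∀ k, Fin (n k)) :
        (x = fun k => (m k : ℕ)) ↔ (fun k => ⟨x k, hx k⟩ : ∀ k, Fin (n k)) = m := by
      simp only [funext_iff, Fin.ext_iff]
    simp_rw [hiff]
    simp [latExtend, hx]
  · rw [latExtend, dif_neg hx]
    refine (sum_eq_zero fun m _ => if_neg ?_).symm
    rintro rfl
    exact hx fun k => (m k).2

/-- The coefficient of `θ` at the tensor product of the hinge functions `hinge (n k) (j k)`. -/
noncomputable def hingeCoeff (θ : (∀ k, Fin (n k)) → ℝ) (j : ∀ k, Fin (n k)) : ℝ :=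
  (∏ k, (n k : ℝ) ^ min (j k : ℕ) 1) *
    mixedDiff d (fun k => min (j k : ℕ) 2) (latExtend d n θ) (fun k => j k)

lemma hingeCoeff_eq_sum (θ : (∀ k, Fin (n k)) → ℝ) (j : ∀ k, Fin (n k)) :
    hingeCoeff θ j =
      ∑ m, θ m * ∏ k, (n k : ℝ) ^ min (j k : ℕ) 1 * edgeDiff (Pi.single (m k : ℕ) 1) (j k) := by
  rw [hingeCoeff, latExtend_eq_sum, mixedDiff_sum, mul_sum]
  refine sum_congr rfl fun m _ => ?_
  rw [mixedDiff_prod, prod_mul_distrib]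
  simp only [edgeDiff]
  ring

lemma hingeCoeff_sub (θ η : (∀ k, Fin (n k)) → ℝ) (j : ∀ k, Fin (n k)) :
    hingeCoeff (θ - η) j = hingeCoeff θ j - hingeCoeff η j := by
  simp_rw [hingeCoeff_eq_sum, Pi.sub_apply, sub_mul, sum_sub_distrib]

theorem sum_hingeCoeff_mul_prod_hinge (θ : (∀ k, Fin (n k)) → ℝ) (i : ∀ k, Fin (n k)) :
    ∑ j, hingeCoeff θ j * ∏ k, hinge (n k) (j k) (i k) = θ i := by
  have hdual (m : ∀ k, Fin (n k)) :
      ∑ j : ∀ k, Fin (n k), (∏ k, (n k : ℝ) ^ min (j k : ℕ) 1 *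
        edgeDiff (Pi.single (m k : ℕ) 1) (j k)) * ∏ k, hinge (n k) (j k) (i k) =
      if i = m then 1 else 0 := by
    simp_rw [← prod_mul_distrib]
    rw [← Fintype.prod_sum fun k (j : Fin (n k)) => (n k : ℝ) ^ min (j : ℕ) 1 *
      edgeDiff (Pi.single (m k : ℕ) 1) j * hinge (n k) j (i k)]
    simp_rw [sum_edgeDiff_mul_hinge _ (i _).2, Pi.single_apply, prod_ite_zero, prod_const_one,
      funext_iff, Fin.ext_iff, mem_univ, true_imp_iff]
  simp_rw [hingeCoeff_eq_sum, sum_mul, mul_assoc]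
  rw [sum_comm]
  simp_rw [← mul_sum, hdual, mul_ite, mul_one, mul_zero, sum_ite_eq, mem_univ, if_true]

lemma sup_min_two_eq_two_iff (i : Fin d → ℕ) :
    univ.sup (fun k => min (i k) 2) = 2 ↔ ∃ k, 2 ≤ i k := by
  rw [le_antisymm_iff, Finset.sup_le_iff, Finset.le_sup_iff (by decide)]
  simp

lemma mem_idxBeta_iff (hn : ∀ k, 2 ≤ n k) {β : Fin d → ℕ} (hβ : univ.sup β = 2)
    {i : Fin d → ℕ} :
    i ∈ idxBeta d n β ↔ (∀ k, i k < n k) ∧ (fun k => min (i k) 2) = β := by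
  rw [idxBeta, Fintype.mem_piFinset, funext_iff, ← forall_and, hβ]
  refine forall_congr' fun k => ?_
  have hβk : β k ≤ 2 := hβ ▸ le_sup (mem_univ k)
  specialize hn k
  split_ifs <;> simp only [mem_Ico, mem_singleton] <;> lia

lemma sum_idxBeta (hn : ∀ k, 2 ≤ n k) {β : Fin d → ℕ} (hβ : univ.sup β = 2)
    (g : (Fin d → ℕ) → ℝ) :
    ∑ i ∈ idxBeta d n β, g i =
      ∑ j : ∀ k, Fin (n k) with (fun k => min (j k : ℕ) 2) = β, g fun k => j k := by
  symm
  refine sum_bij (fun j _ k => (j k : ℕ)) (fun j hj => ?_) (fun j _ j' _ h => ?_)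
    (fun i hi => ?_) (fun _ _ => rfl)
  · exact (mem_idxBeta_iff hn hβ).2 ⟨fun k => (j k).2, (mem_filter.1 hj).2⟩
  · exact funext fun k => Fin.ext (congrFun h k)
  · obtain ⟨hlt, hmin⟩ := (mem_idxBeta_iff hn hβ).1 hi
    exact ⟨fun k => ⟨i k, hlt k⟩, mem_filter.2 ⟨mem_univ _, hmin⟩, rfl⟩

theorem V2_latExtend_eq_sum_abs_hingeCoeff (hn : ∀ k, 2 ≤ n k) (θ : (∀ k, Fin (n k)) → ℝ) :
    V2 d n (latExtend d n θ) =
      ∑ j : ∀ k, Fin (n k) with ∃ k, 2 ≤ (j k : ℕ), |hingeCoeff θ j| := by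
  have hmaps : ∀ j ∈ ({j | ∃ k, 2 ≤ (j k : ℕ)} : Finset (∀ k, Fin (n k))),
      (fun k => min (j k : ℕ) 2) ∈
        {β ∈ Fintype.piFinset fun _ : Fin d => range 3 | univ.sup β = 2} := by
    intro j hj
    rw [mem_filter, sup_min_two_eq_two_iff, Fintype.mem_piFinset]
    exact ⟨fun k => mem_range.2 (by lia), (mem_filter.1 hj).2⟩
  rw [V2, ← sum_fiberwise_of_maps_to hmaps]
  refine sum_congr rfl fun β hβ => ?_
  replace hβ := (mem_filter.1 hβ).2
  rw [sum_idxBeta hn hβ, mul_sum, filter_filter]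
  refine sum_congr ?_ fun j hj => ?_
  · refine filter_congr fun j _ => (and_iff_right_of_imp ?_).symm
    rintro rfl
    exact (sup_min_two_eq_two_iff _).1 hβ
  · obtain rfl := (mem_filter.1 hj).2.2
    have hweight (k : Fin d) :
        (if min (j k : ℕ) 2 = 2 then 1 else min (j k : ℕ) 2) = min (j k : ℕ) 1 := by
      split_ifs <;> lia
    rw [hingeCoeff, abs_mul, abs_prod]
    simp_rw [abs_pow, Nat.abs_cast, hweight]

lemma V2_latExtend_sub_le (hn : ∀ k, 2 ≤ n k) (θ η : (∀ k, Fin (n k)) → ℝ) :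
    V2 d n (latExtend d n (θ - η)) ≤ V2 d n (latExtend d n θ) + V2 d n (latExtend d n η) := by
  simp_rw [V2_latExtend_eq_sum_abs_hingeCoeff hn, ← sum_add_distrib, hingeCoeff_sub]
  exact sum_le_sum fun j _ => abs_sub _ _

end HingeExpansion

section Lattice

open Real
open scoped NNReal

variable {d : ℕ} {n : Fin d → ℕ}

/-- The tensor product of the one-dimensional multiwavelet frames on the lattice
`∏ k, {0, …, n k - 1}`. -/
noncomputable def latticeFrame (n : Fin d → ℕ) :
    LeveledFrame (∀ k, MultiwaveletIndex (n k)) (∀ k, Fin (n k)) :=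
  LeveledFrame.pi fun k => multiwaveletFrame (n k)

lemma count_latticeFrame_le (n : Fin d → ℕ) (m : ℕ) :
    ((latticeFrame n).count m : ℝ) ≤ 2 ^ d * (m + 1) ^ (d - 1) * 2 ^ m := by
  simpa only [latticeFrame, Fintype.card_fin] using LeveledFrame.count_pi_le _ zero_le_two
    zero_le_two (fun k a => count_multiwaveletFrame_le (n k) a) m

lemma log_two_mul_count_latticeFrame_le (hd : 1 ≤ d) (n : Fin d → ℕ) (m : ℕ) :
    log (2 * (latticeFrame n).count m) ≤ 2 * d * (m + 1) := by
  rcases Nat.eq_zero_or_pos ((latticeFrame n).count m) with h | h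
  · rw [h, Nat.cast_zero, mul_zero, log_zero]
    positivity
  have hm : (m + 1 : ℝ) ≤ 2 ^ m := mod_cast Nat.lt_two_pow_self
  obtain ⟨e, rfl⟩ := Nat.exists_eq_add_of_le' hd
  have hcount : 2 * ((latticeFrame n).count m : ℝ) ≤ 2 ^ (2 * (e + 1) * (m + 1)) :=
    calc 2 * ((latticeFrame n).count m : ℝ)
        ≤ 2 * (2 ^ (e + 1) * (2 ^ m) ^ e * 2 ^ m) := by
          refine mul_le_mul_of_nonneg_left ((count_latticeFrame_le n m).trans ?_) zero_le_two
          rw [Nat.add_sub_cancel]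
          gcongr
      _ = 2 ^ (1 + (e + 1) + m * (e + 1)) := by ring
      _ ≤ 2 ^ (2 * (e + 1) * (m + 1)) := pow_le_pow_right₀ one_le_two (by nlinarith)
  calc log (2 * (latticeFrame n).count m) ≤ log (2 ^ (2 * (e + 1) * (m + 1))) :=
        log_le_log (by positivity) hcount
    _ = 2 * (e + 1) * (m + 1) * log 2 := by rw [log_pow]; push_cast; ring
    _ ≤ 2 * ((e + 1 : ℕ) : ℝ) * (m + 1) := by
        rw [Nat.cast_succ]
        exact mul_le_of_le_one_right (by positivity) (by linarith [log_two_lt_d9])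

lemma sqrt_log_two_mul_count_latticeFrame_le (hd : 1 ≤ d) (n : Fin d → ℕ) (σ : ℝ≥0) (m : ℕ) :
    √(2 * (σ ^ 2 : ℝ≥0) * log (2 * (latticeFrame n).count m)) ≤ 2 * d * σ * √(m + 1) := by
  refine sqrt_le_iff.2 ⟨by positivity, ?_⟩
  have hd' : (d : ℝ) ≤ d ^ 2 := le_self_pow₀ (mod_cast hd) two_ne_zero
  calc 2 * ((σ ^ 2 : ℝ≥0) : ℝ) * log (2 * (latticeFrame n).count m)
      ≤ 2 * ((σ ^ 2 : ℝ≥0) : ℝ) * (2 * d ^ 2 * (m + 1)) := by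
        gcongr
        exact (log_two_mul_count_latticeFrame_le hd n m).trans (by gcongr)
    _ = (2 * d * σ * √(m + 1)) ^ 2 := by
        rw [mul_pow _ √_, sq_sqrt (by positivity), NNReal.coe_pow]
        ring

lemma levelNorm_latticeFrame_prod_hinge_le (n j : Fin d → ℕ) (m : ℕ) :
    (latticeFrame n).levelNorm (fun i => ∏ k, hinge (n k) (j k) (i k)) m ≤
      12 ^ d * √(∏ k, (n k : ℝ)) * (m + 1) ^ (d - 1) * (√8)⁻¹ ^ m := by
  have := LeveledFrame.levelNorm_pi_prod_le (fun k => multiwaveletFrame (n k))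
    (fun k i => hinge (n k) (j k) i) (c := fun k => 12 * √(n k)) (fun k => by positivity)
    (by positivity) (fun k a => levelNorm_multiwaveletFrame_hinge_le (n k) (j k) a) m
  simpa only [latticeFrame, prod_mul_distrib, prod_const, card_univ, Fintype.card_fin,
    sqrt_prod univ fun k _ => Nat.cast_nonneg (n k)] using this

/-- Products of affine functions only have coefficients at level `0`, so the coefficients not
penalised by `V2` do not contribute to the finer levels. -/
lemma levelNorm_latticeFrame_le (hn : ∀ k, 2 ≤ n k) (θ : (∀ k, Fin (n k)) → ℝ) {m : ℕ}
    (hm : m ≠ 0) :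
    (latticeFrame n).levelNorm θ m ≤ V2 d n (latExtend d n θ) *
      (12 ^ d * √(∏ k, (n k : ℝ)) * (m + 1) ^ (d - 1) * (√8)⁻¹ ^ m) := by
  have hzero (j : ∀ k, Fin (n k)) (hj : ¬∃ k, 2 ≤ (j k : ℕ)) :
      (latticeFrame n).levelNorm (fun i => ∏ k, hinge (n k) (j k) (i k)) m = 0 := by
    push Not at hj
    exact LeveledFrame.levelNorm_pi_prod_eq_zero (fun k => multiwaveletFrame (n k))
      (fun k i => hinge (n k) (j k) i)
      (fun k => coeff_multiwaveletFrame_hinge_eq_zero (Nat.lt_succ_iff.1 (hj k))) hm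
  calc (latticeFrame n).levelNorm θ m
      = (latticeFrame n).levelNorm
          (fun i => ∑ j, hingeCoeff θ j * ∏ k, hinge (n k) (j k) (i k)) m := by
        simp_rw [sum_hingeCoeff_mul_prod_hinge]
    _ ≤ ∑ j, |hingeCoeff θ j| *
          (latticeFrame n).levelNorm (fun i => ∏ k, hinge (n k) (j k) (i k)) m :=
        LeveledFrame.levelNorm_sum_le _ _ _ _ m
    _ = ∑ j with ∃ k, 2 ≤ (j k : ℕ), |hingeCoeff θ j| *
          (latticeFrame n).levelNorm (fun i => ∏ k, hinge (n k) (j k) (i k)) m := by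
        rw [sum_filter_of_ne]
        intro j _ hj
        contrapose! hj
        rw [hzero j (by push Not; exact hj), mul_zero]
    _ ≤ _ := by
        rw [V2_latExtend_eq_sum_abs_hingeCoeff hn, sum_mul]
        gcongr with j
        exact levelNorm_latticeFrame_prod_hinge_le n (fun k => j k) m

end Lattice

section Balance

open Real

lemma sum_add_one_rpow_mul_two_pow_le {p : ℝ} (hp : 0 ≤ p) (L : ℕ) :
    ∑ m ∈ range (L + 1), ((m : ℝ) + 1) ^ p * 2 ^ m ≤ ((L : ℝ) + 1) ^ p * 2 ^ (L + 1) :=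
  calc ∑ m ∈ range (L + 1), ((m : ℝ) + 1) ^ p * 2 ^ m
      ≤ ∑ m ∈ range (L + 1), ((L : ℝ) + 1) ^ p * 2 ^ m := by
        gcongr with m hm
        exact Nat.lt_succ_iff.1 (mem_range.1 hm)
    _ ≤ ((L : ℝ) + 1) ^ p * 2 ^ (L + 1) := by
        rw [← mul_sum, geom_sum_eq (by norm_num)]
        gcongr
        norm_num

lemma exists_sum_add_one_rpow_mul_pow_le {p q : ℝ} (hp : 0 ≤ p) (hq : 0 ≤ q) (hq1 : q < 1) :
    ∃ G : ℝ, 0 ≤ G ∧ ∀ L M : ℕ,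
      ∑ m ∈ Ioc L M, ((m : ℝ) + 1) ^ p * q ^ m ≤ G * (((L : ℝ) + 1) ^ p * q ^ L) := by
  set k := ⌈p⌉₊
  have hsummable : Summable fun j : ℕ => ((j + 1 : ℕ) : ℝ) ^ k * q ^ (j + 1) := by
    have hnorm : ‖q‖ < 1 := by rwa [norm_of_nonneg hq]
    have := summable_pow_mul_geometric_of_norm_lt_one (R := ℝ) k hnorm
    exact this.comp_injective Nat.succ_injective
  refine ⟨2 ^ p * ∑' j : ℕ, ((j + 1 : ℕ) : ℝ) ^ k * q ^ (j + 1), by positivity, fun L M => ?_⟩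
  have hterm (j : ℕ) : (((L + 1 + j : ℕ) : ℝ) + 1) ^ p * q ^ (L + 1 + j) ≤
      2 ^ p * (((L : ℝ) + 1) ^ p * q ^ L) * (((j + 1 : ℕ) : ℝ) ^ k * q ^ (j + 1)) := by
    have hsplit : ((L + 1 + j : ℕ) : ℝ) + 1 ≤ 2 * ((L : ℝ) + 1) * ((j + 1 : ℕ) : ℝ) := by
      push_cast
      nlinarith [(Nat.cast_nonneg L : (0 : ℝ) ≤ L), (Nat.cast_nonneg j : (0 : ℝ) ≤ j)]
    calc (((L + 1 + j : ℕ) : ℝ) + 1) ^ p * q ^ (L + 1 + j)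
        ≤ (2 * ((L : ℝ) + 1) * ((j + 1 : ℕ) : ℝ)) ^ p * q ^ (L + 1 + j) := by gcongr
      _ = 2 ^ p * ((L : ℝ) + 1) ^ p * ((j + 1 : ℕ) : ℝ) ^ p * q ^ (L + 1 + j) := by
          rw [mul_rpow (by positivity) (by positivity), mul_rpow (by positivity) (by positivity)]
      _ ≤ 2 ^ p * ((L : ℝ) + 1) ^ p * ((j + 1 : ℕ) : ℝ) ^ k * q ^ (L + 1 + j) := by
          gcongr
          rw [← rpow_natCast]
          exact rpow_le_rpow_of_exponent_le (by simp) (Nat.le_ceil p)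
      _ = _ := by ring
  calc ∑ m ∈ Ioc L M, ((m : ℝ) + 1) ^ p * q ^ m
      = ∑ j ∈ range (M - L), (((L + 1 + j : ℕ) : ℝ) + 1) ^ p * q ^ (L + 1 + j) := by
        rw [← Finset.Ico_add_one_add_one_eq_Ioc, sum_Ico_eq_sum_range, Nat.add_sub_add_right]
    _ ≤ ∑ j ∈ range (M - L),
          2 ^ p * (((L : ℝ) + 1) ^ p * q ^ L) * (((j + 1 : ℕ) : ℝ) ^ k * q ^ (j + 1)) :=
        sum_le_sum fun j _ => hterm j
    _ ≤ 2 ^ p * (((L : ℝ) + 1) ^ p * q ^ L) * ∑' j : ℕ, ((j + 1 : ℕ) : ℝ) ^ k * q ^ (j + 1) := by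
        rw [← mul_sum]
        gcongr
        exact hsummable.sum_le_tsum _ fun j _ => by positivity
    _ = _ := by ring

lemma exists_balancing_level {A : ℝ} (hA : 0 ≤ A) :
    ∃ L : ℕ, (2 : ℝ) ^ L ≤ 2 * max 1 (A ^ (2 / 5 : ℝ)) ∧
      A * (√8)⁻¹ ^ L ≤ max 1 (A ^ (2 / 5 : ℝ)) ∧ (L : ℝ) + 1 ≤ 4 * log (2 + A) := by
  set X := max 1 (A ^ (2 / 5 : ℝ))
  have hX : 1 ≤ X := le_max_left _ _
  have hAX : A ^ 2 ≤ X ^ 5 :=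
    calc A ^ 2 = (A ^ (2 / 5 : ℝ)) ^ 5 := by
          rw [← rpow_mul_natCast hA, ← rpow_natCast]
          norm_num
      _ ≤ X ^ 5 := by
          gcongr
          exact le_max_right _ _
  have hlogX : log X ≤ 2 / 5 * log (2 + A) := by
    rw [← log_rpow (by positivity)]
    refine log_le_log (by positivity) (max_le (one_le_rpow (by linarith) (by norm_num)) ?_)
    exact rpow_le_rpow hA (by linarith) (by norm_num)
  obtain ⟨k, hkX, hXk⟩ := exists_nat_pow_near hX one_lt_two
  have h2L : 2 ^ (k + 1) ≤ 2 * X := by rw [pow_succ]; linarith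
  refine ⟨k + 1, h2L, ?_, ?_⟩
  · refine le_of_sq_le_sq ?_ (by positivity)
    have hsq : (√8)⁻¹ ^ 2 = ((2 : ℝ) ^ 3)⁻¹ := by rw [inv_pow, sq_sqrt (by norm_num)]; norm_num
    calc (A * (√8)⁻¹ ^ (k + 1)) ^ 2 = A ^ 2 / (2 ^ (k + 1)) ^ 3 := by
          rw [mul_pow, pow_right_comm, hsq, inv_pow, pow_right_comm, div_eq_mul_inv]
      _ ≤ X ^ 5 / X ^ 3 := by gcongr
      _ = X ^ 2 := by field_simp
  · have hlog2 : log 2 ≤ log (2 + A) := log_le_log two_pos (by linarith)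
    have hlogL := log_le_log (by positivity) h2L
    rw [log_pow, log_mul two_ne_zero (by positivity)] at hlogL
    have := log_two_gt_d9
    push_cast at hlogL ⊢
    nlinarith

/-- The two sums are the contributions of the coarse and of the fine levels to the risk, in units
of the noise variance. -/
lemma exists_level_sum_add_sum_le {p : ℝ} (hp : 0 ≤ p) :
    ∃ C : ℝ, 0 < C ∧ ∀ A : ℝ, 0 ≤ A → ∃ L : ℕ, ∀ M : ℕ,
      ∑ m ∈ range (L + 1), ((m : ℝ) + 1) ^ p * 2 ^ m +
          A * ∑ m ∈ Ioc L M, ((m : ℝ) + 1) ^ p * (√8)⁻¹ ^ m ≤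
        C * (max 1 (A ^ (2 / 5 : ℝ)) * log (2 + A) ^ p) := by
  have hq : (√8)⁻¹ < 1 := inv_lt_one_of_one_lt₀ (lt_sqrt_of_sq_lt (by norm_num))
  obtain ⟨G, hG, hfine⟩ := exists_sum_add_one_rpow_mul_pow_le hp (by positivity) hq
  refine ⟨4 ^ p * (4 + G), by positivity, fun A hA => ?_⟩
  obtain ⟨L, hcoarse, hAL, hL⟩ := exists_balancing_level hA
  set X := max 1 (A ^ (2 / 5 : ℝ))
  have hlog : 0 ≤ log (2 + A) := log_nonneg (by linarith)
  refine ⟨L, fun M => ?_⟩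
  calc ∑ m ∈ range (L + 1), ((m : ℝ) + 1) ^ p * 2 ^ m +
        A * ∑ m ∈ Ioc L M, ((m : ℝ) + 1) ^ p * (√8)⁻¹ ^ m
      ≤ ((L : ℝ) + 1) ^ p * 2 ^ (L + 1) + A * (G * (((L : ℝ) + 1) ^ p * (√8)⁻¹ ^ L)) := by
        gcongr
        · exact sum_add_one_rpow_mul_two_pow_le hp L
        · exact hfine L M
    _ = (2 * 2 ^ L + G * (A * (√8)⁻¹ ^ L)) * ((L : ℝ) + 1) ^ p := by ring
    _ ≤ (2 * (2 * X) + G * X) * (4 * log (2 + A)) ^ p := by gcongr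
    _ = 4 ^ p * (4 + G) * (X * log (2 + A) ^ p) := by
        rw [mul_rpow zero_le_four hlog]
        ring

end Balance

section Rate

open Real

lemma rpow_four_fifths_eq {σ V N : ℝ} (hσ : 0 < σ) (hV : 0 < V) (hN : 0 < N) :
    (σ ^ 2 * V ^ (1 / 2 : ℝ) / N) ^ (4 / 5 : ℝ) =
      σ ^ 2 / N * (V * N ^ (1 / 2 : ℝ) / σ) ^ (2 / 5 : ℝ) := by
  refine log_injOn_pos (Set.mem_Ioi.2 (by positivity)) (Set.mem_Ioi.2 (by positivity)) ?_
  rw [log_mul (by positivity) (by positivity), log_rpow (by positivity), log_rpow (by positivity),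
    log_div (by positivity) (by positivity), log_div (by positivity) (by positivity),
    log_div (by positivity) (by positivity), log_mul (by positivity) (by positivity),
    log_mul (by positivity) (by positivity), log_rpow hV, log_rpow hN, log_pow]
  push_cast
  ring

lemma max_one_mul_log_rpow_le {p A : ℝ} (hp : 0 ≤ p) (hA : 0 ≤ A) :
    max 1 (A ^ (2 / 5 : ℝ)) * log (2 + A) ^ p ≤
      2 ^ p * (A ^ (2 / 5 : ℝ) * log (2 + A) ^ (6 / 5 * p) + log (2 + A) ^ (3 / 2 * p)) := by
  have hlog2 : log 2 ≤ log (2 + A) := log_le_log two_pos (by linarith)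
  have hlog : 1 ≤ 2 * log (2 + A) := by linarith [log_two_gt_d9]
  have hlog0 : 0 ≤ log (2 + A) := by linarith
  rcases le_total A 1 with hA1 | hA1
  · rw [max_eq_left (rpow_le_one hA hA1 (by norm_num)), one_mul]
    have hbound : log (2 + A) ^ p ≤ 2 ^ p * log (2 + A) ^ (3 / 2 * p) := by
      rw [← one_mul (log _ ^ p), show 3 / 2 * p = p / 2 + p by ring, rpow_add (by linarith),
        ← mul_assoc]
      gcongr
      calc (1 : ℝ) ≤ (2 * log (2 + A)) ^ (p / 2) := one_le_rpow hlog (by linarith)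
        _ = 2 ^ (p / 2) * log (2 + A) ^ (p / 2) := mul_rpow zero_le_two hlog0
        _ ≤ 2 ^ p * log (2 + A) ^ (p / 2) := by
            gcongr
            · exact one_le_two
            · linarith
    refine hbound.trans (mul_le_mul_of_nonneg_left ?_ (by positivity))
    exact le_add_of_nonneg_left (by positivity)
  · rw [max_eq_right (one_le_rpow hA1 (by norm_num))]
    have hlog1 : 1 ≤ log (2 + A) := by
      rw [le_log_iff_exp_le (by linarith)]
      linarith [exp_one_lt_d9]
    calc A ^ (2 / 5 : ℝ) * log (2 + A) ^ p ≤ A ^ (2 / 5 : ℝ) * log (2 + A) ^ (6 / 5 * p) := by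
          gcongr
          linarith
      _ ≤ A ^ (2 / 5 : ℝ) * log (2 + A) ^ (6 / 5 * p) + log (2 + A) ^ (3 / 2 * p) :=
          le_add_of_nonneg_right (by positivity)
      _ ≤ _ := le_mul_of_one_le_left (by positivity) (one_le_rpow one_le_two hp)

lemma rate_le {d : ℕ} (hd : 1 ≤ d) {C σ V N : ℝ} (hC : 0 ≤ C) (hσ : 0 < σ) (hV : 0 < V)
    (hN : 0 < N) :
    C * (σ ^ 2 / N * (max 1 ((V * √N / σ) ^ (2 / 5 : ℝ)) *
        log (2 + V * √N / σ) ^ (d - 1 / 2 : ℝ))) ≤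
      2 ^ d * C * (σ ^ 2 * V ^ (1 / 2 : ℝ) / N) ^ (4 / 5 : ℝ) *
          log (2 + V * N ^ (1 / 2 : ℝ) / σ) ^ (3 * (2 * (d : ℝ) - 1) / 5) +
        2 ^ d * C * (σ ^ 2 / N) *
          log (2 + V * N ^ (1 / 2 : ℝ) / σ) ^ (3 * (2 * (d : ℝ) - 1) / 4) +
        2 ^ d * C * (σ ^ 2 / N) * log N ^ 2 := by
  have hp : (0 : ℝ) ≤ d - 1 / 2 := by
    have : (1 : ℝ) ≤ d := mod_cast hd
    linarith
  have hpd : (2 : ℝ) ^ (d - 1 / 2 : ℝ) ≤ 2 ^ d := by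
    rw [← rpow_natCast]
    exact rpow_le_rpow_of_exponent_le one_le_two (by linarith)
  rw [rpow_four_fifths_eq hσ hV hN, sqrt_eq_rpow]
  set A := V * N ^ (1 / 2 : ℝ) / σ
  have hA : 0 ≤ A := by positivity
  have hlog : 0 ≤ log (2 + A) := log_nonneg (by linarith)
  calc C * (σ ^ 2 / N * (max 1 (A ^ (2 / 5 : ℝ)) * log (2 + A) ^ (d - 1 / 2 : ℝ)))
      ≤ C * (σ ^ 2 / N * (2 ^ d * (A ^ (2 / 5 : ℝ) * log (2 + A) ^ (6 / 5 * (d - 1 / 2 : ℝ)) +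
          log (2 + A) ^ (3 / 2 * (d - 1 / 2 : ℝ))))) := by
        refine mul_le_mul_of_nonneg_left (mul_le_mul_of_nonneg_left ?_ (by positivity)) hC
        exact (max_one_mul_log_rpow_le hp hA).trans (by gcongr)
    _ = 2 ^ d * C * (σ ^ 2 / N * A ^ (2 / 5 : ℝ)) *
          log (2 + A) ^ (3 * (2 * (d : ℝ) - 1) / 5) +
        2 ^ d * C * (σ ^ 2 / N) * log (2 + A) ^ (3 * (2 * (d : ℝ) - 1) / 4) := by
        ring_nf
    _ ≤ _ := le_add_of_nonneg_right (by positivity)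

end Rate

section Risk

open ProbabilityTheory Real
open scoped NNReal

lemma sum_sub_sq_le_two_mul_sum {ι : Type*} [Fintype ι] {θ θ' ξ : ι → ℝ}
    (h : √(∑ i, ((θ + ξ) i - θ' i) ^ 2) ≤ √(∑ i, ((θ + ξ) i - θ i) ^ 2)) :
    ∑ i, (θ' - θ) i ^ 2 ≤ 2 * ∑ i, ξ i * (θ' - θ) i := by
  rw [sqrt_le_sqrt_iff (sum_nonneg fun i _ => sq_nonneg _), ← sub_nonneg, ← sum_sub_distrib] at h
  rw [← sub_nonneg, mul_sum, ← sum_sub_distrib]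
  refine h.trans_eq (sum_congr rfl fun i _ => ?_)
  simp only [Pi.add_apply, Pi.sub_apply]
  ring

lemma pow_sub_one_mul_sqrt_eq_rpow {d : ℕ} (hd : 1 ≤ d) {x : ℝ} (hx : 0 < x) :
    x ^ (d - 1) * √x = x ^ (d - 1 / 2 : ℝ) := by
  rw [sqrt_eq_rpow, ← rpow_natCast, ← rpow_add hx, Nat.cast_sub hd]
  congr 1
  push_cast
  ring

lemma count_latticeFrame_le_rpow {d : ℕ} (hd : 1 ≤ d) (n : Fin d → ℕ) (m : ℕ) :
    ((latticeFrame n).count m : ℝ) ≤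
      d * 12 ^ d * (((m : ℝ) + 1) ^ (d - 1 / 2 : ℝ) * 2 ^ m) := by
  have hd' : (1 : ℝ) ≤ d := mod_cast hd
  calc ((latticeFrame n).count m : ℝ) ≤ 2 ^ d * (m + 1) ^ (d - 1) * 2 ^ m :=
        count_latticeFrame_le n m
    _ ≤ (1 * 12 ^ d) * ((m + 1) ^ (d - 1) * √(m + 1)) * 2 ^ m := by
        gcongr
        · rw [one_mul]
          gcongr
          norm_num
        · exact le_mul_of_one_le_right (by positivity) (one_le_sqrt.2 (by simp))
    _ ≤ d * 12 ^ d * (((m : ℝ) + 1) ^ (d - 1 / 2 : ℝ) * 2 ^ m) := by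
        rw [pow_sub_one_mul_sqrt_eq_rpow hd (by positivity), mul_assoc (_ * _)]
        gcongr

variable {d : ℕ} {n : Fin d → ℕ} {σ : ℝ≥0} {μ : Measure ((∀ k, Fin (n k)) → ℝ)}
  [IsProbabilityMeasure μ]

lemma lintegral_sum_sq_le_of_V2_le (hd : 1 ≤ d) (hn : ∀ k, 2 ≤ n k)
    (hμ : IsSubgaussianVector (σ ^ 2) μ)
    {Y : ((∀ k, Fin (n k)) → ℝ) → (∀ k, Fin (n k)) → ℝ}
    (hY : ∀ ξ, ∑ i, Y ξ i ^ 2 ≤ 2 * ∑ i, ξ i * Y ξ i)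
    {W : ℝ} (hW0 : 0 ≤ W) (hW : ∀ ξ, V2 d n (latExtend d n (Y ξ)) ≤ W) (L : ℕ) :
    ∫⁻ ξ, ENNReal.ofReal (∑ i, Y ξ i ^ 2) ∂μ ≤
      ENNReal.ofReal (12 * d * 12 ^ d *
        (σ ^ 2 * ∑ m ∈ range (L + 1), ((m : ℝ) + 1) ^ (d - 1 / 2 : ℝ) * 2 ^ m +
          σ * W * √(∏ k, (n k : ℝ)) *
            ∑ m ∈ Ioc L (latticeFrame n).depth,
              ((m : ℝ) + 1) ^ (d - 1 / 2 : ℝ) * (√8)⁻¹ ^ m)) := by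
  set F := latticeFrame n
  set N := ∏ k, (n k : ℝ)
  have hlevel (ξ) (m : ℕ) (hm : L < m) :
      F.levelNorm (Y ξ) m ≤ W * (12 ^ d * √N * (m + 1) ^ (d - 1) * (√8)⁻¹ ^ m) :=
    (levelNorm_latticeFrame_le hn (Y ξ) (Nat.ne_zero_of_lt hm)).trans (by gcongr; exact hW ξ)
  refine (F.lintegral_sum_sq_le hμ hY hlevel).trans (ENNReal.ofReal_le_ofReal ?_)
  have hfine (m : ℕ) : √(2 * (σ ^ 2 : ℝ≥0) * log (2 * F.count m)) *
      (W * (12 ^ d * √N * (m + 1) ^ (d - 1) * (√8)⁻¹ ^ m)) ≤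
      2 * (d * 12 ^ d * (σ * W * √N)) * (((m : ℝ) + 1) ^ (d - 1 / 2 : ℝ) * (√8)⁻¹ ^ m) :=
    calc _ ≤ 2 * d * σ * √(m + 1) * (W * (12 ^ d * √N * (m + 1) ^ (d - 1) * (√8)⁻¹ ^ m)) := by
          gcongr
          exact sqrt_log_two_mul_count_latticeFrame_le hd n σ m
      _ = _ := by
          rw [← pow_sub_one_mul_sqrt_eq_rpow hd (by positivity)]
          ring
  set S := ∑ m ∈ Ioc L F.depth, ((m : ℝ) + 1) ^ (d - 1 / 2 : ℝ) * (√8)⁻¹ ^ m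
  set T := ∑ m ∈ range (L + 1), ((m : ℝ) + 1) ^ (d - 1 / 2 : ℝ) * 2 ^ m
  calc _ ≤ 12 * (σ ^ 2 : ℝ≥0) * (d * 12 ^ d * T) +
        4 * (2 * (d * 12 ^ d * (σ * W * √N)) * S) := by
        rw [mul_sum (a := (d * 12 ^ d : ℝ)), mul_sum (a := 2 * (d * 12 ^ d * (σ * W * √N)))]
        exact add_le_add
          (mul_le_mul_of_nonneg_left (sum_le_sum fun m _ => count_latticeFrame_le_rpow hd n m)
            (by positivity))
          (mul_le_mul_of_nonneg_left (sum_le_sum fun m _ => hfine m) (by positivity))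
    _ = 12 * d * 12 ^ d * (σ ^ 2 * T) + 8 * (d * 12 ^ d * (σ * W * √N) * S) := by
        push_cast
        ring
    _ ≤ 12 * d * 12 ^ d * (σ ^ 2 * T) + 12 * (d * 12 ^ d * (σ * W * √N) * S) := by
        gcongr
        norm_num
    _ = _ := by ring

lemma gaussPi_coe_eq_pi_gaussianReal (d : ℕ) (n : Fin d → ℕ) (σ : ℝ≥0) :
    gaussPi d n σ = Measure.pi fun _ => gaussianReal 0 (σ ^ 2) := rfl

theorem statement1_general (d : ℕ) (hd : 1 ≤ d) :
    ∃ C : ℝ, 0 < C ∧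
      ∀ n : Fin d → ℕ, (∀ k, 2 ≤ n k) →
      ∀ (σ : ℝ≥0) (V : ℝ), 0 < σ → 0 ≤ V →
      ∀ (μ : Measure ((∀ k, Fin (n k)) → ℝ)) [IsProbabilityMeasure μ],
        IsSubgaussianVector (σ ^ 2) μ →
      ∀ θstar ∈ Cset d n V,
      ∀ θhat : ((∀ k, Fin (n k)) → ℝ) → (∀ k, Fin (n k)) → ℝ,
        (∀ y, θhat y ∈ Cset d n V ∧
          √(∑ i, (y i - θhat y i) ^ 2) ≤ √(∑ i, (y i - θstar i) ^ 2)) →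
      ∫⁻ ξ, ENNReal.ofReal ((∏ k, (n k : ℝ))⁻¹ *
          ∑ i, (θhat (θstar + ξ) i - θstar i) ^ 2) ∂μ ≤
        ENNReal.ofReal (C * (σ ^ 2 / (∏ k, (n k : ℝ)) *
          (max 1 ((V * √(∏ k, (n k : ℝ)) / σ) ^ (2 / 5 : ℝ)) *
            Real.log (2 + V * √(∏ k, (n k : ℝ)) / σ) ^ (d - 1 / 2 : ℝ)))) := by
  have hd' : (1 : ℝ) ≤ d := mod_cast hd
  obtain ⟨C, hC, hlevel⟩ := exists_level_sum_add_sum_le (p := d - 1 / 2) (by linarith)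
  refine ⟨24 * d * 12 ^ d * C, by positivity, fun n hn σ V hσ hV μ _ hμ θstar hstar θhat hθ => ?_⟩
  set N := ∏ k, (n k : ℝ)
  set A := V * √N / σ with hA_def
  have hN : 0 < N := prod_pos fun k _ => Nat.cast_pos.2 (by linarith [hn k])
  obtain ⟨L, hL⟩ := hlevel A (by positivity)
  specialize hL (latticeFrame n).depth
  set T := ∑ m ∈ range (L + 1), ((m : ℝ) + 1) ^ (d - 1 / 2 : ℝ) * 2 ^ m
  set S := ∑ m ∈ Ioc L (latticeFrame n).depth, ((m : ℝ) + 1) ^ (d - 1 / 2 : ℝ) * (√8)⁻¹ ^ m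
  have hV2 (ξ) : V2 d n (latExtend d n (θhat (θstar + ξ) - θstar)) ≤ 2 * V :=
    (V2_latExtend_sub_le hn _ _).trans ((add_le_add (hθ _).1 hstar).trans_eq (two_mul V).symm)
  have hrisk := lintegral_sum_sq_le_of_V2_le hd hn hμ
    (fun ξ => sum_sub_sq_le_two_mul_sum (hθ (θstar + ξ)).2) (by positivity) hV2 L
  simp only [Pi.sub_apply] at hrisk
  simp_rw [ENNReal.ofReal_mul (inv_nonneg.2 hN.le)]
  rw [lintegral_const_mul' _ _ ENNReal.ofReal_ne_top]
  grw [hrisk]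
  rw [← ENNReal.ofReal_mul (inv_nonneg.2 hN.le)]
  refine ENNReal.ofReal_le_ofReal ?_
  calc N⁻¹ * (12 * d * 12 ^ d * (σ ^ 2 * T + σ * (2 * V) * √N * S))
      ≤ N⁻¹ * (12 * d * 12 ^ d * (2 * σ ^ 2 * T + σ * (2 * V) * √N * S)) := by
        gcongr
        linarith [sq_nonneg (σ : ℝ)]
    _ = 24 * d * 12 ^ d * (σ ^ 2 / N) * (T + A * S) := by
        rw [hA_def]
        field_simp
        ring
    _ ≤ 24 * d * 12 ^ d * (σ ^ 2 / N) *
          (C * (max 1 (A ^ (2 / 5 : ℝ)) * Real.log (2 + A) ^ (d - 1 / 2 : ℝ))) := by gcongr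
    _ = _ := by ring

end Risk

/-- Risk bound for the constrained least-squares (projection) estimator
onto `C(V)` on the equally spaced lattice design, for `θ* ∈ C(V)`. -/
theorem statement1 (d : ℕ) (hd : 1 ≤ d) :
    ∃ C : ℝ, 0 < C ∧
      ∀ n : Fin d → ℕ, (∀ k, 2 ≤ n k) →
      ∀ σ V : ℝ, 0 < σ → 0 < V →
      ∀ θstar : (∀ k : Fin d, Fin (n k)) → ℝ, θstar ∈ Cset d n V →
      ∀ θhat : ((∀ k : Fin d, Fin (n k)) → ℝ) → (∀ k : Fin d, Fin (n k)) → ℝ,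
        (∀ y, θhat y ∈ Cset d n V ∧
          ∀ θ ∈ Cset d n V,
            Real.sqrt (∑ i, (y i - θhat y i) ^ 2) ≤
              Real.sqrt (∑ i, (y i - θ i) ^ 2)) →
      (∫⁻ ξ, ENNReal.ofReal ((∏ k, (n k : ℝ))⁻¹ *
            ∑ i, (θhat (θstar + ξ) i - θstar i) ^ 2) ∂(gaussPi d n σ)) ≤
        ENNReal.ofReal
          (C * (σ ^ 2 * V ^ ((1 : ℝ) / 2) / ∏ k, (n k : ℝ)) ^ ((4 : ℝ) / 5) *
              Real.log (2 + V * (∏ k, (n k : ℝ)) ^ ((1 : ℝ) / 2) / σ) ^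
                (3 * (2 * (d : ℝ) - 1) / 5) +
            C * (σ ^ 2 / ∏ k, (n k : ℝ)) *
              Real.log (2 + V * (∏ k, (n k : ℝ)) ^ ((1 : ℝ) / 2) / σ) ^
                (3 * (2 * (d : ℝ) - 1) / 4) +
            C * (σ ^ 2 / ∏ k, (n k : ℝ)) * Real.log (∏ k, (n k : ℝ)) ^ 2) := by
  obtain ⟨C, hC, h⟩ := statement1_general d hd
  refine ⟨2 ^ d * C, by positivity, fun n hn σ V hσ hV θstar hstar θhat hθ => ?_⟩
  have hN : 0 < ∏ k, (n k : ℝ) := prod_pos fun k _ => Nat.cast_pos.2 (by linarith [hn k])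
  lift σ to NNReal using hσ.le
  rw [gaussPi_coe_eq_pi_gaussianReal]
  exact (h n hn σ V (mod_cast hσ) hV.le _ (isSubgaussianVector_pi_gaussianReal _) θstar hstar θhat
    fun y => ⟨(hθ y).1, (hθ y).2 θstar hstar⟩).trans
    (ENNReal.ofReal_le_ofReal (rate_le hd hC.le hσ hV hN))
end

section
/- For every integer d ≥ 1 and every 0 < b ≤ 1 there exist a constant C_{b,d} > 0 depending only on b and d, and a function c : (0,∞) → (0,∞) depending only on b and d, such that the following holds. For all integers n₁,…,n_d ≥ 2 with min_j n_j ≥ b·n^{1/d}, all σ > 0 and V > 0 with n ≥ c(σ²/V²), and every Borel-measurable map T : ℝ^{I₀} → ℝ^{I₀}, there exists θ* ∈ C(V) with ∫ (1/n)·‖T(θ* + ξ) − θ*‖₂² dμ_σ(ξ) ≥ C_{b,d}·(σ²V^{1/2}/n)^{4/5}·(log(V·n^{1/2}/σ))^{4(d−1)/5} (the integral taken in [0,∞]). -/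
open Finset MeasureTheory

/-!
Assouad's lemma is applied to the vertices `∑ p, ± a • w p`, where `w p` is a tensor product of
cosine waves and the frequency vector `p` ranges over a hyperbolic cross `∏ k, p k ≤ R`. Each
one-dimensional wave combines two cosine modes so as to vanish at `0` and `1`; this kills every term
of `V₂` except the one with `β = (2, …, 2)`. The second differences of the waves are again
orthogonal, so by Cauchy–Schwarz that term is at most a constant times `a * R ^ 2 * √K`, where `K`
is the number of frequencies, uniformly in the signs. The logarithm in the rate comes from `K`,
which is of order `R * log R ^ (d - 1)`.
-/

section Gaussian

open ProbabilityTheory Matrix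
open scoped NNReal ENNReal

lemma pi_withDensity {ι : Type*} [Fintype ι] {α : ι → Type*} [∀ i, MeasurableSpace (α i)]
    (μ : ∀ i, Measure (α i)) [∀ i, IsProbabilityMeasure (μ i)] {f : ∀ i, α i → ℝ≥0∞}
    (hf : ∀ i, Measurable (f i)) [∀ i, SigmaFinite ((μ i).withDensity (f i))] :
    Measure.pi (fun i => (μ i).withDensity (f i)) =
      (Measure.pi μ).withDensity fun x => ∏ i, f i (x i) := by
  refine Measure.pi_eq fun s hs => ?_
  have hindicator (x : ∀ i, α i) :
      (Set.univ.pi s).indicator (fun x => ∏ i, f i (x i)) x = ∏ i, (s i).indicator (f i) (x i) := by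
    by_cases hx : x ∈ Set.univ.pi s
    · rw [Set.indicator_of_mem hx]
      exact prod_congr rfl fun i _ => (Set.indicator_of_mem (hx i (Set.mem_univ i)) _).symm
    · obtain ⟨i, hi⟩ : ∃ i, x i ∉ s i := by simpa [Set.mem_pi] using hx
      rw [Set.indicator_of_notMem hx]
      exact (prod_eq_zero (mem_univ i) (Set.indicator_of_notMem hi _)).symm
  have hmeas (i : ι) : Measurable ((s i).indicator (f i)) := (hf i).indicator (hs i)
  rw [withDensity_apply _ (.univ_pi hs), ← lintegral_indicator (.univ_pi hs),
    lintegral_congr hindicator,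
    lintegral_prod_eq_prod_lintegral_of_indepFun univ
      (fun i (x : ∀ i, α i) => (s i).indicator (f i) (x i))
      (iIndepFun_pi fun i => (hmeas i).aemeasurable)
      fun i => (hmeas i).comp (measurable_pi_apply i)]
  refine prod_congr rfl fun i _ => ?_
  rw [withDensity_apply _ (hs i), ← lintegral_indicator (hs i)]
  exact (measurePreserving_eval μ i).lintegral_comp (hmeas i)

lemma gaussianReal_map_add_const_eq_withDensity {v : ℝ≥0} (hv : v ≠ 0) (h : ℝ) :
    (gaussianReal 0 v).map (· + h) =
      (gaussianReal 0 v).withDensity fun x =>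
        ENNReal.ofReal (Real.exp (h * x / v - h * h / (2 * v))) := by
  rw [gaussianReal_map_add_const, gaussianReal_of_var_ne_zero _ hv,
    gaussianReal_of_var_ne_zero _ hv,
    ← withDensity_mul _ (measurable_gaussianPDF _ _) (by fun_prop)]
  congr 1
  funext x
  simp only [Pi.mul_apply, gaussianPDF, gaussianPDFReal]
  rw [← ENNReal.ofReal_mul (by positivity), mul_assoc _ (Real.exp _) (Real.exp _), ← Real.exp_add]
  congr 3
  field_simp
  ring

/-- The law of white noise with variance `v` in each of the coordinates `J`. -/
noncomputable abbrev gaussNoise (J : Type*) [Fintype J] (v : ℝ≥0) : Measure (J → ℝ) :=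
  Measure.pi fun _ => gaussianReal 0 v

variable {J : Type*} [Fintype J] {v : ℝ≥0}

/-- The Cameron–Martin density of `h + ξ` with respect to `ξ`, for white noise `ξ` of
variance `v`. -/
noncomputable def cameronMartin (v : ℝ≥0) (h x : J → ℝ) : ℝ :=
  Real.exp (h ⬝ᵥ x / v - h ⬝ᵥ h / (2 * v))

@[fun_prop]
lemma measurable_cameronMartin (h : J → ℝ) : Measurable (cameronMartin v h) := by
  unfold cameronMartin dotProduct
  fun_prop

lemma cameronMartin_mul_neg (h x : J → ℝ) :
    cameronMartin v h x * cameronMartin v (-h) x = Real.exp (-(h ⬝ᵥ h / v)) := by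
  rw [cameronMartin, cameronMartin, ← Real.exp_add, neg_dotProduct, neg_dotProduct_neg]
  congr 1
  ring

lemma gaussNoise_map_add_const (hv : v ≠ 0) (h : J → ℝ) :
    (gaussNoise J v).map (· + h) =
      (gaussNoise J v).withDensity fun x => ENNReal.ofReal (cameronMartin v h x) := by
  have hshift (i : J) := gaussianReal_map_add_const_eq_withDensity hv (h i)
  have hprob (i : J) : IsProbabilityMeasure ((gaussianReal 0 v).map (· + h i)) := by
    rw [gaussianReal_map_add_const]; infer_instance
  have (i : J) := hshift i ▸ hprob i
  have hmap : (gaussNoise J v).map (· + h) =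
      Measure.pi fun i => (gaussianReal 0 v).map (· + h i) :=
    Measure.pi_map_pi (f := fun i x => x + h i) fun i => by fun_prop
  rw [hmap]
  simp_rw [hshift]
  rw [pi_withDensity _ fun i => by fun_prop]
  congr 1
  funext x
  rw [← ENNReal.ofReal_prod_of_nonneg fun i _ => (Real.exp_pos _).le, ← Real.exp_sum,
    sum_sub_distrib, ← sum_div, ← sum_div]
  rfl

lemma lintegral_gaussNoise_add_const (hv : v ≠ 0) (h : J → ℝ) {f : (J → ℝ) → ℝ≥0∞}
    (hf : Measurable f) :
    ∫⁻ ξ, f (ξ + h) ∂gaussNoise J v =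
      ∫⁻ ξ, ENNReal.ofReal (cameronMartin v h ξ) * f ξ ∂gaussNoise J v := by
  rw [← lintegral_map hf (measurable_add_const h), gaussNoise_map_add_const hv,
    lintegral_withDensity_eq_lintegral_mul _ (by fun_prop) hf]
  rfl

lemma lintegral_cameronMartin (hv : v ≠ 0) (h : J → ℝ) :
    ∫⁻ ξ, ENNReal.ofReal (cameronMartin v h ξ) ∂gaussNoise J v = 1 := by
  simpa using (lintegral_gaussNoise_add_const hv h measurable_one).symm

end Gaussian

section TwoPoint

open ProbabilityTheory Matrix
open scoped NNReal ENNReal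

-- The weighted sum of squares is at least `4τ²xy/(x+y)`, and `4/z ≥ 4 - z` for `z = x + y`.
lemma four_mul_le_weighted_sq_add {x y c : ℝ} (hx : 0 < x) (hy : 0 < y) (hc : 0 ≤ c)
    (hxy : c ≤ x * y) (s τ : ℝ) :
    4 * (τ ^ 2 * c) ≤ x * (s - τ) ^ 2 + y * (s + τ) ^ 2 + τ ^ 2 * c * (x + y) := by
  have hsq : 4 * τ ^ 2 * (x * y) ≤ (x * (s - τ) ^ 2 + y * (s + τ) ^ 2) * (x + y) := by
    linarith [sq_nonneg (x * (s - τ) + y * (s + τ))]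
  have hlow : 4 * τ ^ 2 * c ≤ 4 * τ ^ 2 * (x * y) := by gcongr
  have hκ : 0 ≤ τ ^ 2 * c * (x + y - 2) ^ 2 := by positivity
  refine le_of_mul_le_mul_right ?_ (add_pos hx hy)
  linarith

lemma ofReal_le_lintegral_sq_add_lintegral_sq {Ω : Type*} [MeasurableSpace Ω] {P : Measure Ω}
    [IsProbabilityMeasure P] {f g t : Ω → ℝ} (hf : Measurable f) (hg : Measurable g)
    (ht : Measurable t) (hf0 : ∀ ω, 0 < f ω) (hg0 : ∀ ω, 0 < g ω)
    (hf1 : ∫⁻ ω, ENNReal.ofReal (f ω) ∂P ≤ 1) (hg1 : ∫⁻ ω, ENNReal.ofReal (g ω) ∂P ≤ 1)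
    {c : ℝ} (hc : 0 ≤ c) (hfg : ∀ ω, c ≤ f ω * g ω) (τ : ℝ) :
    ENNReal.ofReal (2 * (τ ^ 2 * c)) ≤
      ∫⁻ ω, ENNReal.ofReal (f ω) * ENNReal.ofReal ((t ω - τ) ^ 2) ∂P +
        ∫⁻ ω, ENNReal.ofReal (g ω) * ENNReal.ofReal ((t ω + τ) ^ 2) ∂P := by
  set I := ∫⁻ ω, ENNReal.ofReal (f ω) * ENNReal.ofReal ((t ω - τ) ^ 2) ∂P +
    ∫⁻ ω, ENNReal.ofReal (g ω) * ENNReal.ofReal ((t ω + τ) ^ 2) ∂P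
  set κ := ENNReal.ofReal (τ ^ 2 * c)
  have hpointwise (ω : Ω) : 4 * κ ≤
      ENNReal.ofReal (f ω) * ENNReal.ofReal ((t ω - τ) ^ 2) +
        ENNReal.ofReal (g ω) * ENNReal.ofReal ((t ω + τ) ^ 2) +
        κ * (ENNReal.ofReal (f ω) + ENNReal.ofReal (g ω)) := by
    have hfω := (hf0 ω).le
    have hgω := (hg0 ω).le
    rw [show (4 : ℝ≥0∞) = ENNReal.ofReal 4 by simp, ← ENNReal.ofReal_mul (by norm_num),
      ← ENNReal.ofReal_mul hfω, ← ENNReal.ofReal_mul hgω,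
      ← ENNReal.ofReal_add (by positivity) (by positivity), ← ENNReal.ofReal_add hfω hgω,
      ← ENNReal.ofReal_mul (by positivity), ← ENNReal.ofReal_add (by positivity) (by positivity)]
    exact ENNReal.ofReal_le_ofReal
      (four_mul_le_weighted_sq_add (hf0 ω) (hg0 ω) hc (hfg ω) (t ω) τ)
  have hintegral : 2 * κ + 2 * κ ≤ I + 2 * κ := by
    calc 2 * κ + 2 * κ = ∫⁻ _, 4 * κ ∂P := by
          rw [lintegral_const, measure_univ, mul_one, ← add_mul]; norm_num
      _ ≤ _ := lintegral_mono hpointwise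
      _ = I + κ * (∫⁻ ω, ENNReal.ofReal (f ω) ∂P + ∫⁻ ω, ENNReal.ofReal (g ω) ∂P) := by
          rw [lintegral_add_right _ (by fun_prop), lintegral_add_right _ (by fun_prop),
            lintegral_const_mul _ (by fun_prop), lintegral_add_right _ (by fun_prop)]
      _ ≤ I + κ * (1 + 1) := by gcongr
      _ = I + 2 * κ := by rw [one_add_one_eq_two, mul_comm κ]
  rw [ENNReal.ofReal_mul zero_le_two, ENNReal.ofReal_ofNat]
  exact (ENNReal.add_le_add_iff_right (by finiteness)).1 hintegral

variable {J : Type*} [Fintype J] {v : ℝ≥0}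

/-- The mean squared error of the statistic `t`, evaluated at the signal `θ` plus white noise of
variance `v`, as an estimate of the number `τ`. -/
noncomputable def sqRisk (v : ℝ≥0) (t : (J → ℝ) → ℝ) (θ : J → ℝ) (τ : ℝ) : ℝ≥0∞ :=
  ∫⁻ ξ, ENNReal.ofReal ((t (θ + ξ) - τ) ^ 2) ∂gaussNoise J v

lemma sqRisk_add_eq_lintegral (hv : v ≠ 0) {t : (J → ℝ) → ℝ} (ht : Measurable t) (m h : J → ℝ)
    (τ : ℝ) :
    sqRisk v t (m + h) τ = ∫⁻ ξ, ENNReal.ofReal (cameronMartin v h ξ) *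
      ENNReal.ofReal ((t (m + ξ) - τ) ^ 2) ∂gaussNoise J v := by
  rw [← lintegral_gaussNoise_add_const hv h
    (f := fun ξ => ENNReal.ofReal ((t (m + ξ) - τ) ^ 2)) (by fun_prop)]
  simp only [sqRisk, add_assoc, add_comm h]

lemma ofReal_le_sqRisk_add_sqRisk (hv : v ≠ 0) {h : J → ℝ} (hh : h ⬝ᵥ h ≤ v)
    {t : (J → ℝ) → ℝ} (ht : Measurable t) (m : J → ℝ) (τ : ℝ) :
    ENNReal.ofReal (2 * (τ ^ 2 * Real.exp (-1))) ≤
      sqRisk v t (m + h) τ + sqRisk v t (m - h) (-τ) := by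
  rw [sub_eq_add_neg, sqRisk_add_eq_lintegral hv ht, sqRisk_add_eq_lintegral hv ht]
  simp only [sub_neg_eq_add]
  refine ofReal_le_lintegral_sq_add_lintegral_sq (measurable_cameronMartin h)
    (measurable_cameronMartin (-h)) (t := fun ξ => t (m + ξ)) (by fun_prop)
    (fun _ => Real.exp_pos _) (fun _ => Real.exp_pos _) (lintegral_cameronMartin hv h).le
    (lintegral_cameronMartin hv (-h)).le (Real.exp_pos _).le (fun ξ => ?_) τ
  rw [cameronMartin_mul_neg, Real.exp_le_exp, neg_le_neg_iff]
  exact div_le_one_of_le₀ hh v.coe_nonneg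

end TwoPoint

section Assouad

open ProbabilityTheory Matrix
open scoped NNReal ENNReal

variable {ι J : Type*} [Fintype ι]

/-- The vertex with signs `ε` of the hypercube spanned by the directions `u p`. -/
def hypercubePoint (u : ι → J → ℝ) (ε : ι → ℤˣ) : J → ℝ := ∑ p, ((ε p : ℤ) : ℝ) • u p

lemma hypercubePoint_update_neg [DecidableEq ι] (u : ι → J → ℝ) (ε : ι → ℤˣ) (p : ι) :
    hypercubePoint u (Function.update ε p (-ε p)) =
      hypercubePoint u ε - (2 * ((ε p : ℤ) : ℝ)) • u p := by
  simp only [hypercubePoint]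
  rw [← add_sum_erase _ _ (mem_univ p), ← add_sum_erase _ (fun q => ((ε q : ℤ) : ℝ) • u q)
    (mem_univ p), sum_congr rfl fun q hq => by rw [Function.update_of_ne (ne_of_mem_erase hq)]]
  rw [Function.update_self]
  simp only [Units.val_neg, Int.cast_neg]
  module

variable [Fintype J]

lemma sum_smul_dotProduct_sum_smul {u : ι → J → ℝ} (hu : Pairwise fun p q => u p ⬝ᵥ u q = 0)
    (a c : ι → ℝ) :
    (∑ p, a p • u p) ⬝ᵥ (∑ p, c p • u p) = ∑ p, a p * c p * (u p ⬝ᵥ u p) := by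
  rw [sum_dotProduct]
  refine sum_congr rfl fun p _ => ?_
  rw [dotProduct_sum, sum_eq_single_of_mem p (mem_univ p) fun q _ hq => ?_]
  · simp [mul_assoc, mul_left_comm]
  · simp [hu hq.symm]

lemma sum_sq_dotProduct_div_le {u : ι → J → ℝ} (hu : Pairwise fun p q => u p ⬝ᵥ u q = 0)
    (x : J → ℝ) :
    ∑ p, (x ⬝ᵥ u p) ^ 2 / (u p ⬝ᵥ u p) ≤ x ⬝ᵥ x := by
  set a : ι → ℝ := fun p => x ⬝ᵥ u p / (u p ⬝ᵥ u p) with ha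
  set y := ∑ p, a p • u p with hy
  have hterm (p : ι) : a p * a p * (u p ⬝ᵥ u p) = (x ⬝ᵥ u p) ^ 2 / (u p ⬝ᵥ u p) := by
    rcases eq_or_ne (u p ⬝ᵥ u p) 0 with h | h
    · simp [h]
    · simp only [ha]; field_simp
  have hyy : y ⬝ᵥ y = ∑ p, (x ⬝ᵥ u p) ^ 2 / (u p ⬝ᵥ u p) := by
    simp only [hy, sum_smul_dotProduct_sum_smul hu, hterm]
  have hxy : x ⬝ᵥ y = ∑ p, (x ⬝ᵥ u p) ^ 2 / (u p ⬝ᵥ u p) := by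
    rw [hy, dotProduct_sum]
    refine sum_congr rfl fun p _ => ?_
    rw [dotProduct_smul, smul_eq_mul]
    ring
  have hresidual : 0 ≤ (x - y) ⬝ᵥ (x - y) := by
    simpa using dotProduct_star_self_nonneg (x - y)
  rw [sub_dotProduct, dotProduct_sub, dotProduct_sub, dotProduct_comm y x, hxy, hyy] at hresidual
  linarith

lemma intUnit_cast_sq (s : ℤˣ) : ((s : ℤ) : ℝ) ^ 2 = 1 := by
  rcases Int.units_eq_one_or s with rfl | rfl <;> simp

lemma hypercubePoint_dotProduct {u : ι → J → ℝ} (hu : Pairwise fun p q => u p ⬝ᵥ u q = 0)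
    (ε : ι → ℤˣ) (p : ι) : hypercubePoint u ε ⬝ᵥ u p = (ε p : ℤ) * (u p ⬝ᵥ u p) := by
  rw [hypercubePoint, sum_dotProduct, sum_eq_single_of_mem p (mem_univ p) fun q _ hq => ?_]
  · simp
  · simp [hu hq]

lemma sum_sq_hypercubePoint {J : Type*} {u : ι → J → ℝ} {B : Finset J}
    (hu : Pairwise fun p q => ∑ i ∈ B, u p i * u q i = 0) (ε : ι → ℤˣ) :
    ∑ i ∈ B, hypercubePoint u ε i ^ 2 = ∑ p, ∑ i ∈ B, u p i ^ 2 := by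
  let w : ι → B → ℝ := fun p i => u p i
  have hw (p q : ι) : w p ⬝ᵥ w q = ∑ i ∈ B, u p i * u q i := sum_coe_sort B fun i => u p i * u q i
  have hparseval : hypercubePoint w ε ⬝ᵥ hypercubePoint w ε = ∑ p, w p ⬝ᵥ w p := by
    simp only [hypercubePoint, ← sq, intUnit_cast_sq, one_mul,
      sum_smul_dotProduct_sum_smul fun p q hpq => (hw p q).trans (hu hpq)]
  have hrestrict (i : B) : hypercubePoint w ε i = hypercubePoint u ε i := by
    simp only [hypercubePoint, Finset.sum_apply, Pi.smul_apply, w]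
  simp only [hw, ← sq] at hparseval
  rw [← hparseval, dotProduct, ← sum_coe_sort]
  simp only [hrestrict, sq]

variable {v : ℝ≥0} {u : ι → J → ℝ}

lemma card_mul_ofReal_le_sum_sqRisk [DecidableEq ι] (hv : v ≠ 0) {p : ι} (hup : u p ⬝ᵥ u p ≤ v)
    {t : (J → ℝ) → ℝ} (ht : Measurable t) (τ : ℝ) :
    Fintype.card (ι → ℤˣ) * ENNReal.ofReal (τ ^ 2 * Real.exp (-1)) ≤
      ∑ ε, sqRisk v t (hypercubePoint u ε) ((ε p : ℤ) * τ) := by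
  set r : (ι → ℤˣ) → ℝ≥0∞ := fun ε => sqRisk v t (hypercubePoint u ε) ((ε p : ℤ) * τ)
  set flip : (ι → ℤˣ) → ι → ℤˣ := fun ε => Function.update ε p (-ε p) with hflip
  have hflip_invol : Function.Involutive flip := fun ε => by simp [hflip]
  have hpair (ε : ι → ℤˣ) :
      2 * ENNReal.ofReal (τ ^ 2 * Real.exp (-1)) ≤ r ε + r (flip ε) := by
    set s := ((ε p : ℤ) : ℝ) with hs
    have hs2 : s ^ 2 = 1 := intUnit_cast_sq (ε p)
    have hh : (s • u p) ⬝ᵥ (s • u p) ≤ v := by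
      rwa [smul_dotProduct, dotProduct_smul, smul_smul, ← sq, hs2, one_smul]
    have hrisk := ofReal_le_sqRisk_add_sqRisk hv hh ht (hypercubePoint u ε - s • u p) (s * τ)
    rw [mul_pow, hs2, one_mul, ENNReal.ofReal_mul zero_le_two, ENNReal.ofReal_ofNat,
      sub_add_cancel, sub_sub, ← two_smul ℝ (s • u p), smul_smul,
      ← hypercubePoint_update_neg] at hrisk
    simpa [r, flip, ← hs] using hrisk
  have hsum : 2 * (Fintype.card (ι → ℤˣ) * ENNReal.ofReal (τ ^ 2 * Real.exp (-1))) ≤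
      2 * ∑ ε, r ε := by
    calc _ = ∑ _ε : ι → ℤˣ, 2 * ENNReal.ofReal (τ ^ 2 * Real.exp (-1)) := by
          rw [sum_const, nsmul_eq_mul, card_univ, mul_left_comm]
      _ ≤ ∑ ε, (r ε + r (flip ε)) := sum_le_sum fun ε _ => hpair ε
      _ = 2 * ∑ ε, r ε := by
          rw [sum_add_distrib, hflip_invol.bijective.sum_comp r, two_mul]
  exact (ENNReal.mul_le_mul_iff_right two_ne_zero ENNReal.ofNat_ne_top).1 hsum

lemma sum_mul_sqRisk_le (hu : Pairwise fun p q => u p ⬝ᵥ u q = 0)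
    {T : (J → ℝ) → J → ℝ} (hT : Measurable T) (θ : J → ℝ) :
    ∑ p, ENNReal.ofReal (u p ⬝ᵥ u p)⁻¹ * sqRisk v (fun x => T x ⬝ᵥ u p) θ (θ ⬝ᵥ u p) ≤
      ∫⁻ ξ, ENNReal.ofReal ((T (θ + ξ) - θ) ⬝ᵥ (T (θ + ξ) - θ)) ∂gaussNoise J v := by
  have hmeas (p : ι) : Measurable fun ξ => T (θ + ξ) ⬝ᵥ u p := by
    unfold dotProduct; fun_prop
  have hnonneg (p : ι) : 0 ≤ (u p ⬝ᵥ u p)⁻¹ :=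
    inv_nonneg.2 (by simpa using dotProduct_star_self_nonneg (u p))
  simp only [sqRisk]
  simp_rw [← lintegral_const_mul _ (((hmeas _).sub_const _).pow_const 2).ennreal_ofReal]
  rw [← lintegral_finsetSum _ fun p _ => by fun_prop]
  refine lintegral_mono fun ξ => ?_
  simp_rw [← ENNReal.ofReal_mul (hnonneg _), ← sub_dotProduct]
  rw [← ENNReal.ofReal_sum_of_nonneg fun p _ => mul_nonneg (hnonneg p) (sq_nonneg _)]
  refine ENNReal.ofReal_le_ofReal ((sum_congr rfl fun p _ => ?_).trans_le
    (sum_sq_dotProduct_div_le hu _))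
  rw [div_eq_inv_mul]

/-- **Assouad's lemma** for a hypercube with orthogonal edges under Gaussian noise. -/
theorem exists_hypercubePoint_le_risk (hv : v ≠ 0) (hu : Pairwise fun p q => u p ⬝ᵥ u q = 0)
    (huv : ∀ p, u p ⬝ᵥ u p ≤ v) {T : (J → ℝ) → J → ℝ} (hT : Measurable T) :
    ∃ ε, ENNReal.ofReal (Real.exp (-1) * ∑ p, u p ⬝ᵥ u p) ≤
      ∫⁻ ξ, ENNReal.ofReal ((T (hypercubePoint u ε + ξ) - hypercubePoint u ε) ⬝ᵥ
        (T (hypercubePoint u ε + ξ) - hypercubePoint u ε)) ∂gaussNoise J v := by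
  classical
  have hself (p : ι) : 0 ≤ u p ⬝ᵥ u p := by simpa using dotProduct_star_self_nonneg (u p)
  have hmeas (p : ι) : Measurable fun x => T x ⬝ᵥ u p := by
    unfold dotProduct; fun_prop
  have hcoord (p : ι) :
      Fintype.card (ι → ℤˣ) * ENNReal.ofReal (Real.exp (-1) * (u p ⬝ᵥ u p)) ≤
        ∑ ε, ENNReal.ofReal (u p ⬝ᵥ u p)⁻¹ * sqRisk v (fun x => T x ⬝ᵥ u p)
          (hypercubePoint u ε) (hypercubePoint u ε ⬝ᵥ u p) := by
    rw [← mul_sum]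
    simp_rw [hypercubePoint_dotProduct hu]
    refine le_trans (le_of_eq ?_) (mul_le_mul_right
      (card_mul_ofReal_le_sum_sqRisk hv (huv p) (hmeas p) (u p ⬝ᵥ u p)) _)
    rw [mul_left_comm, ← ENNReal.ofReal_mul (inv_nonneg.2 (hself p))]
    congr 2
    rcases eq_or_ne (u p ⬝ᵥ u p) 0 with h | h
    · simp [h]
    · field_simp
  by_contra! hrisk
  refine (ENNReal.sum_lt_sum_of_nonempty univ_nonempty fun ε _ =>
    (sum_mul_sqRisk_le hu hT (hypercubePoint u ε)).trans_lt (hrisk ε)).not_ge ?_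
  rw [sum_const, nsmul_eq_mul, card_univ, mul_sum,
    ENNReal.ofReal_sum_of_nonneg fun p _ => mul_nonneg (Real.exp_pos _).le (hself p), mul_sum,
    sum_comm]
  exact sum_le_sum fun p _ => hcoord p

end Assouad

section Waves

/-- The cosine mode of frequency `κ`; the modes `κ < N` are orthogonal on the half-integers
`1/2, …, N - 1/2` (discrete cosine transform). -/
noncomputable def dctMode (N κ : ℕ) (x : ℝ) : ℝ := Real.cos (Real.pi * κ / N * x)

/-- A combination of the modes `2p` and `2p + 1`. -/
noncomputable def modePair (N p : ℕ) (a b x : ℝ) : ℝ :=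
  a * dctMode N (2 * p) x + b * dctMode N (2 * p + 1) x

/-- The combination of the modes `2p` and `2p + 1` on `{0, …, n - 1}`, centred at `1/2`, that
vanishes at both `0` and `1`. -/
noncomputable def clampedWave (n p i : ℕ) : ℝ :=
  modePair (n - 1) p (dctMode (n - 1) (2 * p + 1) (1 / 2)) (-dctMode (n - 1) (2 * p) (1 / 2))
    (i - 1 / 2)

lemma sum_cos_half_integer_eq_zero {N : ℕ} {m : ℤ} (hm : ¬ (2 * N : ℤ) ∣ m) :
    ∑ j ∈ range N, Real.cos (Real.pi * m / N * (j + 1 / 2)) = 0 := by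
  rcases N.eq_zero_or_pos with rfl | hN
  · simp
  have hN' : (N : ℝ) ≠ 0 := by positivity
  set a := Real.pi * m / N with ha
  have hNa : N * a = m * Real.pi := by rw [ha]; field_simp
  have hsin : Real.sin (a / 2) ≠ 0 := by
    rw [Ne, Real.sin_eq_zero_iff]
    rintro ⟨k, hk⟩
    refine hm ⟨k, ?_⟩
    have : (m : ℝ) = 2 * N * k := by
      refine mul_right_cancel₀ Real.pi_ne_zero ?_
      linear_combination -hNa - 2 * N * hk
    exact_mod_cast this
  refine (mul_eq_zero.1 ?_).resolve_left hsin
  have htelescope := Real.sin_mul_sum_cos N a (a / 2)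
  rw [show ((N : ℝ) - 1) * a / 2 + a / 2 = N * a / 2 by ring] at htelescope
  simp_rw [mul_add, mul_one_div]
  rw [htelescope]
  have hdouble := Real.sin_two_mul (N * a / 2)
  rw [mul_div_cancel₀ _ two_ne_zero, hNa, Real.sin_int_mul_pi] at hdouble
  rw [hNa]
  linarith

lemma dctMode_mul_dctMode (N κ κ' : ℕ) (x : ℝ) :
    dctMode N κ x * dctMode N κ' x = (Real.cos (Real.pi * ((κ - κ' : ℤ) : ℝ) / N * x) +
      Real.cos (Real.pi * ((κ + κ' : ℤ) : ℝ) / N * x)) / 2 := by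
  have h := Real.two_mul_cos_mul_cos (Real.pi * κ / N * x) (Real.pi * κ' / N * x)
  rw [dctMode, dctMode, eq_div_iff two_ne_zero, mul_comm, ← mul_assoc, h]
  push_cast
  congr 2 <;> ring

lemma sum_dctMode_mul_dctMode {N κ κ' : ℕ} (hκ : κ < N) (hκ' : κ' < N) (hne : κ ≠ κ') :
    ∑ j ∈ range N, dctMode N κ (j + 1 / 2) * dctMode N κ' (j + 1 / 2) = 0 := by
  simp_rw [dctMode_mul_dctMode]
  have hdvd {m : ℤ} (h0 : m ≠ 0) (h1 : |m| < 2 * N) : ¬ (2 * N : ℤ) ∣ m := fun h =>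
    h0 (Int.eq_zero_of_abs_lt_dvd h h1)
  rw [← sum_div, sum_add_distrib,
    sum_cos_half_integer_eq_zero (hdvd (by omega) (abs_lt.2 ⟨by omega, by omega⟩)),
    sum_cos_half_integer_eq_zero (hdvd (by omega) (abs_lt.2 ⟨by omega, by omega⟩)), add_zero,
    zero_div]

lemma sum_dctMode_sq {N κ : ℕ} (h0 : 0 < κ) (hκ : κ < N) :
    ∑ j ∈ range N, dctMode N κ (j + 1 / 2) ^ 2 = N / 2 := by
  have hdvd : ¬ (2 * N : ℤ) ∣ κ + κ := fun h =>
    absurd (Int.le_of_dvd (by omega) h) (by omega)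
  simp_rw [sq, dctMode_mul_dctMode]
  rw [← sum_div, sum_add_distrib, sum_cos_half_integer_eq_zero hdvd]
  simp

lemma sum_modePair_mul_modePair {N p q : ℕ} (hp : 2 * p + 1 < N) (hq : 2 * q + 1 < N) (hpq : p ≠ q)
    (a b a' b' : ℝ) :
    ∑ j ∈ range N, modePair N p a b (j + 1 / 2) * modePair N q a' b' (j + 1 / 2) = 0 := by
  simp only [modePair, add_mul, mul_add, mul_mul_mul_comm, sum_add_distrib, ← mul_sum]
  rw [sum_dctMode_mul_dctMode, sum_dctMode_mul_dctMode, sum_dctMode_mul_dctMode,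
    sum_dctMode_mul_dctMode]
  · simp
  all_goals omega

lemma sum_modePair_sq {N p : ℕ} (h0 : 0 < p) (hp : 2 * p + 1 < N) (a b : ℝ) :
    ∑ j ∈ range N, modePair N p a b (j + 1 / 2) ^ 2 = (a ^ 2 + b ^ 2) * (N / 2) := by
  have hexpand (x : ℝ) : modePair N p a b x ^ 2 = a ^ 2 * dctMode N (2 * p) x ^ 2 +
      2 * a * b * (dctMode N (2 * p) x * dctMode N (2 * p + 1) x) +
      b ^ 2 * dctMode N (2 * p + 1) x ^ 2 := by
    rw [modePair]; ring
  simp only [hexpand, sum_add_distrib, ← mul_sum]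
  rw [sum_dctMode_mul_dctMode (by omega) hp (by omega), sum_dctMode_sq (by omega) (by omega),
    sum_dctMode_sq (by omega) hp]
  ring

lemma dctMode_second_diff (N κ : ℕ) (x : ℝ) :
    dctMode N κ (x + 1) - 2 * dctMode N κ x + dctMode N κ (x - 1) =
      -(2 - 2 * Real.cos (Real.pi * κ / N)) * dctMode N κ x := by
  simp only [dctMode, mul_add, mul_sub, mul_one, Real.cos_add, Real.cos_sub]
  ring

lemma modePair_second_diff (N p : ℕ) (a b x : ℝ) :
    modePair N p a b (x + 1) - 2 * modePair N p a b x + modePair N p a b (x - 1) =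
      modePair N p (a * -(2 - 2 * Real.cos (Real.pi * (2 * p : ℕ) / N)))
        (b * -(2 - 2 * Real.cos (Real.pi * (2 * p + 1 : ℕ) / N))) x := by
  simp only [modePair]
  linear_combination a * dctMode_second_diff N (2 * p) x + b * dctMode_second_diff N (2 * p + 1) x

lemma dctMode_half_sq_mem_Icc {N κ : ℕ} (hκ : 3 * κ ≤ 2 * N) :
    dctMode N κ (1 / 2) ^ 2 ∈ Set.Icc (1 / 4) 1 := by
  have hangle : Real.pi * κ / N * (1 / 2) ≤ Real.pi / 3 := by
    rcases N.eq_zero_or_pos with rfl | hN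
    · simpa using (by positivity : 0 ≤ Real.pi / 3)
    have : (3 * κ : ℝ) ≤ 2 * N := by exact_mod_cast hκ
    field_simp
    linarith
  have hhalf : 1 / 2 ≤ dctMode N κ (1 / 2) := by
    refine Real.cos_pi_div_three.symm.trans_le ?_
    exact Real.cos_le_cos_of_nonneg_of_le_pi (by positivity) (by linarith [Real.pi_pos]) hangle
  exact ⟨by nlinarith, pow_le_one₀ (by linarith) (Real.cos_le_one _)⟩

lemma two_sub_two_mul_cos_sq_le (h : ℝ) : (2 - 2 * Real.cos h) ^ 2 ≤ h ^ 4 := by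
  have hlow := Real.one_sub_sq_div_two_le_cos (x := h)
  calc (2 - 2 * Real.cos h) ^ 2 ≤ (h ^ 2) ^ 2 :=
        pow_le_pow_left₀ (by linarith [Real.cos_le_one h]) (by linarith) 2
    _ = h ^ 4 := by ring

lemma dctMode_neg (N κ : ℕ) (x : ℝ) : dctMode N κ (-x) = dctMode N κ x := by
  simp [dctMode]

lemma clampedWave_zero (n p : ℕ) : clampedWave n p 0 = 0 := by
  rw [clampedWave, modePair, Nat.cast_zero, zero_sub, dctMode_neg, dctMode_neg]
  ring

lemma clampedWave_one (n p : ℕ) : clampedWave n p 1 = 0 := by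
  rw [clampedWave, modePair, Nat.cast_one, sub_half]
  ring

lemma clampedWave_succ (N p i : ℕ) :
    clampedWave (N + 1) p (i + 1) = modePair N p (dctMode N (2 * p + 1) (1 / 2))
      (-dctMode N (2 * p) (1 / 2)) (i + 1 / 2) := by
  simp only [clampedWave, Nat.add_sub_cancel]
  congr 1
  push_cast
  ring

lemma sum_clampedWave_mul_clampedWave {n p q : ℕ} (hp : p ∈ Icc 1 (n / 6)) (hq : q ∈ Icc 1 (n / 6))
    (hpq : p ≠ q) :
    ∑ i ∈ range n, clampedWave n p i * clampedWave n q i = 0 := by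
  rw [mem_Icc] at hp hq
  obtain ⟨N, rfl⟩ : ∃ N, n = N + 1 := ⟨n - 1, by omega⟩
  rw [sum_range_succ', clampedWave_zero, zero_mul, add_zero]
  simp_rw [clampedWave_succ]
  exact sum_modePair_mul_modePair (by omega) (by omega) hpq ..

lemma sum_clampedWave_sq_mem_Icc {n p : ℕ} (hp : p ∈ Icc 1 (n / 6)) :
    ∑ i ∈ range n, clampedWave n p i ^ 2 ∈ Set.Icc ((n : ℝ) / 8) n := by
  rw [mem_Icc] at hp
  obtain ⟨N, rfl⟩ : ∃ N, n = N + 1 := ⟨n - 1, by omega⟩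
  obtain ⟨hlow, hup⟩ := dctMode_half_sq_mem_Icc (N := N) (κ := 2 * p) (by omega)
  obtain ⟨hlow', hup'⟩ := dctMode_half_sq_mem_Icc (N := N) (κ := 2 * p + 1) (by omega)
  have hN : (1 : ℝ) ≤ N := by exact_mod_cast (by omega : 1 ≤ N)
  rw [sum_range_succ', clampedWave_zero, zero_pow two_ne_zero, add_zero]
  simp_rw [clampedWave_succ]
  rw [sum_modePair_sq (by omega) (by omega), neg_sq]
  push_cast
  constructor <;> nlinarith

/-- The `m`-th order backward difference, with the same truncation at `0` as in `mixedDiff`. -/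
def backwardDiff (m : ℕ) (f : ℕ → ℝ) (i : ℕ) : ℝ :=
  ∑ δ ∈ range (m + 1), (-1) ^ δ * (m.choose δ : ℝ) * f (i - δ)

lemma backwardDiff_two_add_two (f : ℕ → ℝ) (i : ℕ) :
    backwardDiff 2 f (i + 2) = f (i + 2) - 2 * f (i + 1) + f i := by
  simp [backwardDiff, sum_range_succ]
  ring

lemma backwardDiff_two_clampedWave (N p i : ℕ) :
    backwardDiff 2 (clampedWave (N + 1) p) (i + 2) =
      modePair N p
        (dctMode N (2 * p + 1) (1 / 2) * -(2 - 2 * Real.cos (Real.pi * (2 * p : ℕ) / N)))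
        (-dctMode N (2 * p) (1 / 2) * -(2 - 2 * Real.cos (Real.pi * (2 * p + 1 : ℕ) / N)))
        (i + 1 / 2) := by
  rw [backwardDiff_two_add_two, ← modePair_second_diff, clampedWave_succ, clampedWave_succ,
    clampedWave, Nat.add_sub_cancel,
    show ((i + 1 : ℕ) : ℝ) + 1 / 2 = i + 1 / 2 + 1 by push_cast; ring,
    show (i : ℝ) - 1 / 2 = i + 1 / 2 - 1 by ring]

lemma sum_backwardDiff_clampedWave_mul {n p q : ℕ} (hp : p ∈ Icc 1 (n / 6)) (hq : q ∈ Icc 1 (n / 6))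
    (hpq : p ≠ q) :
    ∑ i ∈ Ico 2 (n + 1),
      backwardDiff 2 (clampedWave n p) i * backwardDiff 2 (clampedWave n q) i = 0 := by
  rw [mem_Icc] at hp hq
  obtain ⟨N, rfl⟩ : ∃ N, n = N + 1 := ⟨n - 1, by omega⟩
  simp_rw [sum_Ico_eq_sum_range, add_comm 2, backwardDiff_two_clampedWave]
  exact sum_modePair_mul_modePair (by omega) (by omega) hpq ..

lemma sum_backwardDiff_clampedWave_sq_le {n p : ℕ} (hp : p ∈ Icc 1 (n / 6)) :
    ∑ i ∈ Ico 2 (n + 1), backwardDiff 2 (clampedWave n p) i ^ 2 ≤ 12 ^ 4 * p ^ 4 / n ^ 3 := by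
  rw [mem_Icc] at hp
  obtain ⟨N, rfl⟩ : ∃ N, n = N + 1 := ⟨n - 1, by omega⟩
  have hp1' : (1 : ℝ) ≤ p := by exact_mod_cast hp.1
  have hN : (5 : ℝ) ≤ N := by exact_mod_cast (by omega : 5 ≤ N)
  have hcoef {κ κ' : ℕ} (hκ : κ ≤ 2 * p + 1) {c : ℝ} (hc : c ^ 2 = dctMode N κ' (1 / 2) ^ 2) :
      (c * -(2 - 2 * Real.cos (Real.pi * κ / N))) ^ 2 ≤ (12 * p / (N + 1)) ^ 4 := by
    have hfreq : Real.pi * κ / N ≤ 12 * p / (N + 1) := by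
      have hκ' : (κ : ℝ) ≤ 3 * p := by exact_mod_cast (by omega : κ ≤ 3 * p)
      have hpi : Real.pi * κ ≤ 3.15 * (3 * p) := by
        gcongr
        exact Real.pi_lt_d2.le
      rw [div_le_div_iff₀ (by positivity) (by positivity)]
      nlinarith
    have hmode : dctMode N κ' (1 / 2) ^ 2 ≤ 1 :=
      (sq_le_one_iff_abs_le_one _).2 (Real.abs_cos_le_one _)
    rw [mul_pow, neg_sq, hc]
    calc _ ≤ 1 * (Real.pi * κ / N) ^ 4 :=
          mul_le_mul hmode (two_sub_two_mul_cos_sq_le _) (sq_nonneg _) zero_le_one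
      _ ≤ _ := by rw [one_mul]; gcongr
  simp_rw [sum_Ico_eq_sum_range, add_comm 2, backwardDiff_two_clampedWave]
  rw [show N + 1 + 1 - 2 = N by omega, sum_modePair_sq (by omega) (by omega)]
  calc _ ≤ ((12 * p / (N + 1 : ℝ)) ^ 4 + (12 * p / (N + 1 : ℝ)) ^ 4) * ((N + 1) / 2) := by
        gcongr
        · exact hcoef (by omega) rfl
        · exact hcoef le_rfl (neg_sq _)
        · linarith
    _ = _ := by push_cast; field_simp; ring

end Waves

section Lattice

variable {d : ℕ} {n : Fin d → ℕ}

lemma mixedDiff_prod_s2 (β : Fin d → ℕ) (f : Fin d → ℕ → ℝ) (i : Fin d → ℕ) :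
    mixedDiff d β (fun j => ∏ k, f k (j k)) i = ∏ k, backwardDiff (β k) (f k) (i k) := by
  simp only [mixedDiff, backwardDiff, prod_univ_sum, prod_mul_distrib, prod_pow_eq_pow_sum]

lemma mixedDiff_congr {θ θ' : (Fin d → ℕ) → ℝ} {i : Fin d → ℕ} (h : ∀ j ≤ i, θ j = θ' j)
    (β : Fin d → ℕ) : mixedDiff d β θ i = mixedDiff d β θ' i :=
  sum_congr rfl fun δ _ => by rw [h _ fun k => Nat.sub_le (i k) (δ k)]

lemma mixedDiff_hypercubePoint {ι : Type*} [Fintype ι] (β : Fin d → ℕ)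
    (u : ι → (Fin d → ℕ) → ℝ) (ε : ι → ℤˣ) :
    mixedDiff d β (hypercubePoint u ε) = hypercubePoint (fun p => mixedDiff d β (u p)) ε := by
  funext i
  simp only [hypercubePoint, mixedDiff, Finset.sum_apply, Pi.smul_apply, smul_eq_mul, mul_sum]
  rw [sum_comm]
  exact sum_congr rfl fun p _ => sum_congr rfl fun δ _ => by ring

lemma mixedDiff_smul (β : Fin d → ℕ) (a : ℝ) (θ : (Fin d → ℕ) → ℝ) :
    mixedDiff d β (a • θ) = a • mixedDiff d β θ := by
  funext i
  simp only [mixedDiff, Pi.smul_apply, smul_eq_mul, mul_sum]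
  exact sum_congr rfl fun δ _ => by ring

lemma lt_of_mem_idxBeta (hn : ∀ k, 2 ≤ n k) {β i : Fin d → ℕ} (hβ : univ.sup β = 2)
    (hi : i ∈ idxBeta d n β) (k : Fin d) : i k < n k := by
  have hik := Fintype.mem_piFinset.1 hi k
  have hle : β k ≤ 2 := hβ ▸ le_sup (mem_univ k)
  have hnk := hn k
  rw [hβ] at hik
  split_ifs at hik with h
  · exact (mem_Ico.1 hik).2
  · rw [mem_singleton] at hik
    omega

lemma V2_congr (hn : ∀ k, 2 ≤ n k) {θ θ' : (Fin d → ℕ) → ℝ}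
    (h : ∀ j, (∀ k, j k < n k) → θ j = θ' j) : V2 d n θ = V2 d n θ' := by
  refine sum_congr rfl fun β hβ => ?_
  rw [mem_filter] at hβ
  congr 1
  refine sum_congr rfl fun i hi => ?_
  rw [mixedDiff_congr fun j hj => h j fun k => (hj k).trans_lt (lt_of_mem_idxBeta hn hβ.2 hi k)]

/-- The restriction of a function on `ℕ^d` to the index box `I₀`. -/
def boxRestrict (n : Fin d → ℕ) (θ : (Fin d → ℕ) → ℝ) (i : ∀ k, Fin (n k)) : ℝ :=
  θ fun k => i k

lemma boxRestrict_mem_Cset (hn : ∀ k, 2 ≤ n k) {θ : (Fin d → ℕ) → ℝ} {V : ℝ} :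
    boxRestrict n θ ∈ Cset d n V ↔ V2 d n θ ≤ V := by
  rw [Cset, Set.mem_ofPred_eq, V2_congr hn fun j hj => by rw [latExtend, dif_pos hj, boxRestrict]]

lemma boxRestrict_hypercubePoint {ι : Type*} [Fintype ι] (u : ι → (Fin d → ℕ) → ℝ) (ε : ι → ℤˣ) :
    boxRestrict n (hypercubePoint u ε) = hypercubePoint (fun p => boxRestrict n (u p)) ε := by
  funext i
  simp only [boxRestrict, hypercubePoint, Finset.sum_apply, Pi.smul_apply]

lemma mixedDiff_eq_zero_of_clamped {θ : (Fin d → ℕ) → ℝ} (hθ : ∀ j k, j k ≤ 1 → θ j = 0)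
    (β : Fin d → ℕ) {i : Fin d → ℕ} {k : Fin d} (hi : i k ≤ 1) : mixedDiff d β θ i = 0 :=
  sum_eq_zero fun δ _ => by rw [hθ _ k ((Nat.sub_le _ _).trans hi), mul_zero]

-- For `β ≠ (2, …, 2)` the index set `I₀^(β)` lies in the zero set `{i | i k ≤ 1 for some k}`.
lemma V2_of_clamped (hd : 1 ≤ d) {θ : (Fin d → ℕ) → ℝ} (hθ : ∀ j k, j k ≤ 1 → θ j = 0) :
    V2 d n θ = (∏ k, (n k : ℝ)) *
      ∑ i ∈ Fintype.piFinset fun k => Ico 2 (n k), |mixedDiff d (fun _ => 2) θ i| := by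
  have hsup : univ.sup (fun _ : Fin d => 2) = 2 := sup_const ⟨⟨0, hd⟩, mem_univ _⟩ 2
  rw [V2, sum_eq_single_of_mem (fun _ => 2)]
  · simp [idxBeta, hsup]
  · simp [hsup]
  · intro β hβ hne
    obtain ⟨k, hk⟩ := Function.ne_iff.1 hne
    obtain ⟨hβ3, hβsup⟩ := mem_filter.1 hβ
    have hβk := mem_range.1 (Fintype.mem_piFinset.1 hβ3 k)
    refine mul_eq_zero_of_right _ (sum_eq_zero fun i hi => ?_)
    have hik := Fintype.mem_piFinset.1 hi k
    rw [hβsup, if_neg hk, mem_singleton] at hik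
    rw [mixedDiff_eq_zero_of_clamped hθ β (k := k) (by omega), abs_zero]

lemma sq_V2_le_of_clamped (hd : 1 ≤ d) {θ : (Fin d → ℕ) → ℝ} (hθ : ∀ j k, j k ≤ 1 → θ j = 0) :
    V2 d n θ ^ 2 ≤ (∏ k, (n k : ℝ)) ^ 3 *
      ∑ i ∈ Fintype.piFinset fun k => Ico 2 (n k + 1), mixedDiff d (fun _ => 2) θ i ^ 2 := by
  set B := Fintype.piFinset fun k => Ico 2 (n k)
  have hcard : (#B : ℝ) ≤ ∏ k, (n k : ℝ) := by
    rw [Fintype.card_piFinset]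
    push_cast
    refine prod_le_prod (fun k _ => by positivity) fun k _ => ?_
    rw [Nat.card_Ico]
    exact_mod_cast Nat.sub_le _ _
  have hB : B ⊆ Fintype.piFinset fun k => Ico 2 (n k + 1) :=
    Fintype.piFinset_subset _ _ fun k => Ico_subset_Ico_right (n k).le_succ
  rw [V2_of_clamped hd hθ, mul_pow, pow_succ _ 2, mul_assoc]
  gcongr
  calc _ ≤ #B * ∑ i ∈ B, |mixedDiff d (fun _ => 2) θ i| ^ 2 := sq_sum_le_card_mul_sum_sq
    _ ≤ _ := by simp only [sq_abs]; gcongr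

end Lattice

section TensorWaves

open Matrix

variable {d : ℕ} {n p q : Fin d → ℕ}

/-- The tensor product of the clamped waves of frequencies `p k`. -/
noncomputable def tensorWave (n p j : Fin d → ℕ) : ℝ :=
  ∏ k, clampedWave (n k) (p k) (j k)

lemma tensorWave_eq_zero (n p : Fin d → ℕ) {j : Fin d → ℕ} {k : Fin d} (hj : j k ≤ 1) :
    tensorWave n p j = 0 := by
  refine prod_eq_zero (mem_univ k) ?_
  rcases Nat.le_one_iff_eq_zero_or_eq_one.1 hj with h | h <;> rw [h]
  exacts [clampedWave_zero .., clampedWave_one ..]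

lemma boxRestrict_tensorWave_dotProduct (n p q : Fin d → ℕ) :
    boxRestrict n (tensorWave n p) ⬝ᵥ boxRestrict n (tensorWave n q) =
      ∏ k, ∑ i ∈ range (n k), clampedWave (n k) (p k) i * clampedWave (n k) (q k) i := by
  simp only [sum_range, prod_univ_sum, Fintype.piFinset_univ, dotProduct, boxRestrict, tensorWave,
    prod_mul_distrib]

lemma sum_mixedDiff_tensorWave_mul (n p q : Fin d → ℕ) :
    ∑ i ∈ Fintype.piFinset fun k => Ico 2 (n k + 1),
        mixedDiff d (fun _ => 2) (tensorWave n p) i * mixedDiff d (fun _ => 2) (tensorWave n q) i =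
      ∏ k, ∑ i ∈ Ico 2 (n k + 1), backwardDiff 2 (clampedWave (n k) (p k)) i *
        backwardDiff 2 (clampedWave (n k) (q k)) i := by
  unfold tensorWave
  simp only [mixedDiff_prod_s2, prod_univ_sum, prod_mul_distrib]

lemma boxRestrict_tensorWave_orthogonal (hp : ∀ k, p k ∈ Icc 1 (n k / 6))
    (hq : ∀ k, q k ∈ Icc 1 (n k / 6)) (hpq : p ≠ q) :
    boxRestrict n (tensorWave n p) ⬝ᵥ boxRestrict n (tensorWave n q) = 0 := by
  obtain ⟨k, hk⟩ := Function.ne_iff.1 hpq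
  rw [boxRestrict_tensorWave_dotProduct]
  exact prod_eq_zero (mem_univ k) (sum_clampedWave_mul_clampedWave (hp k) (hq k) hk)

lemma mixedDiff_tensorWave_orthogonal (hp : ∀ k, p k ∈ Icc 1 (n k / 6))
    (hq : ∀ k, q k ∈ Icc 1 (n k / 6)) (hpq : p ≠ q) :
    ∑ i ∈ Fintype.piFinset fun k => Ico 2 (n k + 1),
      mixedDiff d (fun _ => 2) (tensorWave n p) i * mixedDiff d (fun _ => 2) (tensorWave n q) i =
        0 := by
  obtain ⟨k, hk⟩ := Function.ne_iff.1 hpq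
  rw [sum_mixedDiff_tensorWave_mul]
  exact prod_eq_zero (mem_univ k) (sum_backwardDiff_clampedWave_mul (hp k) (hq k) hk)

lemma boxRestrict_tensorWave_dotProduct_self_mem_Icc (hp : ∀ k, p k ∈ Icc 1 (n k / 6)) :
    boxRestrict n (tensorWave n p) ⬝ᵥ boxRestrict n (tensorWave n p) ∈
      Set.Icc ((∏ k, (n k : ℝ)) / 8 ^ d) (∏ k, (n k : ℝ)) := by
  have hfactor (k : Fin d) := sum_clampedWave_sq_mem_Icc (hp k)
  simp only [boxRestrict_tensorWave_dotProduct, ← sq]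
  constructor
  · calc (∏ k, (n k : ℝ)) / 8 ^ d = ∏ k, (n k : ℝ) / 8 := by simp [prod_div_distrib]
      _ ≤ _ := prod_le_prod (fun k _ => by positivity) fun k _ => (hfactor k).1
  · exact prod_le_prod (fun k _ => by positivity) fun k _ => (hfactor k).2

lemma sum_mixedDiff_tensorWave_sq_le (hp : ∀ k, p k ∈ Icc 1 (n k / 6)) :
    ∑ i ∈ Fintype.piFinset fun k => Ico 2 (n k + 1),
        mixedDiff d (fun _ => 2) (tensorWave n p) i ^ 2 ≤
      (12 ^ 4) ^ d * (∏ k, (p k : ℝ)) ^ 4 / (∏ k, (n k : ℝ)) ^ 3 := by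
  simp only [sq, sum_mixedDiff_tensorWave_mul]
  simp only [← sq]
  calc _ ≤ ∏ k, (12 ^ 4 * (p k : ℝ) ^ 4 / (n k : ℝ) ^ 3) :=
        prod_le_prod (fun k _ => by positivity)
          fun k _ => sum_backwardDiff_clampedWave_sq_le (hp k)
    _ = _ := by simp [prod_div_distrib, prod_mul_distrib, prod_pow]

end TensorWaves

section LowerBound

open Matrix

variable {d : ℕ} {n : Fin d → ℕ} {S : Finset (Fin d → ℕ)} {R V : ℝ}

lemma hypercubePoint_tensorWave_mem_Cset (hd : 1 ≤ d) (hn : ∀ k, 2 ≤ n k)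
    (hS : ∀ p ∈ S, ∀ k, p k ∈ Icc 1 (n k / 6)) (hR : ∀ p ∈ S, ∏ k, (p k : ℝ) ≤ R) (hV : 0 ≤ V)
    {a : ℝ} (ha : a ^ 2 * (#S * ((12 ^ 4) ^ d * R ^ 4)) ≤ V ^ 2) (ε : S → ℤˣ) :
    hypercubePoint (fun p : S => boxRestrict n (a • tensorWave n p)) ε ∈ Cset d n V := by
  have hN : 0 < ∏ k, (n k : ℝ) := prod_pos fun k _ => by exact_mod_cast zero_lt_two.trans_le (hn k)
  rw [← boxRestrict_hypercubePoint, boxRestrict_mem_Cset hn]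
  have hclamped (j : Fin d → ℕ) (k : Fin d) (hj : j k ≤ 1) :
      hypercubePoint (fun p : S => a • tensorWave n p) ε j = 0 := by
    simp [hypercubePoint, tensorWave_eq_zero n _ hj]
  have horth : Pairwise fun p q : S => ∑ i ∈ Fintype.piFinset fun k => Ico 2 (n k + 1),
      mixedDiff d (fun _ => 2) (a • tensorWave n p) i *
        mixedDiff d (fun _ => 2) (a • tensorWave n q) i = 0 := fun p q hpq => by
    simp only [mixedDiff_smul, Pi.smul_apply, smul_eq_mul, mul_mul_mul_comm a, ← mul_sum]
    rw [mixedDiff_tensorWave_orthogonal (hS p p.2) (hS q q.2) (Subtype.coe_injective.ne hpq),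
      mul_zero]
  have henergy (p : S) : ∑ i ∈ Fintype.piFinset fun k => Ico 2 (n k + 1),
      mixedDiff d (fun _ => 2) (a • tensorWave n p) i ^ 2 ≤
        a ^ 2 * ((12 ^ 4) ^ d * R ^ 4 / (∏ k, (n k : ℝ)) ^ 3) := by
    simp only [mixedDiff_smul, Pi.smul_apply, smul_eq_mul, mul_pow a, ← mul_sum]
    have hpR := hR p p.2
    refine mul_le_mul_of_nonneg_left ((sum_mixedDiff_tensorWave_sq_le (hS p p.2)).trans ?_)
      (sq_nonneg a)
    gcongr
  refine le_of_sq_le_sq ?_ hV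
  calc _ ≤ (∏ k, (n k : ℝ)) ^ 3 * ∑ i ∈ Fintype.piFinset fun k => Ico 2 (n k + 1),
          mixedDiff d (fun _ => 2) (hypercubePoint (fun p : S => a • tensorWave n p) ε) i ^ 2 :=
        sq_V2_le_of_clamped hd hclamped
    _ ≤ (∏ k, (n k : ℝ)) ^ 3 *
          ∑ _p : S, a ^ 2 * ((12 ^ 4) ^ d * R ^ 4 / (∏ k, (n k : ℝ)) ^ 3) := by
        rw [mixedDiff_hypercubePoint, sum_sq_hypercubePoint horth]
        gcongr with p
        exact henergy p
    _ = a ^ 2 * (#S * ((12 ^ 4) ^ d * R ^ 4)) := by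
        rw [sum_const, card_univ, Fintype.card_coe, nsmul_eq_mul]
        field_simp
    _ ≤ V ^ 2 := ha

variable {σ : ℝ} {T : ((∀ k, Fin (n k)) → ℝ) → (∀ k, Fin (n k)) → ℝ}

lemma exists_mem_Cset_amplitude_le_risk (hd : 1 ≤ d) (hn : ∀ k, 2 ≤ n k) (hσ : 0 < σ)
    (hS : ∀ p ∈ S, ∀ k, p k ∈ Icc 1 (n k / 6)) (hR : ∀ p ∈ S, ∏ k, (p k : ℝ) ≤ R) (hV : 0 ≤ V)
    {a : ℝ} (ha : a ^ 2 * (#S * ((12 ^ 4) ^ d * R ^ 4)) ≤ V ^ 2)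
    (haσ : a ^ 2 * ∏ k, (n k : ℝ) ≤ σ ^ 2) (hT : Measurable T) :
    ∃ θ ∈ Cset d n V, ENNReal.ofReal (Real.exp (-1) * (a ^ 2 * #S / 8 ^ d)) ≤
      ∫⁻ ξ, ENNReal.ofReal ((∏ j, (n j : ℝ))⁻¹ * ∑ i, (T (θ + ξ) i - θ i) ^ 2) ∂gaussPi d n σ := by
  have hN : 0 < ∏ k, (n k : ℝ) := prod_pos fun k _ => by exact_mod_cast zero_lt_two.trans_le (hn k)
  set u : S → (∀ k, Fin (n k)) → ℝ := fun p => boxRestrict n (a • tensorWave n p)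
  have hdot (p q : S) : u p ⬝ᵥ u q =
      a ^ 2 * (boxRestrict n (tensorWave n p) ⬝ᵥ boxRestrict n (tensorWave n q)) := by
    change (a • boxRestrict n (tensorWave n p)) ⬝ᵥ (a • boxRestrict n (tensorWave n q)) = _
    rw [smul_dotProduct, dotProduct_smul, smul_smul, ← sq, smul_eq_mul]
  have hnorm (p : S) := boxRestrict_tensorWave_dotProduct_self_mem_Icc (hS p p.2)
  have horth : Pairwise fun p q => u p ⬝ᵥ u q = 0 := fun p q hpq => (hdot p q).trans <| by
    rw [boxRestrict_tensorWave_orthogonal (hS p p.2) (hS q q.2)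
      (Subtype.coe_injective.ne hpq), mul_zero]
  have hnoise (p : S) : u p ⬝ᵥ u p ≤ σ ^ 2 := by
    rw [hdot]
    exact (mul_le_mul_of_nonneg_left (hnorm p).2 (sq_nonneg a)).trans haσ
  obtain ⟨ε, hε⟩ := exists_hypercubePoint_le_risk (v := ⟨σ ^ 2, sq_nonneg σ⟩)
    (NNReal.coe_ne_zero.1 (pow_pos hσ 2).ne') horth hnoise hT
  refine ⟨hypercubePoint u ε, hypercubePoint_tensorWave_mem_Cset hd hn hS hR hV ha ε, ?_⟩
  have htotal : a ^ 2 * #S / 8 ^ d ≤ (∏ k, (n k : ℝ))⁻¹ * ∑ p, u p ⬝ᵥ u p := by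
    calc a ^ 2 * #S / 8 ^ d
        = (∏ k, (n k : ℝ))⁻¹ * ∑ _p : S, a ^ 2 * ((∏ k, (n k : ℝ)) / 8 ^ d) := by
          rw [sum_const, card_univ, Fintype.card_coe, nsmul_eq_mul]
          field_simp
      _ ≤ _ := by
          gcongr with p
          rw [hdot]
          exact mul_le_mul_of_nonneg_left (hnorm p).1 (sq_nonneg a)
  have hN' : 0 ≤ (∏ k, (n k : ℝ))⁻¹ := inv_nonneg.2 hN.le
  calc _ ≤ ENNReal.ofReal (∏ k, (n k : ℝ))⁻¹ *
          ENNReal.ofReal (Real.exp (-1) * ∑ p, u p ⬝ᵥ u p) := by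
        rw [← ENNReal.ofReal_mul hN', mul_left_comm]
        gcongr
    _ ≤ _ := mul_le_mul_right hε _
    _ = _ := by
        rw [← lintegral_const_mul' _ _ ENNReal.ofReal_ne_top]
        simp_rw [← ENNReal.ofReal_mul hN']
        simp only [dotProduct, Pi.sub_apply, ← sq, gaussPi, gaussNoise]

theorem exists_mem_Cset_min_le_risk (hd : 1 ≤ d) (hn : ∀ k, 2 ≤ n k) (hσ : 0 < σ) (hV : 0 ≤ V)
    (hSne : S.Nonempty) (hS : ∀ p ∈ S, ∀ k, p k ∈ Icc 1 (n k / 6))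
    (hR : ∀ p ∈ S, ∏ k, (p k : ℝ) ≤ R) (hT : Measurable T) :
    ∃ θ ∈ Cset d n V,
      ENNReal.ofReal (Real.exp (-1) / (8 * 12 ^ 4) ^ d *
          min (σ ^ 2 / (∏ k, (n k : ℝ)) * #S) (V ^ 2 / R ^ 4)) ≤
        ∫⁻ ξ, ENNReal.ofReal ((∏ j, (n j : ℝ))⁻¹ * ∑ i, (T (θ + ξ) i - θ i) ^ 2)
          ∂gaussPi d n σ := by
  have hN : 0 < ∏ k, (n k : ℝ) := prod_pos fun k _ => by exact_mod_cast zero_lt_two.trans_le (hn k)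
  have hR0 : 0 < R := by
    obtain ⟨p, hp⟩ := hSne
    refine (prod_pos fun k _ => ?_).trans_le (hR p hp)
    exact_mod_cast (mem_Icc.1 (hS p hp k)).1
  have hcard : (0 : ℝ) < #S := by exact_mod_cast hSne.card_pos
  set m := min (σ ^ 2 / (∏ k, (n k : ℝ)) * #S) (V ^ 2 / R ^ 4)
  have : 0 ≤ m := by positivity
  set a := √(m / ((12 ^ 4) ^ d * #S))
  have ha : a ^ 2 = m / ((12 ^ 4) ^ d * #S) := Real.sq_sqrt (by positivity)
  have haV : a ^ 2 * (#S * ((12 ^ 4) ^ d * R ^ 4)) ≤ V ^ 2 := by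
    have hmV : m * R ^ 4 ≤ V ^ 2 := (le_div_iff₀ (by positivity)).1 (min_le_right _ _)
    refine le_trans (le_of_eq ?_) hmV
    rw [ha]
    field_simp
  have haσ : a ^ 2 * ∏ k, (n k : ℝ) ≤ σ ^ 2 := by
    have hmσ : m / #S * ∏ k, (n k : ℝ) ≤ σ ^ 2 := by
      rw [← le_div_iff₀ hN, div_le_iff₀ hcard]
      exact min_le_left _ _
    refine le_trans ?_ hmσ
    rw [ha]
    gcongr
    exact le_mul_of_one_le_left hcard.le (one_le_pow₀ (by norm_num))
  obtain ⟨θ, hθ, hrisk⟩ := exists_mem_Cset_amplitude_le_risk hd hn hσ hS hR hV haV haσ hT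
  refine ⟨θ, hθ, le_trans (le_of_eq ?_) hrisk⟩
  rw [ha, mul_pow]
  congr 1
  field_simp

end LowerBound

section HyperbolicCross

/-- The points of `{1, …, M}^d` with coordinate product at most `R`. -/
def hyperbolicCross (d M R : ℕ) : Finset (Fin d → ℕ) :=
  (Fintype.piFinset fun _ => Icc 1 M).filter fun p => ∏ k, p k ≤ R

lemma mem_hyperbolicCross {d M R : ℕ} {p : Fin d → ℕ} :
    p ∈ hyperbolicCross d M R ↔ (∀ k, p k ∈ Icc 1 M) ∧ ∏ k, p k ≤ R := by
  simp only [hyperbolicCross, mem_filter, Fintype.mem_piFinset]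

lemma sum_div_prod_le_card_hyperbolicCross {e M R : ℕ} {Q : Finset (Fin e → ℕ)}
    (hQ : ∀ q ∈ Q, ∀ k, q k ∈ Icc 1 M) (hR : ∀ q ∈ Q, R / ∏ k, q k ≤ M) :
    ∑ q ∈ Q, R / ∏ k, q k ≤ #(hyperbolicCross (e + 1) M R) := by
  calc ∑ q ∈ Q, R / ∏ k, q k = #(Q.sigma fun q => Icc 1 (R / ∏ k, q k)) := by simp
    _ ≤ _ := card_le_card_of_injOn (fun x => Fin.cons x.2 x.1) ?_ ?_
  · rintro ⟨q, m⟩ hqm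
    obtain ⟨hq, hm⟩ := mem_sigma.1 hqm
    rw [mem_Icc] at hm
    rw [mem_coe, mem_hyperbolicCross, Fin.forall_fin_succ, Fin.prod_univ_succ]
    exact ⟨⟨mem_Icc.2 ⟨hm.1, hm.2.trans (hR q hq)⟩, hQ q hq⟩,
      (Nat.mul_le_mul_right _ hm.2).trans (Nat.div_mul_le_self _ _)⟩
  · rintro ⟨q, m⟩ - ⟨q', m'⟩ - h
    obtain ⟨rfl, rfl⟩ := Fin.cons_inj.1 h
    rfl

lemma log_sub_log_le_sum_inv {a b : ℕ} (ha : 1 ≤ a) (hab : a ≤ b) :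
    Real.log b - Real.log a ≤ ∑ p ∈ Ico a b, (p : ℝ)⁻¹ := by
  have ha0 : (0 : ℝ) < a := by exact_mod_cast ha
  have hb0 : (0 : ℝ) < b := by exact_mod_cast ha.trans hab
  rw [← Real.log_div hb0.ne' ha0.ne', ← integral_inv_of_pos ha0 hb0]
  exact AntitoneOn.integral_le_sum_Ico hab fun x hx y _ hxy =>
    inv_anti₀ (ha0.trans_le hx.1) hxy

lemma half_div_le_natDiv {m R : ℕ} (hm : 0 < m) (hmR : m ≤ R) :
    (R : ℝ) / 2 * (m : ℝ)⁻¹ ≤ (R / m : ℕ) := by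
  have hquot : 1 ≤ R / m := (Nat.one_le_div_iff hm).2 hmR
  have hR : R ≤ 2 * (R / m * m) := by nlinarith [Nat.lt_mul_div_succ R hm]
  have hm' : (0 : ℝ) < m := by exact_mod_cast hm
  rw [← div_eq_mul_inv, div_le_iff₀ hm', div_le_iff₀' two_pos]
  exact_mod_cast hR

theorem log_pow_le_card_hyperbolicCross (e : ℕ) {s : ℕ} (hs : 1 ≤ s) :
    (s : ℝ) ^ (e + 1) ^ 2 / 2 * Real.log s ^ e ≤
      #(hyperbolicCross (e + 1) (s ^ (2 * e + 1)) (s ^ (e + 1) ^ 2)) := by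
  set R := s ^ (e + 1) ^ 2 with hR
  set Q : Finset (Fin e → ℕ) := Fintype.piFinset fun _ => Ico (s ^ e) (s ^ (e + 1)) with hQ
  have hcoord {q} (hq : q ∈ Q) (k : Fin e) : s ^ e ≤ q k ∧ q k < s ^ (e + 1) :=
    mem_Ico.1 (Fintype.mem_piFinset.1 hq k)
  have hlow {q} (hq : q ∈ Q) : s ^ (e * e) ≤ ∏ k, q k := by
    simpa [pow_mul] using prod_le_prod' fun k (_ : k ∈ univ) => (hcoord hq k).1
  have hhigh {q} (hq : q ∈ Q) : ∏ k, q k ≤ R := by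
    have hprod : ∏ k, q k ≤ s ^ ((e + 1) * e) := by
      simpa [pow_mul] using prod_le_prod' fun k (_ : k ∈ univ) => (hcoord hq k).2.le
    exact hprod.trans (Nat.pow_le_pow_right hs (by nlinarith))
  have hmem : ∀ q ∈ Q, ∀ k, q k ∈ Icc 1 (s ^ (2 * e + 1)) := fun q hq k =>
    mem_Icc.2 ⟨(Nat.one_le_pow _ _ hs).trans (hcoord hq k).1,
      (hcoord hq k).2.le.trans (Nat.pow_le_pow_right hs (by omega))⟩
  have hquot : ∀ q ∈ Q, R / ∏ k, q k ≤ s ^ (2 * e + 1) := fun q hq => by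
    refine Nat.div_le_of_le_mul ?_
    calc R = s ^ (e * e) * s ^ (2 * e + 1) := by rw [hR, ← pow_add]; ring_nf
      _ ≤ _ := Nat.mul_le_mul_right _ (hlow hq)
  have hlog : Real.log s ≤ ∑ p ∈ Ico (s ^ e) (s ^ (e + 1)), (p : ℝ)⁻¹ := by
    refine le_trans (le_of_eq ?_) (log_sub_log_le_sum_inv (Nat.one_le_pow e s hs)
      (Nat.pow_le_pow_right hs e.le_succ))
    push_cast
    rw [Real.log_pow, Real.log_pow]
    push_cast
    ring
  have : 0 ≤ Real.log s := Real.log_natCast_nonneg s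
  calc (s : ℝ) ^ (e + 1) ^ 2 / 2 * Real.log s ^ e
      ≤ (R : ℝ) / 2 * (∑ p ∈ Ico (s ^ e) (s ^ (e + 1)), (p : ℝ)⁻¹) ^ e := by
        rw [hR, Nat.cast_pow]; gcongr
    _ = ∑ q ∈ Q, (R : ℝ) / 2 * ((∏ k, q k : ℕ) : ℝ)⁻¹ := by
        rw [← mul_sum, hQ, sum_pow']
        simp only [Nat.cast_prod, prod_inv_distrib]
    _ ≤ ∑ q ∈ Q, ((R / ∏ k, q k : ℕ) : ℝ) := sum_le_sum fun q hq =>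
        half_div_le_natDiv ((Nat.pow_pos hs).trans_le (hlow hq)) (hhigh hq)
    _ ≤ _ := by exact_mod_cast sum_div_prod_le_card_hyperbolicCross hmem hquot

end HyperbolicCross

section Rate

lemma exists_nat_pow_le_and_le_two_mul_pow {D : ℕ} (hD : D ≠ 0) {X : ℝ} (hX : 1 ≤ X) :
    ∃ s : ℕ, 1 ≤ s ∧ (s : ℝ) ^ D ≤ X ∧ X ≤ (2 * s) ^ D := by
  set Z := X ^ (D : ℝ)⁻¹
  have hZD : Z ^ D = X := Real.rpow_inv_natCast_pow (zero_le_one.trans hX) hD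
  have hZ : 1 ≤ Z := Real.one_le_rpow hX (by positivity)
  have hs : 1 ≤ ⌊Z⌋₊ := (Nat.one_le_floor_iff Z).2 hZ
  have hs' : (1 : ℝ) ≤ ⌊Z⌋₊ := by exact_mod_cast hs
  refine ⟨⌊Z⌋₊, hs, hZD ▸ ?_, hZD ▸ ?_⟩
  · gcongr
    exact Nat.floor_le (by positivity)
  · gcongr
    linarith [Nat.lt_floor_add_one Z]

lemma exists_pow_five_mul_eq_sq {A P : ℝ} (hA : 0 < A) (hP : 0 < P) (hPA : P ≤ A) :
    ∃ X, 0 < X ∧ X ^ 5 * P = A ^ 2 ∧ A ≤ X ^ 5 := by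
  have hX5 : ((A ^ 2 / P) ^ ((5 : ℕ) : ℝ)⁻¹) ^ 5 = A ^ 2 / P :=
    Real.rpow_inv_natCast_pow (by positivity) (by norm_num)
  refine ⟨(A ^ 2 / P) ^ ((5 : ℕ) : ℝ)⁻¹, by positivity, ?_, ?_⟩
  · rw [hX5, div_mul_cancel₀ _ hP.ne']
  · rw [hX5, le_div_iff₀ hP, sq]
    gcongr

lemma log_le_mul_log_of_le_pow {A : ℝ} {s D : ℕ} (hA : 0 < A) (hAD : 2 ^ (10 * D) ≤ A)
    (hAs : A ≤ ((2 * s) ^ D) ^ 5) : Real.log A ≤ 10 * D * Real.log s := by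
  have hpow : A ≤ (s : ℝ) ^ (10 * D) := by
    refine le_of_mul_le_mul_left ?_ hA
    calc A * A ≤ (((2 * s) ^ D) ^ 5) * (((2 * s) ^ D) ^ 5) := by gcongr
      _ = 2 ^ (10 * D) * (s : ℝ) ^ (10 * D) := by ring
      _ ≤ A * (s : ℝ) ^ (10 * D) := by gcongr
  simpa using Real.log_le_log hA hpow

-- `X` balances the two competing terms: up to constants, `X * log A ^ e` frequencies of product at
-- most `X` are available, and their amplitude is admissible as long as `X ^ 5 * log A ^ e ≤ A ^ 2`.
lemma exists_scale_le_card_hyperbolicCross (e : ℕ) :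
    ∃ c₀ : ℝ, 0 < c₀ ∧ ∀ᶠ A : ℝ in Filter.atTop, 1 ≤ Real.log A ∧
      ∃ X : ℝ, 0 < X ∧ X ^ 5 * Real.log A ^ e = A ^ 2 ∧
        ∃ s : ℕ, 1 ≤ s ∧ ((s : ℝ) ^ (e + 1) ^ 2) ^ 5 ≤ A ^ 2 ∧
          c₀ * (X * Real.log A ^ e) * ((s : ℝ) ^ (e + 1) ^ 2) ^ 4 ≤ A ^ 2 ∧
          c₀ * (X * Real.log A ^ e) ≤
            #(hyperbolicCross (e + 1) (s ^ (2 * e + 1)) (s ^ (e + 1) ^ 2)) := by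
  set D := (e + 1) ^ 2
  have hD1 : (1 : ℝ) ≤ D := by exact_mod_cast Nat.one_le_pow _ _ e.succ_pos
  set c₀ : ℝ := (2 * 2 ^ D * (10 * D) ^ e)⁻¹ with hc₀
  have hc₀1 : c₀ ≤ 1 := inv_le_one_of_one_le₀ <| one_le_mul_of_one_le_of_one_le
    (one_le_mul_of_one_le_of_one_le one_le_two (one_le_pow₀ one_le_two))
    (one_le_pow₀ (by linarith))
  refine ⟨c₀, by positivity, ?_⟩
  filter_upwards [Real.tendsto_log_atTop.eventually_ge_atTop 1,
    (Real.isLittleO_pow_log_id_atTop (n := e)).bound one_pos,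
    Filter.eventually_ge_atTop (2 ^ (10 * D))] with A hlog hlogA hAD
  have hA : 0 < A := (by positivity : (0 : ℝ) < 2 ^ (10 * D)).trans_le hAD
  have hP : 1 ≤ Real.log A ^ e := one_le_pow₀ hlog
  rw [one_mul, id, Real.norm_of_nonneg (by positivity), Real.norm_of_nonneg hA.le] at hlogA
  obtain ⟨X, hX, hXA, hAX⟩ := exists_pow_five_mul_eq_sq hA (by positivity) hlogA
  have hX1 : 1 ≤ X := (one_le_pow_iff_of_nonneg hX.le (n := 5) (by norm_num)).1
    ((one_le_pow₀ one_le_two).trans (hAD.trans hAX))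
  obtain ⟨s, hs, hsX, hXs⟩ := exists_nat_pow_le_and_le_two_mul_pow (D := D) (by positivity) hX1
  have hlogs := log_le_mul_log_of_le_pow hA hAD (hAX.trans (by gcongr))
  refine ⟨hlog, X, hX, hXA, s, hs, ?_, ?_, ?_⟩
  · calc _ ≤ X ^ 5 := by gcongr
      _ ≤ A ^ 2 := hXA ▸ le_mul_of_one_le_right (by positivity) hP
  · calc _ ≤ 1 * (X * Real.log A ^ e) * X ^ 4 := by gcongr
      _ = A ^ 2 := by rw [← hXA]; ring
  · calc _ ≤ c₀ * ((2 * s) ^ D * (10 * D * Real.log s) ^ e) := by gcongr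
      _ = (s : ℝ) ^ D / 2 * Real.log s ^ e := by
        rw [hc₀, mul_pow 2 (s : ℝ), mul_pow (10 * (D : ℝ))]
        field_simp
      _ ≤ _ := log_pow_le_card_hyperbolicCross e hs

lemma sq_mul_rpow_half_div {N : ℝ} (hN : 0 ≤ N) (σ V : ℝ) :
    (V * N ^ ((1 : ℝ) / 2) / σ) ^ 2 = N / (σ ^ 2 / V ^ 2) := by
  rw [← Real.sqrt_eq_rpow, div_pow, mul_pow, Real.sq_sqrt hN, mul_comm, div_div_eq_mul_div]

lemma rate_eq_of_balance {σ V N L X : ℝ} {e : ℕ} (hσ : 0 < σ) (hV : 0 ≤ V) (hN : 0 < N)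
    (hL : 0 ≤ L) (hX : 0 ≤ X) (hbalance : X ^ 5 * L ^ e = (V * N ^ ((1 : ℝ) / 2) / σ) ^ 2) :
    (σ ^ 2 * V ^ ((1 : ℝ) / 2) / N) ^ ((4 : ℝ) / 5) * L ^ (4 * (e : ℝ) / 5) =
      σ ^ 2 / N * (X * L ^ e) := by
  have hroot {x : ℝ} (hx : 0 ≤ x) (m : ℕ) : (x ^ ((m : ℝ) / 5)) ^ 5 = x ^ m := by
    rw [← Real.rpow_mul_natCast hx, ← Real.rpow_natCast]
    norm_num
  have hroot4 := hroot (x := σ ^ 2 * √V / N) (by positivity) 4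
  have hrootL := hroot hL (4 * e)
  push_cast at hroot4 hrootL
  simp only [← Real.sqrt_eq_rpow] at hbalance ⊢
  refine (pow_left_inj₀ (by positivity) (by positivity) (by norm_num : (5 : ℕ) ≠ 0)).1 ?_
  calc _ = σ ^ 8 * (√V ^ 2) ^ 2 / N ^ 4 * L ^ (4 * e) := by
        rw [mul_pow, hroot4, hrootL]
        ring
    _ = σ ^ 10 / N ^ 5 * (V ^ 2 * √N ^ 2 / σ ^ 2) * L ^ (4 * e) := by
        rw [Real.sq_sqrt hV, Real.sq_sqrt hN.le]
        field_simp
    _ = σ ^ 10 / N ^ 5 * (X ^ 5 * L ^ e) * L ^ (4 * e) := by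
        rw [hbalance, div_pow, mul_pow]
    _ = _ := by ring

lemma pow_le_div_six {e s m : ℕ} {b N r : ℝ} (hs : 1 ≤ s) (hb : 0 < b) (hr : 0 < r)
    (hN : 1 ≤ N) (hNr : (6 / b) ^ (5 * (e + 1)) / r ^ 2 ≤ N)
    (hsN : ((s : ℝ) ^ (e + 1) ^ 2) ^ 5 ≤ N / r)
    (hm : b * N ^ ((1 : ℝ) / (e + 1 : ℕ)) ≤ m) : s ^ (2 * e + 1) ≤ m / 6 := by
  have : (1 : ℝ) ≤ s := by exact_mod_cast hs
  have hN0 : 0 < N := one_pos.trans_le hN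
  have hroot : (N ^ ((1 : ℝ) / (e + 1 : ℕ))) ^ (e + 1) = N := by
    rw [one_div]; exact Real.rpow_inv_natCast_pow hN0.le e.succ_ne_zero
  have hpow : (6 * (s : ℝ) ^ (2 * (e + 1))) ^ (5 * (e + 1)) ≤ (m : ℝ) ^ (5 * (e + 1)) := by
    calc (6 * (s : ℝ) ^ (2 * (e + 1))) ^ (5 * (e + 1))
        = 6 ^ (5 * (e + 1)) * (((s : ℝ) ^ (e + 1) ^ 2) ^ 5) ^ 2 := by
          rw [mul_pow]; ring
      _ ≤ 6 ^ (5 * (e + 1)) * (N / r) ^ 2 := by gcongr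
      _ = b ^ (5 * (e + 1)) * ((6 / b) ^ (5 * (e + 1)) / r ^ 2) * N ^ 2 := by
          rw [div_pow 6 b]; field_simp
      _ ≤ b ^ (5 * (e + 1)) * N * N ^ 2 := by gcongr
      _ = b ^ (5 * (e + 1)) * N ^ 3 := by ring
      _ ≤ b ^ (5 * (e + 1)) * N ^ 5 := by
          gcongr
          norm_num
      _ = (b * N ^ ((1 : ℝ) / (e + 1 : ℕ))) ^ (5 * (e + 1)) := by
          rw [mul_pow, mul_comm 5 (e + 1), pow_mul (N ^ _), hroot]
      _ ≤ (m : ℝ) ^ (5 * (e + 1)) := by gcongr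
  have hsm : 6 * s ^ (2 * (e + 1)) ≤ m := by
    exact_mod_cast (pow_le_pow_iff_left₀ (by positivity) (by positivity) (by positivity)).1 hpow
  have hexp : s ^ (2 * e + 1) ≤ s ^ (2 * (e + 1)) := Nat.pow_le_pow_right hs (by omega)
  omega

end Rate

lemma exists_mem_Cset_hyperbolicCross_le_risk {d : ℕ} {n : Fin d → ℕ} {M R : ℕ} {σ V κ : ℝ}
    {T : ((∀ k, Fin (n k)) → ℝ) → (∀ k, Fin (n k)) → ℝ} (hd : 1 ≤ d) (hn : ∀ k, 2 ≤ n k)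
    (hσ : 0 < σ) (hV : 0 < V) (hM : ∀ k, M ≤ n k / 6) (hR : 0 < R) (hκ : 0 < κ)
    (hcard : κ ≤ #(hyperbolicCross d M R))
    (hvariation : κ * (R : ℝ) ^ 4 ≤ (∏ k, (n k : ℝ)) / (σ ^ 2 / V ^ 2)) (hT : Measurable T) :
    ∃ θ ∈ Cset d n V,
      ENNReal.ofReal (Real.exp (-1) / (8 * 12 ^ 4) ^ d * (σ ^ 2 / (∏ k, (n k : ℝ)) * κ)) ≤
        ∫⁻ ξ, ENNReal.ofReal ((∏ j, (n j : ℝ))⁻¹ * ∑ i, (T (θ + ξ) i - θ i) ^ 2)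
          ∂gaussPi d n σ := by
  have hN : 0 < ∏ k, (n k : ℝ) := prod_pos fun k _ => by exact_mod_cast zero_lt_two.trans_le (hn k)
  have hne : (hyperbolicCross d M R).Nonempty := card_pos.1 (by exact_mod_cast hκ.trans_le hcard)
  obtain ⟨θ, hθ, hrisk⟩ := exists_mem_Cset_min_le_risk (R := (R : ℝ)) hd hn hσ hV.le hne
    (fun p hp k => Icc_subset_Icc_right (hM k) ((mem_hyperbolicCross.1 hp).1 k))
    (fun p hp => by exact_mod_cast (mem_hyperbolicCross.1 hp).2) hT
  refine ⟨θ, hθ, le_trans (ENNReal.ofReal_le_ofReal ?_) hrisk⟩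
  gcongr
  refine le_min (by gcongr) ?_
  rw [le_div_iff₀ (by positivity), mul_assoc]
  refine (mul_le_mul_of_nonneg_left hvariation (by positivity)).trans_eq ?_
  field_simp

/-- Minimax lower bound over `C(V)` on the equally spaced lattice
design: for any (Borel-measurable) estimator `T`, some `θ* ∈ C(V)` has risk at least
`C_{b,d} (σ² V^{1/2}/n)^{4/5} (log(V n^{1/2}/σ))^{4(d-1)/5}`, provided `n ≥ c(σ²/V²)`. -/
theorem statement2 (d : ℕ) (hd : 1 ≤ d) (b : ℝ) (hb0 : 0 < b) (hb1 : b ≤ 1) :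
    ∃ C : ℝ, 0 < C ∧ ∃ c : ℝ → ℝ, (∀ r, 0 < r → 0 < c r) ∧
      ∀ n : Fin d → ℕ, (∀ k, 2 ≤ n k) →
      (∀ k, b * (∏ j, (n j : ℝ)) ^ ((1 : ℝ) / (d : ℝ)) ≤ (n k : ℝ)) →
      ∀ σ V : ℝ, 0 < σ → 0 < V →
      c (σ ^ 2 / V ^ 2) ≤ (∏ j, (n j : ℝ)) →
      ∀ T : ((∀ k : Fin d, Fin (n k)) → ℝ) → (∀ k : Fin d, Fin (n k)) → ℝ,
        Measurable T →
      ∃ θstar ∈ Cset d n V,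
        ENNReal.ofReal
            (C * (σ ^ 2 * V ^ ((1 : ℝ) / 2) / ∏ j, (n j : ℝ)) ^ ((4 : ℝ) / 5) *
              Real.log (V * (∏ j, (n j : ℝ)) ^ ((1 : ℝ) / 2) / σ) ^
                (4 * ((d : ℝ) - 1) / 5)) ≤
          ∫⁻ ξ, ENNReal.ofReal ((∏ j, (n j : ℝ))⁻¹ *
              ∑ i, (T (θstar + ξ) i - θstar i) ^ 2) ∂(gaussPi d n σ) := by
  obtain ⟨e, rfl⟩ := Nat.exists_eq_add_of_le' hd
  obtain ⟨c₀, hc₀, hscale⟩ := exists_scale_le_card_hyperbolicCross e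
  obtain ⟨A₀, hA₀⟩ := (hscale.and (Filter.eventually_gt_atTop 0)).exists_forall_of_atTop
  have hA₀pos : 0 < A₀ := (hA₀ A₀ le_rfl).2
  refine ⟨Real.exp (-1) / (8 * 12 ^ 4) ^ (e + 1) * c₀, by positivity,
    fun r => A₀ ^ 2 * r + (6 / b) ^ (5 * (e + 1)) / r ^ 2, fun r hr => by positivity, ?_⟩
  intro n hn hnb σ V hσ hV hc T hT
  have hN : 1 ≤ ∏ j, (n j : ℝ) :=
    Finset.one_le_prod fun k _ => by exact_mod_cast one_le_two.trans (hn k)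
  set N := ∏ j, (n j : ℝ)
  have hA := sq_mul_rpow_half_div (zero_le_one.trans hN) σ V
  set A := V * N ^ ((1 : ℝ) / 2) / σ
  have hA₀A : A₀ ≤ A := le_of_sq_le_sq (hA ▸ (le_div_iff₀ (by positivity)).2
    (le_of_add_le_of_nonneg_left hc (by positivity))) (by positivity)
  obtain ⟨hlog, X, hX, hbalance, s, hs, hsA, hvariation, hcard⟩ := (hA₀ A hA₀A).1
  have hfit (k) : s ^ (2 * e + 1) ≤ n k / 6 := pow_le_div_six hs hb0 (by positivity) hN
    (le_of_add_le_of_nonneg_right hc (by positivity)) (hA ▸ hsA) (hnb k)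
  obtain ⟨θ, hθ, hrisk⟩ := exists_mem_Cset_hyperbolicCross_le_risk hd hn hσ hV hfit
    (pow_pos hs _) (by positivity) hcard (by simpa [hA] using hvariation) hT
  refine ⟨θ, hθ, le_of_eq_of_le (congrArg _ ?_) hrisk⟩
  rw [Nat.cast_succ, add_sub_cancel_right, mul_assoc,
    rate_eq_of_balance hσ hV.le (by positivity) (by positivity) hX.le hbalance]
  ring
end
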